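/- Fix integers m, s, d, r such that m ≥ 2, s ≥ 5, d ≥ 2s+2 and s ≤ r ≤ 2d+s−7. Then σ_{s,r}(X_{m,d}) ≠ ∅ if and only if one of the following holds: (i) r = s; (ii) d+2−s ≤ r ≤ d+s−2 and r+s ≡ d (mod 2); (iii) 2d+2−s ≤ r ≤ 2d+s−7. -/

import Mathlib

open scoped LinearAlgebra.Projectivization

noncomputable section

/-- The polynomial ring in `m+1` variables over `K`: homogeneous coordinate ring of `ℙ^m`. -/
abbrev PR (K : Type) [Field K] (m : ℕ) : Type := MvPolynomial (Fin (m+1)) K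

/-- The space of degree-`d` forms in `m+1` variables. -/
abbrev Hd (K : Type) [Field K] (m d : ℕ) : Submodule K (PR K m) :=
  MvPolynomial.homogeneousSubmodule (Fin (m+1)) K d

/-- Projective `m`-space over `K`. -/
abbrev Pm (K : Type) [Field K] (m : ℕ) := ℙ K (Fin (m+1) → K)

/-- The target projective space `ℙ^n`, `n = C(m+d,m) - 1`, of the degree-`d` Veronese
embedding, realized as the projectivization of the dual of the space of degree-`d` forms
(the space of degree-`d` symmetric tensors). -/
abbrev PN (K : Type) [Field K] (m d : ℕ) := ℙ K (Module.Dual K (Hd K m d))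

variable {K : Type} [Field K] {m : ℕ}

/-- Hilbert function of `R/I` in degree `t`. -/
def hilbQ (I : Ideal (PR K m)) (t : ℕ) : ℕ :=
  Module.finrank K ((Hd K m t).map (Ideal.Quotient.mkₐ K I).toLinearMap)

/-- The degree (length) of the projective scheme defined by `I`: the eventual value of the
Hilbert function of `R/I`. -/
def idealDeg (I : Ideal (PR K m)) : ℕ := Filter.limsup (fun t => hilbQ I t) Filter.atTop

/-- `h^1(𝓘_Z(d))` for the zero-dimensional scheme `Z` with (saturated) ideal `I`:
it equals `deg Z - dim (R/I)_d`. -/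
def h1I (I : Ideal (PR K m)) (d : ℕ) : ℕ := idealDeg I - hilbQ I d

/-- An ideal is homogeneous. -/
def IsHomogI (I : Ideal (PR K m)) : Prop :=
  ∀ f ∈ I, ∀ n : ℕ, MvPolynomial.homogeneousComponent n f ∈ I

/-- An ideal is saturated with respect to the irrelevant maximal ideal. -/
def IsSatI (I : Ideal (PR K m)) : Prop :=
  ∀ f : PR K m, (∀ i, MvPolynomial.X i * f ∈ I) → f ∈ I

/-- A closed subscheme of `ℙ^m`, given by its saturated homogeneous ideal. -/
structure PSub (K : Type) [Field K] (m : ℕ) where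
  I : Ideal (PR K m)
  homog : IsHomogI I
  sat : IsSatI I

/-- A (closed sub)scheme is zero-dimensional iff the Hilbert function of `R/I` is bounded. -/
def IsZeroDimI (I : Ideal (PR K m)) : Prop := ∃ C, ∀ t, hilbQ I t ≤ C

/-- A polynomial vanishes at a projective point (every homogeneous component vanishes
at a representative). -/
def vanishesAt (f : PR K m) (a : Pm K m) : Prop :=
  ∀ n : ℕ, MvPolynomial.eval a.rep (MvPolynomial.homogeneousComponent n f) = 0

/-- Zero locus of an ideal in `ℙ^m`. -/
def pzeroLocus (I : Ideal (PR K m)) : Set (Pm K m) := {a | ∀ f ∈ I, vanishesAt f a}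

/-- The (saturated) homogeneous ideal of a set of points of `ℙ^m`. -/
def idealOfSet (S : Set (Pm K m)) : Ideal (PR K m) :=
  Ideal.span {f : PR K m | (∃ n, f.IsHomogeneous n) ∧ ∀ a ∈ S, MvPolynomial.eval a.rep f = 0}

/-- Saturation of a homogeneous ideal: the smallest saturated homogeneous ideal containing it. -/
def satIdeal (J : Ideal (PR K m)) : Ideal (PR K m) := sInf {J' | J ≤ J' ∧ IsHomogI J' ∧ IsSatI J'}

/-- The scheme defined by the (saturated) ideal `I` is reduced. -/
def IsReducedI (I : Ideal (PR K m)) : Prop := I = idealOfSet (pzeroLocus I)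

/-- Connected component of a zero-dimensional scheme at a point `a`: the largest subscheme
supported at `a`, i.e. the `a`-primary component. -/
def componentAt (I : Ideal (PR K m)) (a : Pm K m) : Ideal (PR K m) :=
  sInf {J | I ≤ J ∧ IsHomogI J ∧ IsSatI J ∧ pzeroLocus J ⊆ {a}}

/-- Residual scheme of `Z` with respect to the hypersurface `f = 0`: the colon ideal `(I_Z : f)`. -/
def resIdeal (I : Ideal (PR K m)) (f : PR K m) : Ideal (PR K m) :=
  Submodule.colon I (Ideal.span {f})

/-- Degree of the scheme-theoretic intersection of the subschemes defined by `I` and `J`. -/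
def interDeg (I J : Ideal (PR K m)) : ℕ := idealDeg (I ⊔ J)

/-- The degree-`d` Veronese image of a vector `v`: the evaluation-at-`v` functional on
degree-`d` forms. -/
def nu (d : ℕ) (v : Fin (m+1) → K) : Module.Dual K (Hd K m d) :=
  (MvPolynomial.aeval v).toLinearMap ∘ₗ (Hd K m d).subtype

/-- The linear span of the Veronese image `ν_d(S)` of a set `S` of points of `ℙ^m`. -/
def dualSpan (d : ℕ) (S : Set (Pm K m)) : Submodule K (Module.Dual K (Hd K m d)) :=
  Submodule.span K ((fun a => nu d a.rep) '' S)

/-- The linear span `⟨ν_d(Z)⟩` of the Veronese image of the subscheme with ideal `I`: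
the annihilator of the degree-`d` part of `I`. -/
def schemeSpanSub (I : Ideal (PR K m)) (d : ℕ) : Submodule K (Module.Dual K (Hd K m d)) where
  carrier := {φ | ∀ f : Hd K m d, (f : PR K m) ∈ I → φ f = 0}
  add_mem' := by
    intro a b ha hb f hf
    simp [LinearMap.add_apply, ha f hf, hb f hf]
  zero_mem' := by intro f hf; simp
  smul_mem' := by
    intro c a ha f hf
    simp [LinearMap.smul_apply, ha f hf]

/-- `P ∈ ⟨ν_d(Z)⟩`, for `Z` the subscheme with ideal `I`. -/
def inSpanI (I : Ideal (PR K m)) (d : ℕ) (P : PN K m d) : Prop := P.rep ∈ schemeSpanSub I d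

/-- `P ∈ ⟨ν_d(S)⟩` for a set `S` of points of `ℙ^m`. -/
def inSpanSet (d : ℕ) (S : Set (Pm K m)) (P : PN K m d) : Prop := P.rep ∈ dualSpan d S

/-- `L` is a linear subspace of `ℙ^m`. -/
def IsLinearSub (L : Set (Pm K m)) : Prop :=
  ∃ W : Submodule K (Fin (m+1) → K), L = {a | a.submodule ≤ W}

/-- `L` is a line of `ℙ^m`. -/
def IsLine (L : Set (Pm K m)) : Prop :=
  ∃ W : Submodule K (Fin (m+1) → K), Module.finrank K W = 2 ∧ L = {a | a.submodule ≤ W}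

/-- `L` is a plane of `ℙ^m`. -/
def IsPlane (L : Set (Pm K m)) : Prop :=
  ∃ W : Submodule K (Fin (m+1) → K), Module.finrank K W = 3 ∧ L = {a | a.submodule ≤ W}

/-- `J` is the (saturated homogeneous) ideal of a conic of `ℙ^m`: a degree-2 curve contained
in a plane (possibly reducible). -/
def IsConic (J : Ideal (PR K m)) : Prop :=
  ∃ (W : Submodule K (Fin (m+1) → K)) (q : PR K m),
    Module.finrank K W = 3 ∧ q.IsHomogeneous 2 ∧
    q ∉ idealOfSet {a : Pm K m | a.submodule ≤ W} ∧
    J = satIdeal (idealOfSet {a : Pm K m | a.submodule ≤ W} ⊔ Ideal.span {q})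

/-- The algebra of polynomial functions on a `K`-vector space. -/
def polyFunctions (K V : Type) [Field K] [AddCommGroup V] [Module K V] : Subalgebra K (V → K) :=
  Algebra.adjoin K {g : V → K | ∃ φ : V →ₗ[K] K, g = ⇑φ}

/-- Zariski closure of a subset of a projective space. -/
def zClosure {V : Type} [AddCommGroup V] [Module K V] (T : Set (ℙ K V)) : Set (ℙ K V) :=
  {P | ∀ F ∈ polyFunctions K V, (∀ Q ∈ T, ∀ c : K, F (c • Q.rep) = 0) →
    ∀ c : K, F (c • P.rep) = 0}

/-- The Veronese variety `X_{m,d} = ν_d(ℙ^m)` as a subset of `PN K m d`. -/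
def XSet (K : Type) [Field K] (m d : ℕ) : Set (PN K m d) :=
  {Q | ∃ a : Pm K m, Q.submodule = Submodule.span K {nu d a.rep}}

/-- The image `ν_d(S)` of a set of points of `ℙ^m`, as a subset of `PN K m d`. -/
def nuSet (d : ℕ) (S : Set (Pm K m)) : Set (PN K m d) :=
  {Q | ∃ a ∈ S, Q.submodule = Submodule.span K {nu d a.rep}}

/-- The rank of a point `P` of `PN` with respect to a subset `Y ⊆ PN`. -/
def rankWrt {m d : ℕ} (Y : Set (PN K m d)) (P : PN K m d) : ℕ :=
  sInf {r | ∃ S : Finset (PN K m d), ↑S ⊆ Y ∧ S.card = r ∧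
    P.rep ∈ Submodule.span K (Projectivization.rep '' (S : Set (PN K m d)))}

/-- The `s`-th secant variety of `Y ⊆ PN`: the Zariski closure of the union of the spans
of `s` points of `Y`. -/
def secantWrt {m d : ℕ} (Y : Set (PN K m d)) (s : ℕ) : Set (PN K m d) :=
  zClosure {Q | ∃ S : Finset (PN K m d), ↑S ⊆ Y ∧ S.card ≤ s ∧
    Q.rep ∈ Submodule.span K (Projectivization.rep '' (S : Set (PN K m d)))}

/-- The border rank of `P` with respect to `Y ⊆ PN`. -/
def brankWrt {m d : ℕ} (Y : Set (PN K m d)) (P : PN K m d) : ℕ :=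
  sInf {s | 0 < s ∧ P ∈ secantWrt Y s}

/-- Symmetric rank. -/
def srank {m : ℕ} (d : ℕ) (P : PN K m d) : ℕ := rankWrt (XSet K m d) P

/-- Border rank. -/
def brank {m : ℕ} (d : ℕ) (P : PN K m d) : ℕ := brankWrt (XSet K m d) P

/-- Cactus rank: minimal degree of a zero-dimensional closed subscheme `E ⊂ ℙ^m` with
`P ∈ ⟨ν_d(E)⟩`. -/
def crank {m : ℕ} (d : ℕ) (P : PN K m d) : ℕ :=
  sInf {c | ∃ Z : PSub K m, IsZeroDimI Z.I ∧ idealDeg Z.I = c ∧ inSpanI Z.I d P}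

/-- `σ_{s,r}(X_{m,d})`. -/
def sigmaSet (K : Type) [Field K] (m d s r : ℕ) : Set (PN K m d) :=
  {P | brank d P = s ∧ srank d P = r}

/-- A property `Φ` holds for a general `k`-tuple of points of the linear subspace of `ℙ^m`
determined by `W`. -/
def GenerallyOn (W : Submodule K (Fin (m+1) → K)) (k : ℕ)
    (Φ : (Fin k → Pm K m) → Prop) : Prop :=
  ∃ w : Fin 3 → W, Submodule.span K (Set.range fun j => (w j : Fin (m+1) → K)) = W ∧
    ∃ F : MvPolynomial (Fin k × Fin 3) K, F ≠ 0 ∧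
      ∀ c : Fin k → Fin 3 → K,
        MvPolynomial.eval (fun p => c p.1 p.2) F ≠ 0 →
        ∀ e : Fin k → Pm K m,
          (∀ i, (e i).submodule = Submodule.span K {∑ j, c i j • (w j : Fin (m+1) → K)}) → Φ e

end

noncomputable section
open scoped LinearAlgebra.Projectivization
open MvPolynomial
namespace GG
variable {K : Type} [Field K] {m : ℕ}

def EV (w : Pm K m →₀ K) : PR K m →ₗ[K] K :=
  Finsupp.linearCombination K
    (fun p : Pm K m => (aeval p.rep : PR K m →ₐ[K] K).toLinearMap) w

lemma EV_apply (w : Pm K m →₀ K) (f : PR K m) :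
    EV w f = ∑ p ∈ w.support, w p * eval p.rep f := by
  simp only [EV, Finsupp.linearCombination_apply, Finsupp.sum]
  rw [LinearMap.sum_apply]
  simp

lemma EV_apply_of_subset (w : Pm K m →₀ K) (f : PR K m) (T : Finset (Pm K m))
    (h : w.support ⊆ T) : EV w f = ∑ p ∈ T, w p * eval p.rep f := by
  rw [EV_apply]
  apply Finset.sum_subset h
  intro p _ hp
  rw [Finsupp.notMem_support_iff.1 hp, zero_mul]

lemma EV_add (w w' : Pm K m →₀ K) : EV (w + w') = EV w + EV w' := by
  simp [EV]
lemma EV_sub (w w' : Pm K m →₀ K) : EV (w - w') = EV w - EV w' := by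
  simp [EV]
lemma EV_smul (c : K) (w : Pm K m →₀ K) : EV (c • w) = c • EV w := by
  simp [EV]
lemma EV_zero : EV (0 : Pm K m →₀ K) = 0 := by
  simp [EV]
lemma EV_single (p : Pm K m) (c : K) (f : PR K m) :
    EV (Finsupp.single p c) f = c * eval p.rep f := by
  simp [EV, Finsupp.linearCombination_single]

def mulW (w : Pm K m →₀ K) (g : PR K m) : Pm K m →₀ K :=
  Finsupp.onFinset w.support (fun p => w p * eval p.rep g) (by
    intro p hp
    rw [Finsupp.mem_support_iff]
    intro h; apply hp; rw [h, zero_mul])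

lemma mem_mulW {w : Pm K m →₀ K} {g : PR K m} {p : Pm K m} :
    p ∈ (mulW w g).support ↔ p ∈ w.support ∧ eval p.rep g ≠ 0 := by
  simp [mulW]

lemma mulW_sub (w : Pm K m →₀ K) (g : PR K m) : (mulW w g).support ⊆ w.support :=
  fun _ hp => (mem_mulW.1 hp).1

lemma EV_mulW (w : Pm K m →₀ K) (g f : PR K m) : EV (mulW w g) f = EV w (g * f) := by
  rw [EV_apply_of_subset _ _ _ (mulW_sub w g), EV_apply]
  refine Finset.sum_congr rfl fun p _ => ?_
  simp [mulW]; ring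

def Rel (w : Pm K m →₀ K) (j : ℕ) : Prop := ∀ f : PR K m, f.IsHomogeneous j → EV w f = 0

lemma Rel.mul {w : Pm K m →₀ K} {j k n : ℕ} (h : Rel w n) {g : PR K m}
    (hg : g.IsHomogeneous k) (hn : k + j = n) : Rel (mulW w g) j := by
  intro f hf
  rw [EV_mulW]
  exact h _ (hn ▸ hg.mul hf)

def lin (l : Module.Dual K (Fin (m+1) → K)) : PR K m :=
  ∑ i, C (l (Pi.single i 1)) * X i

lemma eval_lin (l : Module.Dual K (Fin (m+1) → K)) (v : Fin (m+1) → K) :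
    eval v (lin l) = l v := by
  conv_rhs => rw [LinearMap.pi_apply_eq_sum_univ l v]
  simp only [lin, map_sum, map_mul, eval_C, eval_X, smul_eq_mul]
  refine Finset.sum_congr rfl fun i _ => ?_
  rw [mul_comm]; congr 2; ext j; simp [Pi.single_apply, eq_comm]

lemma lin_hom (l : Module.Dual K (Fin (m+1) → K)) : (lin l).IsHomogeneous 1 := by
  apply IsHomogeneous.sum
  intro i _
  simpa using (isHomogeneous_C _ (l (Pi.single i 1))).mul (isHomogeneous_X K i)

lemma exists_sep (W : Submodule K (Fin (m+1) → K)) (v : Fin (m+1) → K) (h : v ∉ W) :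
    ∃ f : PR K m, f.IsHomogeneous 1 ∧ eval v f ≠ 0 ∧ ∀ u ∈ W, eval u f = 0 := by
  obtain ⟨l, h1, h2⟩ := Submodule.exists_dual_map_eq_bot_of_notMem h inferInstance
  refine ⟨lin l, lin_hom l, by rwa [eval_lin], fun u hu => ?_⟩
  rw [eval_lin]
  have : l u ∈ W.map l := Submodule.mem_map_of_mem hu
  rw [h2] at this
  simpa using this

lemma rep_mem_span {p q : Pm K m} (h : p.rep ∈ Submodule.span K {q.rep}) : p = q := by
  obtain ⟨c, hc⟩ := Submodule.mem_span_singleton.1 h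
  rw [← p.mk_rep, ← q.mk_rep, Projectivization.mk_eq_mk_iff']
  exact ⟨c, hc⟩

def kap (p q : Pm K m) : Submodule K (Fin (m+1) → K) := Submodule.span K {p.rep, q.rep}

lemma left_kap (p q : Pm K m) : p.rep ∈ kap p q := Submodule.subset_span (by simp)
lemma right_kap (p q : Pm K m) : q.rep ∈ kap p q := Submodule.subset_span (by simp)
lemma finrank_kap (p q : Pm K m) : Module.finrank K (kap p q) ≤ 2 := by
  classical
  have := finrank_span_finset_le_card (R := K) ({p.rep, q.rep} : Finset (Fin (m+1) → K))
  simp only [Finset.coe_insert, Finset.coe_singleton] at this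
  exact this.trans Finset.card_le_two

lemma kap_le {p q : Pm K m} {W : Submodule K (Fin (m+1) → K)} (hp : p.rep ∈ W) (hq : q.rep ∈ W) :
    kap p q ≤ W := by
  rw [kap, Submodule.span_le]
  rintro x (rfl | rfl) <;> assumption

lemma kap_exch {p q1 q2 : Pm K m} (h1 : p ≠ q1) (h : p.rep ∈ kap q1 q2) :
    q2.rep ∈ kap p q1 := by
  obtain ⟨a, b, hab⟩ := Submodule.mem_span_pair.1 h
  by_cases hb : b = 0
  · exfalso; apply h1; apply rep_mem_span
    rw [Submodule.mem_span_singleton]; exact ⟨a, by rw [← hab, hb]; simp⟩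
  · apply Submodule.mem_span_pair.2
    refine ⟨b⁻¹, -(b⁻¹ * a), ?_⟩
    rw [← hab, smul_add, smul_smul, smul_smul, inv_mul_cancel₀ hb]; module

lemma kap_comm (p q : Pm K m) : kap p q = kap q p := by
  rw [kap, kap, Set.pair_comm]

lemma kap_sep {p q1 q2 : Pm K m} (h1 : p ≠ q1) (h2 : p ≠ q2) (h : kap p q1 ≠ kap p q2) :
    p.rep ∉ kap q1 q2 := by
  intro hp
  apply h
  apply le_antisymm
  · apply kap_le (left_kap _ _)
    apply kap_exch h2; rwa [kap_comm]
  · exact kap_le (left_kap _ _) (kap_exch h1 hp)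

open Classical in
lemma sep (p : Pm K m) (j : ℕ) : ∀ T : Finset (Pm K m), p ∉ T → T.card ≤ 2 * j →
    (∀ W, (T.filter (fun q => kap p q = W)).card ≤ j) →
    ∃ f : PR K m, f.IsHomogeneous j ∧ eval p.rep f ≠ 0 ∧ ∀ q ∈ T, eval q.rep f = 0 := by
  induction j with
  | zero =>
    intro T _ hT _
    have : T = ∅ := by simpa using hT
    subst this
    exact ⟨1, isHomogeneous_one _ _, by simp, by simp⟩
  | succ j ih =>
    intro T hp hT hf
    -- it suffices to remove a subset
    have key : ∀ (U : Finset (Pm K m)) (W : Submodule K (Fin (m+1) → K)), U ⊆ T → p.rep ∉ W →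
        (∀ q ∈ U, q.rep ∈ W) → (T \ U).card ≤ 2 * j →
        (∀ W, ((T \ U).filter (fun q => kap p q = W)).card ≤ j) →
        ∃ f : PR K m, f.IsHomogeneous (j+1) ∧ eval p.rep f ≠ 0 ∧ ∀ q ∈ T, eval q.rep f = 0 := by
      intro U W _ hpW hUW h1 h2
      obtain ⟨f, hf1, hf2, hf3⟩ := ih (T \ U) (fun h => hp (Finset.mem_sdiff.1 h).1) h1 h2
      obtain ⟨g, hg1, hg2, hg3⟩ := exists_sep W _ hpW
      refine ⟨f * g, hf1.mul hg1, by simp [hf2, hg2], fun q hq => ?_⟩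
      by_cases hqU : q ∈ U
      · simp [hg3 _ (hUW q hqU)]
      · simp [hf3 q (by simp [hq, hqU])]
    rcases T.eq_empty_or_nonempty with rfl | hne
    · exact key ∅ ⊥ (by simp) (by simpa using p.rep_nonzero) (by simp) (by simp) (by simp)
    obtain ⟨q1, hq1, hmax1⟩ := Finset.exists_max_image T
      (fun q => (T.filter (fun q' => kap p q' = kap p q)).card) hne
    have hpq1 : p ≠ q1 := fun h => hp (h ▸ hq1)
    by_cases hall : ∀ q ∈ T, kap p q = kap p q1
    · have hc : T.card ≤ j + 1 := by
        have := hf (kap p q1)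
        rwa [Finset.filter_true_of_mem hall] at this
      have hc2 : (T \ {q1}).card ≤ j := by
        rw [Finset.card_sdiff_of_subset (by simpa using hq1)]; simp; omega
      refine key {q1} (Submodule.span K {q1.rep}) (by simpa using hq1)
        (fun h => hpq1 (rep_mem_span h)) ?_ (by omega) ?_
      · intro q hq; rw [Finset.mem_singleton.1 hq]; exact Submodule.mem_span_singleton_self _
      · intro W; exact (Finset.card_filter_le _ _).trans hc2
    · push Not at hall
      obtain ⟨q0, hq0, hq0'⟩ := hall
      obtain ⟨q2, hq2, hmax2⟩ := Finset.exists_max_image (T.filter (fun q => kap p q ≠ kap p q1))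
        (fun q => (T.filter (fun q' => kap p q' = kap p q)).card) ⟨q0, by simp [hq0, hq0']⟩
      simp only [Finset.mem_filter] at hq2 hmax2
      obtain ⟨hq2, hne2⟩ := hq2
      have hpq2 : p ≠ q2 := fun h => hp (h ▸ hq2)
      have hq12 : q1 ≠ q2 := fun h => hne2 (by rw [h])
      have hsub : ({q1, q2} : Finset (Pm K m)) ⊆ T := by
        intro q hq; simp at hq; rcases hq with rfl | rfl <;> assumption
      refine key {q1, q2} (kap q1 q2) hsub (kap_sep hpq1 hpq2 (Ne.symm hne2)) ?_ ?_ ?_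
      · intro q hq; simp at hq; rcases hq with rfl | rfl
        · exact left_kap _ _
        · exact right_kap _ _
      · rw [Finset.card_sdiff_of_subset hsub, Finset.card_pair hq12]; omega
      · intro W
        have hsubF : (T \ {q1, q2}).filter (fun q => kap p q = W) ⊆
            T.filter (fun q => kap p q = W) :=
          Finset.filter_subset_filter _ Finset.sdiff_subset
        by_contra hcon
        push Not at hcon
        have heq : (T \ {q1, q2}).filter (fun q => kap p q = W) =
            T.filter (fun q => kap p q = W) :=
          Finset.eq_of_subset_of_card_le hsubF (by have := hf W; omega)
        have hW1 : kap p q1 ≠ W := by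
          intro h
          have : q1 ∈ T.filter (fun q => kap p q = W) := by simp [hq1, h]
          rw [← heq] at this; simp at this
        have hW2 : kap p q2 ≠ W := by
          intro h
          have : q2 ∈ T.filter (fun q => kap p q = W) := by simp [hq2, h]
          rw [← heq] at this; simp at this
        have hcard : (T.filter (fun q => kap p q = W)).card = j + 1 := by
          have := hf W; rw [heq] at hcon; omega
        obtain ⟨q3, hq3⟩ : (T.filter (fun q => kap p q = W)).Nonempty := by
          rw [← Finset.card_pos]; omega
        simp only [Finset.mem_filter] at hq3
        obtain ⟨hq3, rfl⟩ := hq3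
        have h1 := hmax1 q3 hq3
        have h2 := hmax2 q3 ⟨hq3, Ne.symm hW1⟩
        have d12 : Disjoint (T.filter (fun q => kap p q = kap p q1))
            (T.filter (fun q => kap p q = kap p q2)) := by
          rw [Finset.disjoint_filter]; intro q _ h h'; exact hne2 (h' ▸ h)
        have d3 : Disjoint (T.filter (fun q => kap p q = kap p q1) ∪
            T.filter (fun q => kap p q = kap p q2)) (T.filter (fun q => kap p q = kap p q3)) := by
          rw [Finset.disjoint_union_left, Finset.disjoint_filter, Finset.disjoint_filter]
          exact ⟨fun q _ h h' => hW1 (h ▸ h'), fun q _ h h' => hW2 (h ▸ h')⟩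
        have : ((T.filter (fun q => kap p q = kap p q1) ∪
            T.filter (fun q => kap p q = kap p q2)) ∪
            (T.filter (fun q => kap p q = kap p q3))).card ≤ T.card := by
          apply Finset.card_le_card
          intro q; simp only [Finset.mem_union, Finset.mem_filter]; tauto
        rw [Finset.card_union_of_disjoint d3, Finset.card_union_of_disjoint d12] at this
        omega

open Classical in
lemma N1a {w : Pm K m →₀ K} {j : ℕ} (h : Rel w j) {p : Pm K m} (hp : p ∈ w.support)
    (hc : w.support.card ≤ 2 * j + 1) :
    ∃ W : Submodule K (Fin (m+1) → K), Module.finrank K W ≤ 2 ∧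
      j + 2 ≤ (w.support.filter (fun q => q.rep ∈ W)).card := by
  have hT : (w.support.erase p).card ≤ 2 * j := by
    rw [Finset.card_erase_of_mem hp]; omega
  by_cases hf : ∀ W, ((w.support.erase p).filter (fun q => kap p q = W)).card ≤ j
  · exfalso
    obtain ⟨f, hf1, hf2, hf3⟩ := sep p j _ (Finset.notMem_erase p _) hT hf
    have := h f hf1
    rw [EV_apply, Finset.sum_eq_single_of_mem p hp] at this
    · exact (mul_ne_zero (Finsupp.mem_support_iff.1 hp) hf2) this
    · intro q hq hqp
      rw [hf3 q (by simp [hqp] at hq ⊢; exact hq), mul_zero]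
  · push Not at hf
    obtain ⟨W, hW⟩ := hf
    obtain ⟨q, hq⟩ : ((w.support.erase p).filter (fun q => kap p q = W)).Nonempty := by
      rw [← Finset.card_pos]; omega
    simp only [Finset.mem_filter] at hq
    obtain ⟨hq, rfl⟩ := hq
    refine ⟨kap p q, finrank_kap _ _, ?_⟩
    have : insert p ((w.support.erase p).filter (fun q' => kap p q' = kap p q)) ⊆
        w.support.filter (fun q' => q'.rep ∈ kap p q) := by
      intro q' hq'
      rw [Finset.mem_insert] at hq'
      rcases hq' with rfl | hq'
      · exact Finset.mem_filter.2 ⟨hp, left_kap _ _⟩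
      · rw [Finset.mem_filter, Finset.mem_erase] at hq'
        refine Finset.mem_filter.2 ⟨hq'.1.2, ?_⟩
        rw [← hq'.2]; exact right_kap _ _
    have := Finset.card_le_card this
    rw [Finset.card_insert_of_notMem (by simp)] at this
    omega

lemma N1_card {w : Pm K m →₀ K} {j : ℕ} (h : Rel w j) {p : Pm K m} (hp : p ∈ w.support) :
    j + 2 ≤ w.support.card := by
  classical
  by_cases hc : w.support.card ≤ 2 * j + 1
  · obtain ⟨W, _, hW⟩ := N1a h hp hc
    exact hW.trans (Finset.card_filter_le _ _)
  · omega

lemma N1_line {w : Pm K m →₀ K} {j : ℕ} (h : Rel w j) 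
    (hc : w.support.card ≤ 2 * j + 1) :
    ∃ W : Submodule K (Fin (m+1) → K), Module.finrank K W ≤ 2 ∧
      ∀ q ∈ w.support, q.rep ∈ W := by
  classical
  rcases w.support.eq_empty_or_nonempty with he | ⟨p, hp⟩
  · exact ⟨⊥, by simp, by simp [he]⟩
  obtain ⟨W, hW, hc2⟩ := N1a h hp hc
  refine ⟨W, hW, ?_⟩
  by_contra hcon
  push Not at hcon
  obtain ⟨q, hq, hqW⟩ := hcon
  obtain ⟨g, hg1, hg2, hg3⟩ := exists_sep W _ hqW
  rcases j with _ | j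
  · have := N1_card h hp; omega
  have hR : Rel (mulW w g) j := h.mul hg1 (by omega)
  have := N1_card hR (mem_mulW.2 ⟨hq, hg2⟩)
  have hd : Disjoint (w.support.filter (fun q => q.rep ∈ W)) (mulW w g).support := by
    rw [Finset.disjoint_left]
    intro q' h1 h2
    exact (mem_mulW.1 h2).2 (hg3 _ (Finset.mem_filter.1 h1).2)
  have h3 := Finset.card_le_card (Finset.union_subset (Finset.filter_subset _ _) (mulW_sub w g)
    : w.support.filter (fun q => q.rep ∈ W) ∪ _ ⊆ _)
  rw [Finset.card_union_of_disjoint hd] at h3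
  omega

def Ind (T : Finset (Pm K m)) (j : ℕ) : Prop := ∀ w : Pm K m →₀ K, w.support ⊆ T → Rel w j → w = 0

lemma Ind_small {T : Finset (Pm K m)} {j : ℕ} (h : T.card ≤ j + 1) : Ind T j := by
  intro w hw hR
  by_contra hne
  obtain ⟨p, hp⟩ := Finsupp.support_nonempty_iff.2 hne
  have := N1_card hR hp
  have := Finset.card_le_card hw
  omega

open Classical in
lemma Ind_gen {T : Finset (Pm K m)} {j : ℕ} (h : T.card ≤ 2 * j + 1)
    (h2 : ∀ W : Submodule K (Fin (m+1) → K), Module.finrank K W ≤ 2 →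
      (T.filter (fun q => q.rep ∈ W)).card ≤ j + 1) : Ind T j := by
  intro w hw hR
  by_contra hne
  obtain ⟨p, hp⟩ := Finsupp.support_nonempty_iff.2 hne
  have hc := Finset.card_le_card hw
  obtain ⟨W, hW, hWc⟩ := N1a hR hp (by omega)
  have := h2 W hW
  have := Finset.card_le_card (Finset.filter_subset_filter (fun q => q.rep ∈ W) hw)
  omega

open Classical in
lemma Ind_union {T1 T2 : Finset (Pm K m)} {j : ℕ} {W : Submodule K (Fin (m+1) → K)}
    (h1 : ∀ q ∈ T1, q.rep ∈ W) (hc : T1.card ≤ j + 2) (h2' : ∀ q ∈ T2, q.rep ∉ W)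
    (h2 : Ind T2 j) : Ind (T1 ∪ T2) (j+1) := by
  intro w hw hR
  have hsub : w.support ⊆ T1 := by
    intro q hq
    rcases Finset.mem_union.1 (hw hq) with h | h
    · exact h
    exfalso
    obtain ⟨g, hg1, hg2, hg3⟩ := exists_sep W _ (h2' q h)
    have := h2 (mulW w g) (by
        intro x hx
        rcases Finset.mem_union.1 (hw (mulW_sub _ _ hx)) with h | h
        · exact absurd (hg3 _ (h1 x h)) (mem_mulW.1 hx).2
        · exact h) (hR.mul hg1 (by omega))
    have h3 := mem_mulW.2 ⟨hq, hg2⟩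
    rw [this] at h3; simp at h3
  exact Ind_small hc w hsub hR

end GG

end

noncomputable section
open scoped LinearAlgebra.Projectivization
open MvPolynomial
namespace GG
variable {K : Type} [Field K] {m : ℕ}

lemma eval_smul_hom {f : PR K m} {d : ℕ} (hf : f.IsHomogeneous d) (a : K) (v : Fin (m+1) → K) :
    eval (a • v) f = a ^ d * eval v f := by
  rw [eval_eq, eval_eq, Finset.mul_sum]
  refine Finset.sum_congr rfl fun e he => ?_
  have : Finsupp.degree e = d := by
    by_contra h; exact (mem_support_iff.1 he) (hf.coeff_eq_zero h)
  simp only [Pi.smul_apply, smul_eq_mul, mul_pow, Finset.prod_mul_distrib]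
  rw [← this, Finsupp.degree_apply, Finset.prod_pow_eq_pow_sum]; ring

def RkLE (φ : PR K m →ₗ[K] K) (d n : ℕ) : Prop :=
  ∃ w : Pm K m →₀ K, w.support.card ≤ n ∧ ∀ f : PR K m, f.IsHomogeneous d → φ f = EV w f

lemma RkLE.mono {φ : PR K m →ₗ[K] K} {d n n' : ℕ} (h : RkLE φ d n) (hn : n ≤ n') : RkLE φ d n' := by
  obtain ⟨w, h1, h2⟩ := h; exact ⟨w, h1.trans hn, h2⟩

lemma RkLE.congr {φ ψ : PR K m →ₗ[K] K} {d n : ℕ} (h : RkLE φ d n)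
    (he : ∀ f : PR K m, f.IsHomogeneous d → ψ f = φ f) : RkLE ψ d n := by
  obtain ⟨w, h1, h2⟩ := h; exact ⟨w, h1, fun f hf => (he f hf).trans (h2 f hf)⟩

lemma RkLE.add {φ ψ : PR K m →ₗ[K] K} {d n n' : ℕ} (h : RkLE φ d n) (h' : RkLE ψ d n') :
    RkLE (φ + ψ) d (n + n') := by
  classical
  obtain ⟨w, h1, h2⟩ := h
  obtain ⟨w', h1', h2'⟩ := h'
  refine ⟨w + w', ?_, fun f hf => ?_⟩
  · refine (Finset.card_le_card Finsupp.support_add).trans ((Finset.card_union_le _ _).trans ?_)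
    omega
  · rw [EV_add, LinearMap.add_apply, LinearMap.add_apply, h2 f hf, h2' f hf]

lemma RkLE.smul {φ : PR K m →ₗ[K] K} {d n : ℕ} (h : RkLE φ d n) (c : K) :
    RkLE (c • φ) d n := by
  obtain ⟨w, h1, h2⟩ := h
  refine ⟨c • w, (Finset.card_le_card Finsupp.support_smul).trans h1, fun f hf => ?_⟩
  rw [EV_smul, LinearMap.smul_apply, LinearMap.smul_apply, h2 f hf]

lemma RkLE_zero (d : ℕ) : RkLE (0 : PR K m →ₗ[K] K) d 0 :=
  ⟨0, by simp, fun f _ => by rw [EV_zero]⟩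

/-- Evaluation functional. -/
def ev (v : Fin (m+1) → K) : PR K m →ₗ[K] K := (aeval v : PR K m →ₐ[K] K).toLinearMap

@[simp] lemma ev_apply (v : Fin (m+1) → K) (f : PR K m) : ev v f = eval v f := by
  simp [ev]

lemma RkLE_ev (v : Fin (m+1) → K) {d : ℕ} (hd : 1 ≤ d) : RkLE (ev v) d 1 := by
  by_cases hv : v = 0
  · refine ((RkLE_zero d).mono (by omega)).congr fun f hf => ?_
    have := eval_smul_hom hf 0 (0 : Fin (m+1) → K)
    rw [zero_pow (by omega), zero_mul, smul_zero] at this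
    rw [ev_apply, hv, this]; rfl
  · obtain ⟨a, ha⟩ := Projectivization.exists_smul_eq_mk_rep K v hv
    refine ⟨Finsupp.single (Projectivization.mk K v hv) ((a : K)⁻¹ ^ d), ?_, fun f hf => ?_⟩
    · exact (Finset.card_le_card Finsupp.support_single_subset).trans (by simp)
    · rw [EV_single, ← ha, Units.smul_def, eval_smul_hom hf, ev_apply, ← mul_assoc, ← mul_pow,
        inv_mul_cancel₀ a.ne_zero, one_pow, one_mul]

lemma RkLE_sum {ι : Type} (s : Finset ι) (c : ι → K) (v : ι → (Fin (m+1) → K)) {d : ℕ}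
    (hd : 1 ≤ d) : RkLE (∑ i ∈ s, c i • ev (v i)) d s.card := by
  classical
  induction s using Finset.induction_on with
  | empty => simpa using RkLE_zero d
  | insert a s ha ih =>
    rw [Finset.sum_insert ha, Finset.card_insert_of_notMem ha, add_comm s.card]
    exact ((RkLE_ev (v a) hd).smul (c a)).add ih

def BrLE (φ : PR K m →ₗ[K] K) (d n : ℕ) : Prop :=
  ∃ γ : K → (PR K m →ₗ[K] K),
    (∀ f : PR K m, f.IsHomogeneous d → ∃ P : Polynomial K, ∀ ε, γ ε f = P.eval ε) ∧
    (∃ E : Finset K, ∀ ε, ε ∉ E → RkLE (γ ε) d n) ∧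
    ∀ f : PR K m, f.IsHomogeneous d → γ 0 f = φ f

lemma RkLE.brLE {φ : PR K m →ₗ[K] K} {d n : ℕ} (h : RkLE φ d n) : BrLE φ d n :=
  ⟨fun _ => φ, fun f _ => ⟨Polynomial.C (φ f), by simp⟩, ⟨∅, fun _ _ => h⟩, fun _ _ => rfl⟩

lemma BrLE.add {φ ψ : PR K m →ₗ[K] K} {d n n' : ℕ} (h : BrLE φ d n) (h' : BrLE ψ d n') :
    BrLE (φ + ψ) d (n + n') := by
  classical
  obtain ⟨γ, h1, ⟨E, h2⟩, h3⟩ := h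
  obtain ⟨γ', h1', ⟨E', h2'⟩, h3'⟩ := h'
  refine ⟨fun ε => γ ε + γ' ε, fun f hf => ?_, ⟨E ∪ E', fun ε hε => ?_⟩, fun f hf => ?_⟩
  · obtain ⟨P, hP⟩ := h1 f hf
    obtain ⟨P', hP'⟩ := h1' f hf
    exact ⟨P + P', fun ε => by simp [hP, hP']⟩
  · simp at hε
    exact (h2 ε hε.1).add (h2' ε hε.2)
  · simp [h3 f hf, h3' f hf]

lemma BrLE.congr {φ ψ : PR K m →ₗ[K] K} {d n : ℕ} (h : BrLE φ d n)
    (he : ∀ f : PR K m, f.IsHomogeneous d → ψ f = φ f) : BrLE ψ d n := by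
  obtain ⟨γ, h1, h2, h3⟩ := h
  exact ⟨γ, h1, h2, fun f hf => (h3 f hf).trans (he f hf).symm⟩

def res (d : ℕ) (φ : PR K m →ₗ[K] K) : Module.Dual K (Hd K m d) := φ ∘ₗ (Hd K m d).subtype

lemma res_apply (d : ℕ) (φ : PR K m →ₗ[K] K) (f : Hd K m d) : res d φ f = φ f := rfl

lemma res_EV (d : ℕ) (w : Pm K m →₀ K) :
    res d (EV w) = Finsupp.linearCombination K (fun p : Pm K m => nu d p.rep) w := by
  ext f
  rw [res_apply, EV, Finsupp.linearCombination_apply, Finsupp.linearCombination_apply,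
    Finsupp.sum, Finsupp.sum, LinearMap.sum_apply, LinearMap.sum_apply]
  rfl

lemma nu_ne_zero (d : ℕ) (p : Pm K m) : nu d p.rep ≠ 0 := by
  intro h
  obtain ⟨i, hi⟩ : ∃ i, p.rep i ≠ 0 := by
    by_contra hcon; push Not at hcon
    exact p.rep_nonzero (funext hcon)
  have := LinearMap.congr_fun h ⟨X i ^ d, isHomogeneous_X_pow i d⟩
  simp [nu] at this
  exact hi this.1

instance finHd (d : ℕ) : Module.Finite K (Hd K m d) :=
  Module.Finite.iff_fg.2 (homogeneousSubmodule_fg _ _ d)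

lemma rk_of_S {d : ℕ} {S : Finset (PN K m d)} (hS : (S : Set (PN K m d)) ⊆ XSet K m d)
    {φ : PR K m →ₗ[K] K}
    (h : res d φ ∈ Submodule.span K (Projectivization.rep '' (S : Set (PN K m d)))) :
    RkLE φ d S.card := by
  classical
  have : ∀ Q : S, ∃ a : Pm K m, Q.1.submodule = Submodule.span K {nu d a.rep} :=
    fun Q => hS Q.2
  choose a ha using this
  have hsub : Submodule.span K (Projectivization.rep '' (S : Set (PN K m d))) ≤
      Submodule.span K ((fun p : Pm K m => nu d p.rep) '' (Finset.univ.image a : Finset _)) := by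
    rw [Submodule.span_le]
    rintro _ ⟨Q, hQ, rfl⟩
    have h1 : Q.rep ∈ Submodule.span K {nu d (a ⟨Q, hQ⟩).rep} := by
      rw [← ha ⟨Q, hQ⟩, Projectivization.submodule_eq]
      exact Submodule.mem_span_singleton_self _
    refine Submodule.span_mono ?_ h1
    rintro _ rfl
    exact ⟨a ⟨Q, hQ⟩, by simp, rfl⟩
  obtain ⟨l, hl, hl2⟩ := (Finsupp.mem_span_image_iff_linearCombination K).1 (hsub h)
  refine ⟨l, ?_, fun f hf => ?_⟩
  · have h1 : l.support ⊆ Finset.univ.image a := by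
      intro x hx; exact (Finsupp.mem_supported K l).1 hl hx
    refine (Finset.card_le_card h1).trans (Finset.card_image_le.trans ?_)
    simp
  · rw [← res_EV] at hl2
    exact (LinearMap.congr_fun hl2 ⟨f, hf⟩).symm

lemma S_of_rk {d n : ℕ} {φ : PR K m →ₗ[K] K} (h : RkLE φ d n) :
    ∃ S : Finset (PN K m d), (S : Set (PN K m d)) ⊆ XSet K m d ∧ S.card ≤ n ∧
      res d φ ∈ Submodule.span K (Projectivization.rep '' (S : Set (PN K m d))) := by
  classical
  obtain ⟨w, h1, h2⟩ := h
  let q : Pm K m → PN K m d := fun p => Projectivization.mk K (nu d p.rep) (nu_ne_zero d p)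
  refine ⟨w.support.image q, ?_, Finset.card_image_le.trans h1, ?_⟩
  · intro Q hQ
    simp only [Finset.coe_image, Set.mem_image] at hQ
    obtain ⟨p, _, rfl⟩ := hQ
    exact ⟨p, Projectivization.submodule_mk _ _⟩
  · have : res d φ = res d (EV w) := by ext f; exact h2 f.1 f.2
    rw [this, res_EV, Finsupp.linearCombination_apply]
    refine Submodule.sum_mem _ fun p hp => Submodule.smul_mem _ _ ?_
    obtain ⟨a, ha⟩ := Projectivization.exists_smul_eq_mk_rep K (nu d p.rep) (nu_ne_zero d p)
    have h3 : nu d p.rep = ((a⁻¹ : Kˣ) : K) • (q p).rep := by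
      rw [← ha, ← Units.smul_def, inv_smul_smul]
    rw [h3]
    exact Submodule.smul_mem _ _ (Submodule.subset_span ⟨q p, by
      simp only [Finset.coe_image]; exact ⟨p, hp, rfl⟩, rfl⟩)

lemma exists_ext {d : ℕ} (P : PN K m d) : ∃ φ : PR K m →ₗ[K] K, res d φ = P.rep :=
  LinearMap.exists_extend P.rep

lemma srank_le {d n : ℕ} {P : PN K m d} {φ : PR K m →ₗ[K] K} (hφ : res d φ = P.rep)
    (h : RkLE φ d n) : srank d P ≤ n := by
  obtain ⟨S, h1, h2, h3⟩ := S_of_rk h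
  have : srank d P ≤ S.card := Nat.sInf_le (s := {r | ∃ S : Finset (PN K m d), ↑S ⊆ XSet K m d ∧
    S.card = r ∧ P.rep ∈ Submodule.span K (Projectivization.rep '' (S : Set (PN K m d)))})
    ⟨S, h1, rfl, hφ ▸ h3⟩
  exact this.trans h2

lemma rk_srank {d : ℕ} {P : PN K m d} {φ : PR K m →ₗ[K] K} (hφ : res d φ = P.rep)
    (h : 0 < srank d P) : RkLE φ d (srank d P) := by
  obtain ⟨S, h1, h2, h3⟩ := Nat.sInf_mem (Nat.nonempty_of_pos_sInf h)
  have := rk_of_S (φ := φ) h1 (hφ ▸ h3)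
  exact this.mono h2.le

lemma srank_eq {d r : ℕ} {P : PN K m d} {φ : PR K m →ₗ[K] K} (hφ : res d φ = P.rep)
    (h : RkLE φ d r) (h2 : ∀ n, RkLE φ d n → r ≤ n) : srank d P = r := by
  obtain ⟨S, g1, g2, g3⟩ := S_of_rk h
  obtain ⟨S, h1, h2', h3⟩ := Nat.sInf_mem (s := {r | ∃ S : Finset (PN K m d), ↑S ⊆ XSet K m d ∧
    S.card = r ∧ P.rep ∈ Submodule.span K (Projectivization.rep '' (S : Set (PN K m d)))})
    ⟨_, S, g1, rfl, hφ ▸ g3⟩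
  have := h2 _ (rk_of_S (φ := φ) h1 (hφ ▸ h3))
  exact le_antisymm (srank_le hφ h) (this.trans h2'.le)

lemma poly_path [CharZero K] {d n : ℕ} {φ : PR K m →ₗ[K] K} {P : PN K m d} (hφ : res d φ = P.rep)
    (hn : 0 < n) (h : BrLE φ d n) : P ∈ secantWrt (XSet K m d) n := by
  classical
  obtain ⟨γ, h1, ⟨E, h2⟩, h3⟩ := h
  intro F hF hT c
  have hF0 : F 0 = 0 := by
    let p0 : Pm K m := Projectivization.mk K (Pi.single 0 1) (by
      intro h; simpa using congrFun h 0)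
    let Q0 : PN K m d := Projectivization.mk K (nu d p0.rep) (nu_ne_zero d p0)
    have := hT Q0 ⟨{Q0}, by
      intro Q hQ; simp at hQ; subst hQ; exact ⟨p0, Projectivization.submodule_mk _ _⟩,
      by simpa using Nat.succ_le_of_lt hn, Submodule.subset_span ⟨Q0, by simp, rfl⟩⟩ 0
    simpa using this
  have hvan : ∀ ε, ε ∉ E → F (c • res d (γ ε)) = 0 := by
    intro ε hε
    by_cases h0 : res d (γ ε) = 0
    · rw [h0, smul_zero, hF0]
    · obtain ⟨a, ha⟩ := Projectivization.exists_smul_eq_mk_rep K _ h0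
      obtain ⟨S, g1, g2, g3⟩ := S_of_rk (h2 ε hε)
      have := hT (Projectivization.mk K _ h0) ⟨S, g1, g2, by
        rw [← ha, Units.smul_def]; exact Submodule.smul_mem _ _ g3⟩ (c * ((a⁻¹ : Kˣ) : K))
      rw [← ha, mul_smul, ← Units.smul_def, inv_smul_smul] at this
      exact this
  have hpoly : ∃ Q : Polynomial K, ∀ ε, F (c • res d (γ ε)) = Q.eval ε := by
    clear hT hF0 hvan
    unfold polyFunctions at hF
    induction hF using Algebra.adjoin_induction with
    | mem x hx =>
      obtain ⟨g, rfl⟩ := hx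
      obtain ⟨f, hf⟩ := (Module.evalEquiv K (Hd K m d)).surjective g
      obtain ⟨Q, hQ⟩ := h1 f.1 f.2
      refine ⟨Polynomial.C c * Q, fun ε => ?_⟩
      rw [← hf, Module.evalEquiv_apply, Module.Dual.eval_apply, LinearMap.smul_apply, res_apply, hQ]
      simp
    | algebraMap r => exact ⟨Polynomial.C r, fun ε => by simp⟩
    | add x y _ _ hx hy =>
      obtain ⟨Q, hQ⟩ := hx
      obtain ⟨Q', hQ'⟩ := hy
      exact ⟨Q + Q', fun ε => by simp [hQ, hQ']⟩
    | mul x y _ _ hx hy =>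
      obtain ⟨Q, hQ⟩ := hx
      obtain ⟨Q', hQ'⟩ := hy
      exact ⟨Q * Q', fun ε => by simp [hQ, hQ']⟩
  obtain ⟨Q, hQ⟩ := hpoly
  have hQ0 : Q = 0 := by
    apply Polynomial.eq_zero_of_infinite_isRoot
    refine Set.Infinite.mono ?_ (E.finite_toSet.infinite_compl)
    intro ε hε
    simp only [Set.mem_ofPred_eq, Polynomial.IsRoot]
    rw [← hQ]; exact hvan ε (by simpa using hε)
  have h0 : res d (γ 0) = P.rep := by
    rw [← hφ]; ext f; exact h3 f.1 f.2
  rw [← h0, hQ, hQ0, Polynomial.eval_zero]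

lemma det_of_rk {d k n : ℕ} (hk : k ≤ d) {φ : PR K m →ₗ[K] K} (h : RkLE φ d n) {ι : Type}
    [Fintype ι] [DecidableEq ι] (hι : n < Fintype.card ι) (G H : ι → PR K m)
    (hG : ∀ i, (G i).IsHomogeneous k) (hH : ∀ i, (H i).IsHomogeneous (d - k)) :
    (Matrix.of fun i j => φ (G i * H j)).det = 0 := by
  obtain ⟨w, h1, h2⟩ := h
  by_contra hdet
  let A : Matrix ι w.support K := Matrix.of fun i p => w p.1 * eval p.1.rep (G i)
  let B : Matrix w.support ι K := Matrix.of fun p j => eval p.1.rep (H j)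
  have hAB : (Matrix.of fun i j => φ (G i * H j)) = A * B := by
    ext i j
    rw [Matrix.mul_apply, Matrix.of_apply, h2 _ (by
      have := (hG i).mul (hH j); rwa [Nat.add_sub_cancel' hk] at this), EV_apply,
      ← Finset.sum_coe_sort]
    refine Finset.sum_congr rfl fun p _ => ?_
    simp [A, B]; ring
  have hu : IsUnit (A * B) := by
    rw [Matrix.isUnit_iff_isUnit_det, ← hAB]; exact isUnit_iff_ne_zero.2 hdet
  have e1 := Matrix.rank_of_isUnit _ hu
  have e2 := Matrix.rank_mul_le_left A B
  have e3 := Matrix.rank_le_card_width A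
  simp only [Fintype.card_coe] at e3
  omega

lemma det_of_secant {d k n : ℕ} (hk : k ≤ d) {φ : PR K m →ₗ[K] K} {P : PN K m d}
    (hφ : res d φ = P.rep)
    (h : P ∈ secantWrt (XSet K m d) n) {ι : Type}
    [Fintype ι] [DecidableEq ι] (hι : n < Fintype.card ι) (G H : ι → PR K m)
    (hG : ∀ i, (G i).IsHomogeneous k) (hH : ∀ i, (H i).IsHomogeneous (d - k)) :
    (Matrix.of fun i j => φ (G i * H j)).det = 0 := by
  have hGH : ∀ i j, G i * H j ∈ Hd K m d := fun i j => by
    have := (hG i).mul (hH j); rwa [Nat.add_sub_cancel' hk] at this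
  let M : Matrix ι ι (Module.Dual K (Hd K m d) → K) :=
    Matrix.of fun i j => fun v => v ⟨G i * H j, hGH i j⟩
  have hM : M.det ∈ polyFunctions K (Module.Dual K (Hd K m d)) := by
    rw [Matrix.det_apply]
    refine Subalgebra.sum_mem _ fun σ _ => ?_
    rw [Units.smul_def]
    refine Subalgebra.zsmul_mem _ (Subalgebra.prod_mem _ fun i _ => ?_) _
    exact Algebra.subset_adjoin ⟨Module.Dual.eval K (Hd K m d) ⟨G (σ i) * H i, hGH _ _⟩, rfl⟩
  have hev : ∀ ψ : PR K m →ₗ[K] K, M.det (res d ψ) =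
      (Matrix.of fun i j => ψ (G i * H j)).det := by
    intro ψ
    have := RingHom.map_det (Pi.evalRingHom (fun _ : Module.Dual K (Hd K m d) => K) (res d ψ)) M
    simp only [Pi.evalRingHom_apply] at this
    rw [this]
    rfl
  have := h M.det hM (by
    rintro Q ⟨S, g1, g2, g3⟩ c
    obtain ⟨ψ, hψ⟩ := exists_ext Q
    have hr : RkLE (c • ψ) d n := ((rk_of_S g1 (hψ ▸ g3)).mono g2).smul c
    have h5 : c • Q.rep = res d (c • ψ) := by rw [← hψ]; rfl
    rw [h5, hev]
    exact det_of_rk hk hr hι G H hG hH) 1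
  rw [one_smul, ← hφ, hev] at this
  exact this

lemma brank_mem {d : ℕ} {P : PN K m d} (h : 0 < brank d P) :
    P ∈ secantWrt (XSet K m d) (brank d P) :=
  (Nat.sInf_mem (Nat.nonempty_of_pos_sInf h)).2

lemma brank_le [CharZero K] {d n : ℕ} {P : PN K m d} {φ : PR K m →ₗ[K] K} (hφ : res d φ = P.rep)
    (hn : 0 < n) (h : BrLE φ d n) : brank d P ≤ n :=
  Nat.sInf_le ⟨hn, poly_path hφ hn h⟩

lemma brank_eq [CharZero K] {d k : ℕ} (hk : k ≤ d) {P : PN K m d} {φ : PR K m →ₗ[K] K}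
    (hφ : res d φ = P.rep)
    {ι : Type} [Fintype ι] [DecidableEq ι] (hn : 0 < Fintype.card ι)
    (h : BrLE φ d (Fintype.card ι)) (G H : ι → PR K m)
    (hG : ∀ i, (G i).IsHomogeneous k) (hH : ∀ i, (H i).IsHomogeneous (d - k))
    (hdet : (Matrix.of fun i j => φ (G i * H j)).det ≠ 0) : brank d P = Fintype.card ι := by
  have hmem := poly_path hφ hn h
  have h2 : P ∈ secantWrt (XSet K m d) (brank d P) :=
    (Nat.sInf_mem (s := {s | 0 < s ∧ P ∈ secantWrt (XSet K m d) s}) ⟨_, hn, hmem⟩).2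
  apply le_antisymm (brank_le hφ hn h)
  by_contra hcon
  exact hdet (det_of_secant hk hφ h2 (by omega) G H hG hH)

end GG

end

noncomputable section
open scoped LinearAlgebra.Projectivization
namespace GG
open Polynomial
variable {K : Type} [Field K] {m : ℕ}

/-- Restriction to the chart `u + X v` of a line. -/
def ch (u v : Fin (m+1) → K) : PR K m →ₐ[K] K[X] :=
  MvPolynomial.aeval (fun i => C (u i) + X * C (v i))

lemma ch_X (u v : Fin (m+1) → K) (i) : ch u v (MvPolynomial.X i) = C (u i) + X * C (v i) := by
  simp [ch]

lemma eval_ch (u v : Fin (m+1) → K) (f : PR K m) (b : K) :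
    eval b (ch u v f) = MvPolynomial.eval (u + b • v) f := by
  have : ((aeval b : K[X] →ₐ[K] K).comp (ch u v)) = MvPolynomial.aeval (u + b • v) := by
    ext i; simp [ch]; ring
  have := AlgHom.congr_fun this f
  simpa [MvPolynomial.aeval_eq_eval, Polynomial.coe_aeval_eq_eval] using this

lemma natDegree_ch (u v : Fin (m+1) → K) {f : PR K m} {d : ℕ} (hf : f.IsHomogeneous d) :
    (ch u v f).natDegree ≤ d := by
  have h1 : ∀ i, ((fun i => C (u i) + X * C (v i)) i : K[X]).natDegree ≤ 1 := by
    intro i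
    refine (natDegree_add_le _ _).trans (max_le (by simp) ?_)
    refine natDegree_mul_le.trans ?_
    simp
  have := MvPolynomial.aeval_natDegree_le f hf.totalDegree_le (fun i => C (u i) + X * C (v i)) h1
  rw [mul_one] at this
  exact this

def bin (u v : Fin (m+1) → K) (Λ : K[X] →ₗ[K] K) : PR K m →ₗ[K] K := Λ ∘ₗ (ch u v).toLinearMap

lemma bin_apply (u v : Fin (m+1) → K) (Λ : K[X] →ₗ[K] K) (f : PR K m) :
    bin u v Λ f = Λ (ch u v f) := rfl

def Kill (Λ : K[X] →ₗ[K] K) (g : K[X]) (d : ℕ) : Prop :=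
  ∀ f : K[X], f.natDegree + g.natDegree ≤ d → Λ (g * f) = 0

lemma Kill.mod {Λ : K[X] →ₗ[K] K} {g : K[X]} {d : ℕ} (h : Kill Λ g d) (hg : g.Monic) {p : K[X]}
    (hp : p.natDegree ≤ d) : Λ (p %ₘ g) = Λ p := by
  conv_rhs => rw [← modByMonic_add_div p g, map_add]
  by_cases hc : p.natDegree < g.natDegree
  · rw [(divByMonic_eq_zero_iff hg).2 (degree_lt_degree hc)]; simp
  · rw [h, add_zero]
    rw [natDegree_divByMonic _ hg]; omega

lemma Lam_interp [DecidableEq K] (Λ : K[X] →ₗ[K] K) (B : Finset K) {h : K[X]} (hh : h.degree < B.card) :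
    Λ h = ∑ b ∈ B, Λ (Lagrange.basis B id b) * eval b h := by
  conv_lhs => rw [Lagrange.eq_interpolate_of_eval_eq (s := B) (v := id) (fun b => eval b h)
    (Function.injective_id.injOn) hh (fun _ _ => rfl)]
  rw [Lagrange.interpolate_apply, map_sum]
  refine Finset.sum_congr rfl fun b _ => ?_
  rw [C_mul', map_smul, smul_eq_mul, mul_comm]

lemma rank_nodes (u v : Fin (m+1) → K) (Λ : K[X] →ₗ[K] K) {d : ℕ} (hd : 1 ≤ d) (B : Finset K)
    (c : K → K) (h : ∀ p : K[X], p.natDegree ≤ d → Λ p = ∑ b ∈ B, c b * eval b p) :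
    RkLE (bin u v Λ) d B.card := by
  refine (RkLE_sum B c (fun b => u + b • v) hd).congr fun f hf => ?_
  rw [bin_apply, h _ (natDegree_ch u v hf), LinearMap.sum_apply]
  refine Finset.sum_congr rfl fun b _ => ?_
  rw [LinearMap.smul_apply, ev_apply, eval_ch, smul_eq_mul]

lemma rank_lemma (u v : Fin (m+1) → K) {Λ : K[X] →ₗ[K] K} {d : ℕ} (hd : 1 ≤ d) (B : Finset K)
    (h : Kill Λ (∏ b ∈ B, (X - C b)) d) : RkLE (bin u v Λ) d B.card := by
  classical
  have hm : (∏ b ∈ B, (X - C b)).Monic := monic_prod_of_monic _ _ fun b _ => monic_X_sub_C b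
  refine rank_nodes u v Λ hd B (fun b => Λ (Lagrange.basis B id b)) fun p hp => ?_
  rw [← h.mod hm hp, Lam_interp Λ B]
  · refine Finset.sum_congr rfl fun b hb => ?_
    congr 1
    conv_rhs => rw [← modByMonic_add_div p (∏ b ∈ B, (X - C b))]
    have h0 : eval b (∏ b ∈ B, (X - C b)) = 0 := by
      rw [eval_prod]; exact Finset.prod_eq_zero hb (by simp)
    rw [eval_add, eval_mul, h0, zero_mul, add_zero]
  · refine (degree_modByMonic_lt p hm).trans_eq ?_
    rw [degree_prod]; simp

lemma rank_all [CharZero K] (u v : Fin (m+1) → K) (Λ : K[X] →ₗ[K] K) {d : ℕ} (hd : 1 ≤ d) :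
    RkLE (bin u v Λ) d (d+1) := by
  classical
  obtain ⟨B, hB⟩ := Infinite.exists_subset_card_eq K (d+1)
  rw [← hB]
  refine rank_nodes u v Λ hd B (fun b => Λ (Lagrange.basis B id b)) fun p hp => ?_
  apply Lam_interp
  rw [hB]
  exact lt_of_le_of_lt (natDegree_le_iff_degree_le.1 hp) (by exact_mod_cast Nat.lt_succ_self d)

lemma border_lemma [CharZero K] (u v : Fin (m+1) → K) {Λ : K[X] →ₗ[K] K} {d e : ℕ} (hd : 1 ≤ d)
    (b : Fin e → K) (h : Kill Λ (∏ i, (X - C (b i))) d) : BrLE (bin u v Λ) d e := by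
  classical
  let g : K → K[X] := fun ε => ∏ i : Fin e, (X - C (b i + ε * (i : ℕ)))
  have hm : ∀ ε, (g ε).Monic := fun ε => monic_prod_of_monic _ _ fun b _ => monic_X_sub_C _
  refine ⟨fun ε => bin u v (Λ ∘ₗ modByMonicHom (g ε)), fun f hf => ?_,
    ⟨(Finset.univ : Finset (Fin e × Fin e)).image (fun ij =>
      (b ij.1 - b ij.2) / (((ij.2 : ℕ) : K) - ((ij.1 : ℕ) : K))), fun ε hε => ?_⟩, fun f hf => ?_⟩
  · -- polynomial dependence
    let G : K[X][X] := ∏ i : Fin e, (X - C (C (b i) + X * ((i : ℕ) : K[X])))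
    have hG : G.Monic := monic_prod_of_monic _ _ fun b _ => monic_X_sub_C _
    let q : K[X][X] := (ch u v f).map C %ₘ G
    refine ⟨∑ k ∈ Finset.range (q.natDegree + 1), C (Λ (X ^ k)) * q.coeff k, fun ε => ?_⟩
    have h1 : ch u v f %ₘ g ε = q.map (evalRingHom ε) := by
      rw [map_modByMonic _ hG, Polynomial.map_map]
      have e1 : (evalRingHom ε).comp C = RingHom.id K := by ext; simp
      have e2 : G.map (evalRingHom ε) = g ε := by
        simp [G, g, Polynomial.map_prod]
      rw [e1, e2, Polynomial.map_id]
    rw [bin_apply, LinearMap.comp_apply, modByMonicHom_apply, h1]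
    have h2 : (q.map (evalRingHom ε)) = ∑ k ∈ Finset.range (q.natDegree + 1),
        (q.coeff k).eval ε • X ^ k := by
      conv_lhs => rw [as_sum_range' (q.map (evalRingHom ε)) (q.natDegree + 1)
        (Nat.lt_succ_of_le natDegree_map_le)]
      refine Finset.sum_congr rfl fun k _ => ?_
      rw [coeff_map, ← C_mul_X_pow_eq_monomial, smul_eq_C_mul]; rfl
    rw [h2, map_sum, eval_finsetSum]
    refine Finset.sum_congr rfl fun k _ => ?_
    rw [map_smul, eval_mul, eval_C, smul_eq_mul, mul_comm]
  · have hinj : Function.Injective (fun i : Fin e => b i + ε * ((i : ℕ) : K)) := by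
      intro i j hij
      by_contra hne
      apply hε
      simp only [Finset.mem_image, Finset.mem_univ, true_and]
      refine ⟨(i, j), ?_⟩
      have h1 : ((j : ℕ) : K) - ((i : ℕ) : K) ≠ 0 := by
        rw [sub_ne_zero]; intro h; exact hne (Fin.ext (by exact_mod_cast h.symm))
      simp only at hij ⊢
      rw [div_eq_iff h1]; linear_combination hij
    have hcard : (Finset.univ.image (fun i : Fin e => b i + ε * ((i : ℕ) : K))).card = e := by
      rw [Finset.card_image_of_injective _ hinj]; simp
    have hk : Kill (Λ ∘ₗ modByMonicHom (g ε))
        (∏ x ∈ Finset.univ.image (fun i : Fin e => b i + ε * ((i : ℕ) : K)), (X - C x)) d := by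
      rw [Finset.prod_image (fun i _ j _ h => hinj h)]
      intro p _
      rw [LinearMap.comp_apply, modByMonicHom_apply,
        (modByMonic_eq_zero_iff_dvd (hm ε)).2 (dvd_mul_right _ _), map_zero]
    have := rank_lemma u v hd _ hk
    rwa [hcard] at this
  · have hg0 : g 0 = ∏ i, (X - C (b i)) := by simp [g]
    rw [bin_apply, LinearMap.comp_apply, modByMonicHom_apply, hg0]
    exact h.mod (hg0 ▸ hm 0) (natDegree_ch u v hf)

lemma border_monic [CharZero K] [IsAlgClosed K] (u v : Fin (m+1) → K) {Λ : K[X] →ₗ[K] K} {d e : ℕ}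
    (hd : 1 ≤ d) {g : K[X]} (hg : g.Monic) (he : g.natDegree = e) (h : Kill Λ g d) :
    BrLE (bin u v Λ) d e := by
  have h1 := (IsAlgClosed.splits g).eq_prod_roots
  rw [hg.leadingCoeff, C_1, one_mul] at h1
  have h2 : g.roots.toList.length = e := by
    rw [Multiset.length_toList, ← he]; exact (IsAlgClosed.splits g).natDegree_eq_card_roots.symm
  subst h2
  refine border_lemma u v hd (fun i => g.roots.toList.get i) ?_
  convert h
  conv_rhs => rw [h1, ← Multiset.coe_toList g.roots, Multiset.map_coe, Multiset.prod_coe]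
  rw [← List.prod_ofFn]
  congr 1
  conv_rhs => rw [← List.ofFn_get g.roots.toList, List.map_ofFn]
  simp

lemma dual_lem (Λ : K[X] →ₗ[K] K) (n k : ℕ) (l : K[X] →ₗ[K] K)
    (h : ∀ g ∈ degreeLT K n, (∀ f ∈ degreeLT K k, Λ (g * f) = 0) → l g = 0) :
    ∃ f ∈ degreeLT K k, ∀ g ∈ degreeLT K n, l g = Λ (g * f) := by
  let T0 : K[X] →ₗ[K] K[X] →ₗ[K] K := (LinearMap.mul K K[X]).compr₂ Λ
  let T : degreeLT K k →ₗ[K] Module.Dual K (degreeLT K n) :=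
    (LinearMap.lcomp K K (degreeLT K n).subtype) ∘ₗ T0 ∘ₗ (degreeLT K k).subtype
  have hT : ∀ f g, T f g = Λ (g.1 * f.1) := by
    intro f g
    simp [T, T0, mul_comm]
  have hmem : l ∘ₗ (degreeLT K n).subtype ∈ (LinearMap.range T).dualCoannihilator.dualAnnihilator := by
    rw [Submodule.mem_dualAnnihilator]
    intro g hg
    rw [Submodule.mem_dualCoannihilator] at hg
    apply h g.1 g.2
    intro f hf
    have := hg (T ⟨f, hf⟩) ⟨_, rfl⟩
    rwa [hT] at this
  rw [Subspace.dualCoannihilator_dualAnnihilator_eq] at hmem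
  obtain ⟨f, hf⟩ := hmem
  refine ⟨f.1, f.2, fun g hg => ?_⟩
  have := LinearMap.congr_fun hf ⟨g, hg⟩
  rw [hT] at this
  exact this.symm

lemma exists_avoid {V : Type} [AddCommGroup V] [Module K V] [CharZero K] (W : Submodule K V)
    {ι : Type} (s : Finset ι) (l : ι → V →ₗ[K] K) (h : ∀ i ∈ s, ∃ x ∈ W, l i x ≠ 0) :
    ∃ x ∈ W, ∀ i ∈ s, l i x ≠ 0 := by
  classical
  let S : Finset (Subspace K W) := s.image (fun i => LinearMap.ker (l i ∘ₗ W.subtype))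
  have hS : (⊤ : Subspace K W) ∉ S := by
    intro hmem
    obtain ⟨i, hi, hit⟩ := Finset.mem_image.1 hmem
    obtain ⟨x, hx, hlx⟩ := h i hi
    have : (⟨x, hx⟩ : W) ∈ LinearMap.ker (l i ∘ₗ W.subtype) := by rw [hit]; trivial
    exact hlx this
  have := Subspace.biUnion_ne_univ_of_top_notMem hS
  obtain ⟨x, hx⟩ := (Set.ne_univ_iff_exists_notMem _).1 this
  refine ⟨x.1, x.2, fun i hi hix => hx ?_⟩
  simp only [Set.mem_iUnion]
  exact ⟨_, Finset.mem_image_of_mem _ hi, hix⟩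

lemma bertini [CharZero K] [IsAlgClosed K] {n : ℕ} {g h : K[X]} (hg : g.natDegree = n) (hg0 : g ≠ 0)
    (hh : h.natDegree ≤ n) (hco : ∀ x, g.IsRoot x → eval x h ≠ 0) :
    ∃ t : K, ∃ B : Finset K, B.card = n ∧ ∃ c : K, c ≠ 0 ∧ g + C t * h = C c * ∏ b ∈ B, (X - C b) := by
  classical
  have hcop : ∀ x, eval x g ≠ 0 ∨ eval x h ≠ 0 := by
    intro x; by_cases hx : eval x g = 0
    · exact Or.inr (hco x hx)
    · exact Or.inl hx
  have hcop2 : IsCoprime g h := by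
    rw [isCoprime_iff_aeval_ne_zero_of_isAlgClosed K K]
    simpa [Polynomial.coe_aeval_eq_eval] using hcop
  rcases Nat.eq_zero_or_pos n with hn | hn
  · refine ⟨0, ∅, by simp [hn], g.coeff 0, ?_, ?_⟩
    · intro h0; apply hg0; rw [eq_C_of_natDegree_eq_zero (hg.trans hn), h0, C_0]
    · simp; exact eq_C_of_natDegree_eq_zero (hg.trans hn)
  let D := derivative g * h - g * derivative h
  have hD : D ≠ 0 := by
    intro h0
    have h1 : g ∣ derivative g * h := ⟨derivative h, sub_eq_zero.1 h0⟩
    have h2 : g ∣ derivative g := hcop2.dvd_of_dvd_mul_right h1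
    have h3 : derivative g ≠ 0 := by
      intro h4
      have := derivative_eq_zero.1 h4
      omega
    have := natDegree_le_of_dvd h2 h3
    have h5 := natDegree_derivative_lt (p := g) (by omega)
    omega
  let bad : Finset K := insert (-(g.coeff n / h.coeff n))
    (D.roots.toFinset.image (fun x => -(eval x g / eval x h)))
  obtain ⟨t, ht⟩ := Infinite.exists_notMem_finset bad
  have ht1 : t ≠ -(g.coeff n / h.coeff n) := fun h => ht (by simp [bad, h])
  have ht2 : ∀ x, eval x D = 0 → t ≠ -(eval x g / eval x h) := by
    intro x hx hc
    apply ht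
    refine Finset.mem_insert_of_mem (Finset.mem_image.2 ⟨x, ?_, hc.symm⟩)
    rw [Multiset.mem_toFinset, mem_roots hD]; exact hx
  let p := g + C t * h
  have hgn : g.coeff n ≠ 0 := by rw [← hg]; exact leadingCoeff_ne_zero.2 hg0
  have hpn : p.coeff n ≠ 0 := by
    simp only [p, coeff_add, coeff_C_mul]
    intro h0
    by_cases hz : h.coeff n = 0
    · rw [hz] at h0; simp at h0; exact hgn h0
    · apply ht1; rw [← neg_div, eq_div_iff hz]; linear_combination h0
  have hpd : p.natDegree = n := by
    apply le_antisymm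
    · apply (natDegree_add_le _ _).trans
      simp only [hg, max_le_iff, le_refl, true_and]
      exact (natDegree_C_mul_le _ _).trans hh
    · exact le_natDegree_of_ne_zero hpn
  have hsep : p.Separable := by
    rw [Polynomial.Separable, isCoprime_iff_aeval_ne_zero_of_isAlgClosed K K]
    intro x
    simp only [Polynomial.coe_aeval_eq_eval]
    by_contra hcon
    push Not at hcon
    obtain ⟨h1, h2⟩ := hcon
    simp [p] at h1 h2
    have hxh : eval x h ≠ 0 := by
      intro h0; rw [h0] at h1; simp at h1
      exact (hcop x).elim (fun h => h h1) (fun h => h h0)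
    apply ht2 x
    · simp only [D, eval_sub, eval_mul]
      linear_combination eval x h * h2 - eval x (derivative h) * h1
    · rw [← neg_div, eq_div_iff hxh]; linear_combination h1
  have hroots := (IsAlgClosed.splits p).eq_prod_roots
  have hnd := nodup_roots hsep
  refine ⟨t, p.roots.toFinset, ?_, p.leadingCoeff, ?_, ?_⟩
  · rw [Multiset.toFinset_card_of_nodup hnd, ← (IsAlgClosed.splits p).natDegree_eq_card_roots, hpd]
  · rw [leadingCoeff, hpd]; exact hpn
  · change p = _
    conv_lhs => rw [hroots]
    rw [Finset.prod_eq_multiset_prod, Multiset.toFinset_val, hnd.dedup]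

lemma mem_dLT {n : ℕ} {f : K[X]} (h : f.natDegree < n) : f ∈ degreeLT K n := by
  rw [mem_degreeLT]
  by_cases h0 : f = 0
  · rw [h0, degree_zero]; exact WithBot.bot_lt_coe n
  · exact (natDegree_lt_iff_degree_lt h0).1 h

lemma natDegree_of_dLT {n : ℕ} {f : K[X]} (h : f ∈ degreeLT K (n+1)) : f.natDegree ≤ n := by
  rw [mem_degreeLT] at h
  by_cases h0 : f = 0
  · simp [h0]
  · exact Nat.lt_succ_iff.1 ((natDegree_lt_iff_degree_lt h0).2 h)

end GG

end

noncomputable section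
open scoped LinearAlgebra.Projectivization
namespace GG
open Polynomial
variable {K : Type} [Field K] {m : ℕ}

lemma sylv_kernel [CharZero K] [IsAlgClosed K] (u v : Fin (m+1) → K) (Λ : K[X] →ₗ[K] K)
    {d n e : ℕ} (hd : 1 ≤ d) (hen : e + n = d + 1) (hrk : ¬ RkLE (bin u v Λ) d n) :
    ∃ g ∈ degreeLT K (e+1), g ≠ 0 ∧ ∀ f ∈ degreeLT K n, Λ (g * f) = 0 := by
  classical
  by_contra hK
  push Not at hK
  have hK' : ∀ g ∈ degreeLT K (e+1), (∀ f ∈ degreeLT K n, Λ (g * f) = 0) → g = 0 := by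
    intro g hg h
    by_contra h0
    obtain ⟨f, hf, hf2⟩ := hK g hg h0
    exact hf2 (h f hf)
  let W : Submodule K K[X] :=
    { carrier := {g | g ∈ degreeLT K (n+1) ∧ ∀ f ∈ degreeLT K e, Λ (g * f) = 0}
      add_mem' := by
        rintro a b ⟨ha, ha'⟩ ⟨hb, hb'⟩
        exact ⟨Submodule.add_mem _ ha hb, fun f hf => by rw [add_mul, map_add, ha' f hf, hb' f hf, add_zero]⟩
      zero_mem' := ⟨Submodule.zero_mem _, fun f _ => by simp⟩
      smul_mem' := by
        rintro c a ⟨ha, ha'⟩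
        exact ⟨Submodule.smul_mem _ _ ha, fun f hf => by rw [smul_mul_assoc, map_smul, ha' f hf, smul_zero]⟩ }
  have c1 : ∀ τ, ∃ h ∈ W, leval τ h ≠ 0 := by
    intro τ
    by_contra hcon
    push Not at hcon
    obtain ⟨f, hf, hf2⟩ := dual_lem Λ (n+1) e (leval τ) (fun g hg h => hcon g ⟨hg, h⟩)
    have hz : (X - C τ) * f = 0 := by
      apply hK'
      · rw [mem_degreeLT] at hf ⊢
        rw [degree_mul, degree_X_sub_C, add_comm]
        by_cases h0 : f = 0
        · rw [h0, degree_zero]; simp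
        · rw [degree_eq_natDegree h0] at hf ⊢
          exact_mod_cast Nat.succ_lt_succ (by exact_mod_cast hf)
      · intro g hg
        have h1 := hf2 (g * (X - C τ)) (by
          rw [mem_degreeLT] at hg ⊢
          rw [degree_mul, degree_X_sub_C]
          by_cases h0 : g = 0
          · rw [h0, degree_zero]; simp
          · rw [degree_eq_natDegree h0] at hg ⊢
            exact_mod_cast Nat.succ_lt_succ (by exact_mod_cast hg))
        rw [show (X - C τ) * f * g = g * (X - C τ) * f by ring, ← h1]
        simp [leval_apply]
    have hf0 : f = 0 := by
      rcases mul_eq_zero.1 hz with h | h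
      · exact absurd h (X_sub_C_ne_zero τ)
      · exact h
    have := hf2 1 (mem_dLT (by simp))
    rw [hf0] at this
    simp [leval_apply] at this
  have c2 : ∃ g ∈ W, lcoeff K n g ≠ 0 := by
    by_contra hcon
    push Not at hcon
    obtain ⟨f, hf, hf2⟩ := dual_lem Λ (n+1) e (lcoeff K n) (fun g hg h => hcon g ⟨hg, h⟩)
    have hf0 : f = 0 := by
      apply hK' f (degreeLT_mono (by omega) hf)
      intro g hg
      rw [mul_comm, ← hf2 g (degreeLT_mono (by omega) hg), lcoeff_apply]
      exact coeff_eq_zero_of_degree_lt (mem_degreeLT.1 hg)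
    have := hf2 (X ^ n) (mem_dLT (by simp))
    rw [hf0] at this
    simp at this
  obtain ⟨g, hgW, hgn⟩ := c2
  rw [lcoeff_apply] at hgn
  have hg0 : g ≠ 0 := by rintro rfl; simp at hgn
  have hgd : g.natDegree = n := le_antisymm (natDegree_of_dLT hgW.1) (le_natDegree_of_ne_zero hgn)
  obtain ⟨h, hhW, hh⟩ := exists_avoid W g.roots.toFinset (fun τ => leval τ) (fun τ _ => c1 τ)
  obtain ⟨t, B, hB, c, hc, hp⟩ := bertini hgd hg0 (natDegree_of_dLT hhW.1) (fun x hx =>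
    hh x (by rw [Multiset.mem_toFinset, mem_roots hg0]; exact hx))
  have hpW : g + C t * h ∈ W := by
    rw [C_mul']; exact W.add_mem hgW (W.smul_mem _ hhW)
  apply hrk
  rw [← hB]
  apply rank_lemma u v hd
  intro f hf
  rw [natDegree_prod_of_monic _ _ (fun b _ => monic_X_sub_C b)] at hf
  simp [hB] at hf
  have h1 := hpW.2 f (mem_dLT (by omega))
  rw [hp, mul_assoc, C_mul', map_smul, smul_eq_mul] at h1
  exact (mul_eq_zero.1 h1).resolve_left hc

lemma refl_eval {x : K} (hx : x ≠ 0) {N : ℕ} {f : K[X]} (hf : f.natDegree ≤ N) :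
    eval x⁻¹ (reflect N f) * x ^ N = eval x f := by
  let _ := invertibleOfNonzero hx
  have := eval₂_reflect_mul_pow (RingHom.id K) x N f hf
  simpa [eval₂_eq_eval_map] using this

lemma exists_chart [CharZero K] (T : Finset (Pm K m)) (W : Submodule K (Fin (m+1) → K))
    (hW : Module.finrank K W ≤ 2) (hT : ∀ q ∈ T, q.rep ∈ W) :
    ∃ (u v : Fin (m+1) → K) (a μ : Pm K m → K),
      ∀ q ∈ T, q.rep = μ q • (u + a q • v) := by
  classical
  obtain ⟨l, -, hl⟩ := exists_avoid (⊤ : Submodule K (Module.Dual K (Fin (m+1) → K))) T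
    (fun q => Module.Dual.eval K _ q.rep) (by
      intro q _
      obtain ⟨f, hf⟩ : ∃ f : Module.Dual K (Fin (m+1) → K), f q.rep ≠ 0 := by
        by_contra hcon; push Not at hcon
        exact q.rep_nonzero ((Module.forall_dual_apply_eq_zero_iff K q.rep).1 hcon)
      exact ⟨f, trivial, hf⟩)
  simp only [Module.Dual.eval_apply] at hl
  rcases T.eq_empty_or_nonempty with rfl | ⟨p, hp⟩
  · exact ⟨0, 0, 0, 0, by simp⟩
  have hlt : W ⊓ LinearMap.ker l < W := by
    refine lt_of_le_of_ne inf_le_left fun h => ?_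
    have : p.rep ∈ W ⊓ LinearMap.ker l := by rw [h]; exact hT p hp
    exact hl p hp this.2
  have hfr := Submodule.finrank_lt_finrank_of_lt hlt
  obtain ⟨v, hv⟩ := (finrank_le_one_iff (K := K) (V := (W ⊓ LinearMap.ker l : Submodule K _))).1
    (by omega)
  let u := (l p.rep)⁻¹ • p.rep
  have hex : ∀ q : Pm K m, ∃ a : K, q ∈ T → (l q.rep)⁻¹ • q.rep = u + a • v.1 := by
    intro q
    by_cases hq : q ∈ T
    · obtain ⟨c, hc⟩ := hv ⟨(l q.rep)⁻¹ • q.rep - u, by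
        refine ⟨W.sub_mem (W.smul_mem _ (hT q hq)) (W.smul_mem _ (hT p hp)), ?_⟩
        rw [SetLike.mem_coe, LinearMap.mem_ker]
        simp only [u, map_sub, map_smul, smul_eq_mul]
        rw [inv_mul_cancel₀ (hl p hp), inv_mul_cancel₀ (hl q hq), sub_self]⟩
      refine ⟨c, fun _ => ?_⟩
      have := congrArg Subtype.val hc
      simp only [Submodule.coe_smul] at this
      rw [this]; abel
    · exact ⟨0, fun h => absurd h hq⟩
  choose a ha using hex
  refine ⟨u, v.1, a, fun q => l q.rep, fun q hq => ?_⟩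
  rw [← ha q hq, smul_smul, mul_inv_cancel₀ (hl q hq), one_smul]

lemma line_lemma [CharZero K] [IsAlgClosed K] {w : Pm K m →₀ K} {W : Submodule K (Fin (m+1) → K)}
    (hW : Module.finrank K W ≤ 2) (hT : ∀ q ∈ w.support, q.rep ∈ W) {d n : ℕ} (hd : 1 ≤ d)
    (hrk : ¬ RkLE (EV w) d n) :
    ∃ e, e + n = d + 1 ∧ 2 ≤ e ∧ BrLE (EV w) d e := by
  classical
  obtain ⟨u, v, a, μ, hch⟩ := exists_chart w.support W hW hT
  let Λ : K[X] →ₗ[K] K := ∑ p ∈ w.support, (w p * μ p ^ d) • leval (a p)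
  have hΛ : ∀ h : K[X], Λ h = ∑ p ∈ w.support, (w p * μ p ^ d) * eval (a p) h := by
    intro h; simp [Λ, LinearMap.sum_apply, leval_apply]
  have hE : ∀ f : PR K m, f.IsHomogeneous d → EV w f = bin u v Λ f := by
    intro f hf
    rw [EV_apply, bin_apply, hΛ]
    refine Finset.sum_congr rfl fun p hp => ?_
    rw [hch p hp, eval_smul_hom hf, eval_ch, mul_assoc]
  have hrk' : ¬ RkLE (bin u v Λ) d n := fun h => hrk (h.congr hE)
  have hn : n ≤ d := by
    by_contra hcon
    exact hrk' ((rank_all u v Λ hd).mono (by omega))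
  obtain ⟨e, he⟩ : ∃ e, e + n = d + 1 := ⟨d + 1 - n, by omega⟩
  obtain ⟨g, hg, hg0, hgk⟩ := sylv_kernel u v Λ hd he hrk'
  obtain ⟨τ, hτ⟩ := Infinite.exists_notMem_finset (g.roots.toFinset ∪ w.support.image a)
  simp only [Finset.mem_union, not_or, Multiset.mem_toFinset, mem_roots hg0, Finset.mem_image,
    not_exists, not_and] at hτ
  obtain ⟨hτ1, hτ2⟩ := hτ
  have hτ3 : ∀ p ∈ w.support, a p - τ ≠ 0 := fun p hp => sub_ne_zero.2 (hτ2 p hp)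
  let Λ2 : K[X] →ₗ[K] K := ∑ p ∈ w.support, (w p * μ p ^ d * (a p - τ) ^ d) • leval ((a p - τ)⁻¹)
  have hΛ2 : ∀ h : K[X], Λ2 h = ∑ p ∈ w.support, (w p * μ p ^ d * (a p - τ) ^ d) *
      eval ((a p - τ)⁻¹) h := by
    intro h; simp [Λ2, LinearMap.sum_apply, leval_apply]
  have hE2 : ∀ f : PR K m, f.IsHomogeneous d → EV w f = bin v (u + τ • v) Λ2 f := by
    intro f hf
    rw [EV_apply, bin_apply, hΛ2]
    refine Finset.sum_congr rfl fun p hp => ?_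
    have : u + a p • v = (a p - τ) • (v + (a p - τ)⁻¹ • (u + τ • v)) := by
      rw [smul_add, smul_smul, mul_inv_cancel₀ (hτ3 p hp)]; module
    rw [hch p hp, eval_smul_hom hf, this, eval_smul_hom hf, eval_ch, mul_assoc, mul_assoc]
  let g1 := g.comp (X + C τ)
  have hg1 : g1.natDegree ≤ e := by
    refine natDegree_comp_le.trans ?_
    rw [natDegree_X_add_C, mul_one]; exact natDegree_of_dLT hg
  let G := reflect e g1
  have hGc : G.coeff e = eval τ g := by
    simp only [G, coeff_reflect, revAt_le le_rfl, Nat.sub_self, g1]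
    rw [coeff_zero_eq_eval_zero, eval_comp]; simp
  have hGc0 : G.coeff e ≠ 0 := by rw [hGc]; exact hτ1
  have hGd : G.natDegree = e := by
    refine le_antisymm (natDegree_reflect_le.trans (by omega)) (le_natDegree_of_ne_zero hGc0)
  have hGk : Kill Λ2 G d := by
    intro F hF
    rw [hGd] at hF
    let N := d - e
    let f := (reflect N F).comp (X - C τ)
    have hf : f ∈ degreeLT K n := by
      apply mem_dLT
      refine lt_of_le_of_lt natDegree_comp_le ?_
      rw [natDegree_X_sub_C, mul_one]
      refine lt_of_le_of_lt natDegree_reflect_le ?_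
      omega
    have h1 := hgk f hf
    rw [hΛ] at h1
    rw [hΛ2, ← h1]
    refine Finset.sum_congr rfl fun p hp => ?_
    have e1 := refl_eval (hτ3 p hp) hg1
    have e2 := refl_eval (inv_ne_zero (hτ3 p hp)) (show F.natDegree ≤ N by omega)
    rw [inv_inv] at e2
    have e3 : eval (a p - τ) g1 = eval (a p) g := by simp [g1]
    have e4 : eval (a p) f = eval (a p - τ) (reflect N F) := by simp [f]
    rw [eval_mul, eval_mul, ← e2, e4, ← e3, ← e1]
    have : (a p - τ) ^ d = (a p - τ) ^ e * (a p - τ) ^ N := by rw [← pow_add]; congr 1; omega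
    rw [this]
    have h5 : (a p - τ) ^ N * ((a p - τ)⁻¹) ^ N = 1 := by
      rw [← mul_pow, mul_inv_cancel₀ (hτ3 p hp), one_pow]
    change w p * μ p ^ d * ((a p - τ) ^ e * (a p - τ) ^ N) * (eval (a p - τ)⁻¹ (reflect e g1) * _) = _
    linear_combination (w p * μ p ^ d * (a p - τ) ^ e * eval (a p - τ)⁻¹ (reflect e g1) *
      eval (a p - τ) (reflect N F)) * h5
  have hmon : (C (G.coeff e)⁻¹ * G).Monic := by
    have := monic_C_mul_of_mul_leadingCoeff_eq_one (p := G) (b := (G.coeff e)⁻¹) (by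
      rw [leadingCoeff, hGd, inv_mul_cancel₀ hGc0])
    exact this
  have hmd : (C (G.coeff e)⁻¹ * G).natDegree = e := by
    rw [natDegree_C_mul (inv_ne_zero hGc0), hGd]
  have hmk : Kill Λ2 (C (G.coeff e)⁻¹ * G) d := by
    intro F hF
    rw [mul_assoc, C_mul', map_smul, hGk F (by rw [hmd] at hF; rw [hGd]; exact hF), smul_zero]
  refine ⟨e, he, ?_, (border_monic v (u + τ • v) hd hmon hmd hmk).congr hE2⟩
  by_contra hlt
  have he1 : e = 1 := by omega
  have hr1 : RkLE (EV w) d 1 := by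
    subst he1
    have h1 : C (G.coeff 1)⁻¹ * G = ∏ b ∈ ({-(C (G.coeff 1)⁻¹ * G).coeff 0} : Finset K), (X - C b) := by
      rw [Finset.prod_singleton, C_neg, sub_neg_eq_add]
      exact hmon.eq_X_add_C hmd
    rw [h1] at hmk
    exact (rank_lemma v (u + τ • v) hd _ hmk).congr hE2
  exact hrk (hr1.mono (by omega))

end GG

end

noncomputable section
open scoped LinearAlgebra.Projectivization
open MvPolynomial
namespace GG
variable {K : Type} [Field K] {m : ℕ}

lemma dualF {ι τ : Type} [Fintype ι] [DecidableEq ι] [Fintype τ] (u : ι → (τ → K))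
    (hu : LinearIndependent K u) :
    ∃ c : ι → τ → K, ∀ i j, ∑ t, u i t * c j t = if i = j then 1 else 0 := by
  classical
  have hinj : LinearMap.ker (Fintype.linearCombination K u) = ⊥ := by
    rw [LinearMap.ker_eq_bot]
    exact hu.fintypeLinearCombination_injective
  obtain ⟨g, hg⟩ := LinearMap.exists_leftInverse_of_injective _ hinj
  refine ⟨fun j t => g (Pi.single t 1) j, fun i j => ?_⟩
  have h1 := congrFun (LinearMap.congr_fun hg (Pi.single i 1)) j
  rw [LinearMap.comp_apply, Fintype.linearCombination_apply_single, one_smul,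
    LinearMap.id_apply] at h1
  rw [LinearMap.pi_apply_eq_sum_univ g (u i)] at h1
  rw [Finset.sum_apply] at h1
  have h2 : (Pi.single i 1 : ι → K) j = if i = j then 1 else 0 := by
    rw [Pi.single_apply]; simp [eq_comm]
  rw [← h2, ← h1]
  refine Finset.sum_congr rfl fun t _ => ?_
  simp only [Pi.smul_apply, smul_eq_mul]
  have : (Pi.single t 1 : τ → K) = fun x => if t = x then 1 else 0 := by
    ext x; simp [Pi.single_apply, eq_comm]
  rw [this]

lemma Ind_dual {T : Finset (Pm K m)} {k : ℕ} (h : Ind T k) (c : T → K) :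
    ∃ G : PR K m, G.IsHomogeneous k ∧ ∀ t : T, eval t.1.rep G = c t := by
  classical
  let F : Hd K m k →ₗ[K] (T → K) := LinearMap.pi fun t => ev t.1.rep ∘ₗ (Hd K m k).subtype
  have hF : ∀ f t, F f t = eval t.1.rep f.1 := fun f t => by simp [F]
  by_cases htop : LinearMap.range F = ⊤
  · obtain ⟨G, hG⟩ := LinearMap.range_eq_top.1 htop c
    exact ⟨G.1, G.2, fun t => by rw [← hF, hG]⟩
  exfalso
  obtain ⟨l, hl0, hl⟩ := Submodule.exists_le_ker_of_lt_top _ (lt_top_iff_ne_top.2 htop)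
  let w : Pm K m →₀ K := Finsupp.onFinset T
    (fun p => if hp : p ∈ T then l (Pi.single ⟨p, hp⟩ 1) else 0)
    (fun p hp => by by_contra hcon; simp [hcon] at hp)
  have hw : ∀ t : T, w t.1 = l (Pi.single t 1) := fun t => by simp [w]
  have hsub : w.support ⊆ T := Finsupp.support_onFinset_subset
  have hw0 : w = 0 := by
    refine h w hsub fun f hf => ?_
    have h1 : l (F ⟨f, hf⟩) = 0 := hl ⟨_, rfl⟩
    rw [LinearMap.pi_apply_eq_sum_univ l] at h1
    rw [EV_apply_of_subset _ _ _ hsub, ← Finset.sum_coe_sort, ← h1]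
    refine Finset.sum_congr rfl fun t _ => ?_
    rw [hw, hF, smul_eq_mul, mul_comm]
    congr 2; ext x; simp [Pi.single_apply, eq_comm]
  apply hl0
  apply LinearMap.pi_ext'
  intro t
  ext
  have := hw t
  rw [hw0] at this
  simpa using this.symm

lemma syl {d k n : ℕ} (hk : k ≤ d) {φ : PR K m →ₗ[K] K} {P : PN K m d}
    (hφ : res d φ = P.rep) (hP : P ∈ secantWrt (XSet K m d) n) {w : Pm K m →₀ K}
    (hw : ∀ f : PR K m, f.IsHomogeneous d → φ f = EV w f) {T T' : Finset (Pm K m)}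
    (hT : T ⊆ w.support) (hT' : T' ⊆ w.support) (hi : Ind T k) (hi' : Ind T' (d - k)) :
    T.card + T'.card ≤ w.support.card + n := by
  classical
  have h1 : ∀ t : T, ∃ G : PR K m, G.IsHomogeneous k ∧ ∀ s : T, eval s.1.rep G = (Pi.single t 1 : T → K) s :=
    fun t => Ind_dual hi _
  have h2 : ∀ t : T', ∃ G : PR K m, G.IsHomogeneous (d-k) ∧
    ∀ s : T', eval s.1.rep G = (Pi.single t 1 : T' → K) s :=
    fun t => Ind_dual hi' _
  choose G hG hG' using h1
  choose H hH hH' using h2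
  let A : (T → K) →ₗ[K] (w.support → K) :=
    LinearMap.pi fun p => Fintype.linearCombination K (fun t => eval p.1.rep (G t))
  let B : (w.support → K) →ₗ[K] (T' → K) :=
    LinearMap.pi fun t => Fintype.linearCombination K (fun p : w.support => w p.1 * eval p.1.rep (H t))
  have hA : ∀ c p, A c p = ∑ t, c t * eval p.1.rep (G t) := fun c p => by
    simp [A, Fintype.linearCombination_apply]
  have hB : ∀ x t, B x t = ∑ p, x p * (w p.1 * eval p.1.rep (H t)) := fun c p => by
    simp [B, Fintype.linearCombination_apply]
  have hAinj : Function.Injective A := by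
    rw [← LinearMap.ker_eq_bot, LinearMap.ker_eq_bot']
    intro c hc
    ext t
    have := congrFun hc ⟨t.1, hT t.2⟩
    rw [hA] at this
    simp only [hG'] at this
    simpa [Pi.single_apply] using this
  have hBsur : Function.Surjective B := by
    intro y
    refine ⟨fun p => if hp : p.1 ∈ T' then (w p.1)⁻¹ * y ⟨p.1, hp⟩ else 0, ?_⟩
    ext t
    rw [hB, Finset.sum_eq_single ⟨t.1, hT' t.2⟩]
    · have := Finsupp.mem_support_iff.1 (hT' t.2)
      simp only [Finset.coe_mem, dif_pos, hH']
      simp; field_simp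
    · intro p _ hp
      by_cases hpT : p.1 ∈ T'
      · have := hH' t ⟨p.1, hpT⟩
        simp only at this
        rw [this, Pi.single_apply, if_neg]
        · simp
        · intro he; apply hp; rw [← he]
      · simp [hpT]
    · simp
  let F := B ∘ₗ A
  have e1 := LinearMap.finrank_range_add_finrank_ker F
  have e2 := LinearMap.finrank_range_add_finrank_ker B
  have e3 : Module.finrank K (LinearMap.ker F) ≤ Module.finrank K (LinearMap.ker B) := by
    rw [LinearEquiv.finrank_eq (Submodule.equivMapOfInjective A hAinj (LinearMap.ker F))]
    apply Submodule.finrank_mono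
    rintro _ ⟨c, hc, rfl⟩
    exact hc
  rw [LinearMap.range_eq_top.2 hBsur, finrank_top] at e2
  simp only [Module.finrank_fintype_fun_eq_card, Fintype.card_coe] at e1 e2
  by_contra hcon
  have hr : n + 1 ≤ Module.finrank K (LinearMap.range F) := by omega
  let b := Module.finBasis K (LinearMap.range F)
  let v : Fin (n+1) → (T' → K) := fun i => (b (Fin.castLE hr i)).1
  have hv : LinearIndependent K v := by
    have := b.linearIndependent.comp (Fin.castLE hr) (Fin.castLE_injective hr)
    exact this.map' (LinearMap.range F).subtype (Submodule.ker_subtype _)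
  obtain ⟨e, he⟩ := dualF v hv
  have : ∀ i, ∃ c, F c = v i := fun i => (b (Fin.castLE hr i)).2
  choose c hc using this
  have hdet := det_of_secant hk hφ hP (ι := Fin (n+1)) (by simp)
    (fun i => ∑ t, C (c i t) * G t) (fun j => ∑ t, C (e j t) * H t)
    (fun i => IsHomogeneous.sum _ _ _ fun t _ => by
      simpa using (isHomogeneous_C _ (c i t)).mul (hG t))
    (fun i => IsHomogeneous.sum _ _ _ fun t _ => by
      simpa using (isHomogeneous_C _ (e i t)).mul (hH t))
  have : (Matrix.of fun i j => φ ((∑ t, C (c i t) * G t) * (∑ t, C (e j t) * H t))) =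
      (1 : Matrix (Fin (n+1)) (Fin (n+1)) K) := by
    ext i j
    rw [Matrix.of_apply, Matrix.one_apply, ← he i j, hw]
    · rw [EV_apply, ← Finset.sum_coe_sort]
      simp only [← hc, F, LinearMap.comp_apply, hB, hA, map_mul, map_sum, eval_C]
      simp only [Finset.sum_mul]
      rw [Finset.sum_comm]
      refine Finset.sum_congr rfl fun p _ => ?_
      simp only [Finset.mul_sum]
      rw [Finset.sum_comm]
      refine Finset.sum_congr rfl fun t _ => Finset.sum_congr rfl fun t' _ => ?_
      ring
    · have : d = k + (d - k) := by omega
      rw [this]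
      refine IsHomogeneous.mul (IsHomogeneous.sum _ _ _ fun t _ => ?_) (IsHomogeneous.sum _ _ _ fun t _ => ?_)
      · simpa using (isHomogeneous_C _ (c i t)).mul (hG t)
      · simpa using (isHomogeneous_C _ (e j t)).mul (hH t)
  rw [this, Matrix.det_one] at hdet
  exact one_ne_zero hdet

lemma partB [CharZero K] [IsAlgClosed K] {s d r : ℕ} (hs : 5 ≤ s) (hd : 2 * s + 2 ≤ d)
    {P : PN K m d} (hb : brank d P = s) (hr : srank d P = r) (hsr : s < r)
    (hrs : r + s ≤ 2 * d + 1) : ∃ e b, 2 ≤ e ∧ s = e + b ∧ r + e = d + 2 + b := by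
  classical
  obtain ⟨φ, hφ⟩ := exists_ext P
  obtain ⟨w, hwc, hw⟩ := rk_srank hφ (by omega)
  have hP := brank_mem (P := P) (by omega)
  rw [hb] at hP
  rw [hr] at hwc
  have hcard : w.support.card = r := by
    have := srank_le hφ ⟨w, le_rfl, hw⟩
    omega
  obtain ⟨k, hk⟩ : ∃ k, k = d / 2 := ⟨_, rfl⟩
  have key : ∀ T T' : Finset (Pm K m), T ⊆ w.support → T' ⊆ w.support → Ind T k → Ind T' (d - k) →
      T.card + T'.card ≤ r + s := fun T T' h1 h2 h3 h4 => by
    have := syl (by omega) hφ hP hw h1 h2 h3 h4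
    omega
  obtain ⟨W, hW, hWc⟩ : ∃ W : Submodule K (Fin (m+1) → K), Module.finrank K W ≤ 2 ∧
      k + 2 ≤ (w.support.filter (fun q => q.rep ∈ W)).card := by
    by_contra hcon
    push Not at hcon
    obtain ⟨T, hT, hTc⟩ := Finset.exists_subset_card_eq (s := w.support) (n := min r (2*k+1)) (by omega)
    obtain ⟨T', hT', hTc'⟩ := Finset.exists_subset_card_eq (s := w.support)
      (n := min r (2*(d-k)+1)) (by omega)
    have := key T T' hT hT' (Ind_gen (by omega) fun W hW => by
        have := hcon W hW
        have := Finset.card_le_card (Finset.filter_subset_filter (fun q => q.rep ∈ W) hT)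
        omega) (Ind_gen (by omega) fun W hW => by
        have := hcon W hW
        have := Finset.card_le_card (Finset.filter_subset_filter (fun q => q.rep ∈ W) hT')
        omega)
    omega
  have hab := Finset.card_filter_add_card_filter_not (s := w.support) (fun q => q.rep ∈ W)
  set SL := w.support.filter (fun q => q.rep ∈ W) with hSL
  set R := w.support.filter (fun q => ¬ q.rep ∈ W) with hR
  obtain ⟨a, ha⟩ : ∃ a, SL.card = a := ⟨_, rfl⟩
  obtain ⟨b, hbb⟩ : ∃ b, R.card = b := ⟨_, rfl⟩
  let wL := w.filter (fun q => q.rep ∈ W)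
  let wR := w.filter (fun q => ¬ q.rep ∈ W)
  have hsplit : EV w = EV wL + EV wR := by
    rw [← EV_add, Finsupp.filter_add_filter_not]
  have hLs : wL.support = SL := Finsupp.support_filter _ _
  have hRs : wR.support = R := Finsupp.support_filter _ _
  have hRk : RkLE (EV wR) d b := ⟨wR, by rw [hRs, hbb], fun _ _ => rfl⟩
  have hnr : ¬ RkLE (EV wL) d (a - 1) := by
    intro h
    have h2 := srank_le hφ ((h.add hRk).congr (ψ := φ) fun f hf => by rw [hw f hf, hsplit])
    omega
  obtain ⟨e, he1, he2, he3⟩ := line_lemma hW (w := wL) (fun q hq => by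
    rw [hLs, hSL, Finset.mem_filter] at hq; exact hq.2) (by omega) hnr
  have hse : s ≤ e + b := by
    have := brank_le hφ (by omega) ((he3.add hRk.brLE).congr (ψ := φ) fun f hf => by
      rw [hw f hf, hsplit])
    omega
  have key2 : ∀ U1 U2 : Finset (Pm K m), U1 ⊆ R → U2 ⊆ R → Ind U1 (k-1) → Ind U2 (d-k-1) →
      U1.card + U2.card + e ≤ b + s := by
    intro U1 U2 h1 h2 h3 h4
    obtain ⟨T, hT, hTc⟩ := Finset.exists_subset_card_eq (s := SL) (n := k+1) (by omega)
    obtain ⟨T', hT', hTc'⟩ := Finset.exists_subset_card_eq (s := SL) (n := d-k+1) (by omega)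
    have hin : ∀ T ⊆ SL, ∀ q ∈ T, q.rep ∈ W := fun T hT q hq =>
      (Finset.mem_filter.1 (hT hq)).2
    have hout : ∀ T ⊆ R, ∀ q ∈ T, q.rep ∉ W := fun T hT q hq =>
      (Finset.mem_filter.1 (hT hq)).2
    have i1 := Ind_union (hin T hT) (j := k-1) (by omega) (hout U1 h1) h3
    have i2 := Ind_union (hin T' hT') (j := d-k-1) (by omega) (hout U2 h2) h4
    rw [show k - 1 + 1 = k by omega] at i1
    rw [show d - k - 1 + 1 = d - k by omega] at i2
    have hdis : ∀ T ⊆ SL, ∀ U ⊆ R, Disjoint T U := fun T hT U hU => by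
      rw [Finset.disjoint_left]
      intro q hq hq2
      exact hout U hU q hq2 (hin T hT q hq)
    have := key _ _ (Finset.union_subset (hT.trans (Finset.filter_subset _ _))
      (h1.trans (Finset.filter_subset _ _))) (Finset.union_subset (hT'.trans (Finset.filter_subset _ _))
      (h2.trans (Finset.filter_subset _ _))) i1 i2
    rw [Finset.card_union_of_disjoint (hdis T hT U1 h1),
      Finset.card_union_of_disjoint (hdis T' hT' U2 h2)] at this
    omega
  by_cases hl : ∃ W2 : Submodule K (Fin (m+1) → K), Module.finrank K W2 ≤ 2 ∧
      k + 1 ≤ (R.filter (fun q => q.rep ∈ W2)).card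
  · exfalso
    obtain ⟨W2, hW2, hc2⟩ := hl
    obtain ⟨T, hT, hTc⟩ := Finset.exists_subset_card_eq (n := k) (show k ≤ _ from (by omega : k ≤ k+1).trans hc2)
    obtain ⟨T', hT', hTc'⟩ := Finset.exists_subset_card_eq (n := d - k)
      (show d - k ≤ _ from (by omega : d - k ≤ k+1).trans hc2)
    have := key2 T T' (hT.trans (Finset.filter_subset _ _)) (hT'.trans (Finset.filter_subset _ _))
      (Ind_small (by omega)) (Ind_small (by omega))
    omega
  · push Not at hl
    obtain ⟨T, hT, hTc⟩ := Finset.exists_subset_card_eq (s := R) (n := min b (2*k-1)) (by omega)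
    obtain ⟨T', hT', hTc'⟩ := Finset.exists_subset_card_eq (s := R)
      (n := min b (2*(d-k)-1)) (by omega)
    have := key2 T T' hT hT' (Ind_gen (by omega) fun W hW => by
        have := hl W hW
        have := Finset.card_le_card (Finset.filter_subset_filter (fun q => q.rep ∈ W) hT)
        omega) (Ind_gen (by omega) fun W hW => by
        have := hl W hW
        have := Finset.card_le_card (Finset.filter_subset_filter (fun q => q.rep ∈ W) hT')
        omega)
    exact ⟨e, b, he2, by omega, by omega⟩

end GG

end

noncomputable section
open scoped LinearAlgebra.Projectivization
open MvPolynomial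
namespace GG
variable {K : Type} [Field K]

def linP (n : Fin 3 → K) : PR K 2 := C (n 0) * X 0 + C (n 1) * X 1 + C (n 2) * X 2

lemma linP_hom (n : Fin 3 → K) : (linP n).IsHomogeneous 1 := by
  have : ∀ i : Fin 3, (C (n i) * X i : PR K 2).IsHomogeneous 1 := fun i => by
    simpa using (isHomogeneous_C _ (n i)).mul (isHomogeneous_X K i)
  exact ((this 0).add (this 1)).add (this 2)

lemma eval_linP (n v : Fin 3 → K) : eval v (linP n) = n 0 * v 0 + n 1 * v 1 + n 2 * v 2 := by
  simp [linP]

def conP (q : Fin 6 → K) : PR K 2 := C (q 0) * (X 0 * X 0) + C (q 1) * (X 1 * X 1) +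
  C (q 2) * (X 2 * X 2) + C (q 3) * (X 0 * X 1) + C (q 4) * (X 0 * X 2) + C (q 5) * (X 1 * X 2)

lemma conP_hom (q : Fin 6 → K) : (conP q).IsHomogeneous 2 := by
  have : ∀ (a : K) (i j : Fin 3), (C a * (X i * X j) : PR K 2).IsHomogeneous 2 := fun a i j => by
    simpa using (isHomogeneous_C _ a).mul ((isHomogeneous_X K i).mul (isHomogeneous_X K j))
  exact (((((this _ _ _).add (this _ _ _)).add (this _ _ _)).add (this _ _ _)).add
    (this _ _ _)).add (this _ _ _)

lemma eval_conP (q : Fin 6 → K) (v : Fin 3 → K) : eval v (conP q) = q 0 * (v 0 * v 0) +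
  q 1 * (v 1 * v 1) + q 2 * (v 2 * v 2) + q 3 * (v 0 * v 1) + q 4 * (v 0 * v 2) +
  q 5 * (v 1 * v 2) := by
  simp [conP]

lemma prodcon (n n' : Fin 3 → K) (hn : n ≠ 0) (hn' : n' ≠ 0) :
    ∃ q : Fin 6 → K, q ≠ 0 ∧ conP q = linP n * linP n' := by
  refine ⟨![n 0 * n' 0, n 1 * n' 1, n 2 * n' 2, n 0 * n' 1 + n 1 * n' 0,
    n 0 * n' 2 + n 2 * n' 0, n 1 * n' 2 + n 2 * n' 1], ?_, ?_⟩
  · intro h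
    have e0 := congrFun h 0
    have e1 := congrFun h 1
    have e2 := congrFun h 2
    have e3 := congrFun h 3
    have e4 := congrFun h 4
    have e5 := congrFun h 5
    simp at e0 e1 e2 e3 e4 e5
    by_cases h0 : n 0 = 0
    · by_cases h1 : n 1 = 0
      · by_cases h2 : n 2 = 0
        · apply hn; ext i; fin_cases i <;> simpa
        · apply hn'; ext i; fin_cases i <;> simp_all
      · apply hn'; ext i; fin_cases i <;> simp_all
    · apply hn'; ext i; fin_cases i <;> simp_all
  · simp [conP, linP]
    ring

lemma line3 (W : Submodule K (Fin 3 → K)) (hW : Module.finrank K W ≤ 2) :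
    ∃ n : Fin 3 → K, n ≠ 0 ∧ ∀ v ∈ W, n 0 * v 0 + n 1 * v 1 + n 2 * v 2 = 0 := by
  have hlt : W < ⊤ := by
    rw [lt_top_iff_ne_top]
    intro h
    rw [h, finrank_top] at hW
    simp at hW
  obtain ⟨l, hl0, hl⟩ := Submodule.exists_le_ker_of_lt_top _ hlt
  refine ⟨fun i => l (Pi.single i 1), fun h => hl0 ?_, fun v hv => ?_⟩
  · apply LinearMap.pi_ext'
    intro t
    ext
    simpa using congrFun h t
  · have h1 : l v = 0 := hl hv
    have : v = v 0 • Pi.single 0 1 + v 1 • Pi.single 1 1 + v 2 • Pi.single 2 1 := by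
      ext i; fin_cases i <;> simp
    rw [this] at h1
    simp only [map_add, map_smul, smul_eq_mul] at h1
    rw [← h1]; ring

lemma line3' {w : Pm K 2 →₀ K} {j : ℕ} (h : Rel w j) (hc : w.support.card ≤ 2 * j + 1) :
    ∃ n : Fin 3 → K, n ≠ 0 ∧ ∀ p ∈ w.support, eval p.rep (linP n) = 0 := by
  obtain ⟨W, hW, hq⟩ := N1_line h hc
  obtain ⟨n, hn, hn'⟩ := line3 W hW
  exact ⟨n, hn, fun p hp => by rw [eval_linP]; exact hn' _ (hq p hp)⟩

lemma con5 (T : Finset (Pm K 2)) (hT : T.card ≤ 5) :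
    ∃ q : Fin 6 → K, q ≠ 0 ∧ ∀ p ∈ T, eval p.rep (conP q) = 0 := by
  let f : T → (Fin 6 → K) →ₗ[K] K := fun p => Fintype.linearCombination K
    (![p.1.rep 0 * p.1.rep 0, p.1.rep 1 * p.1.rep 1, p.1.rep 2 * p.1.rep 2,
      p.1.rep 0 * p.1.rep 1, p.1.rep 0 * p.1.rep 2, p.1.rep 1 * p.1.rep 2] : Fin 6 → K)
  have hf : ∀ p q, f p q = eval p.1.rep (conP q) := fun p q => by
    rw [eval_conP]
    simp [f, Fintype.linearCombination_apply, Fin.sum_univ_six]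
  have : LinearMap.ker (LinearMap.pi f) ≠ ⊥ := by
    apply LinearMap.ker_ne_bot_of_finrank_lt
    simp; omega
  obtain ⟨q, hq, hq0⟩ := (Submodule.ne_bot_iff _).1 this
  refine ⟨q, hq0, fun p hp => ?_⟩
  rw [← hf ⟨p, hp⟩]
  exact congrFun hq ⟨p, hp⟩

lemma N2 (k : ℕ) : ∀ w : Pm K 2 →₀ K, Rel w k → 2 * w.support.card ≤ 5 * k →
    ∃ q : Fin 6 → K, q ≠ 0 ∧ ∀ p ∈ w.support, eval p.rep (conP q) = 0 := by
  classical
  induction k using Nat.strong_induction_on with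
  | _ k ih =>
  intro w hR hc
  rcases w.support.eq_empty_or_nonempty with he | ⟨p, hp⟩
  · exact ⟨fun _ => 1, fun h => one_ne_zero (congrFun h 0), by simp [he]⟩
  have hk2 := N1_card hR hp
  by_cases h2 : w.support.card ≤ 2 * k + 1
  · obtain ⟨n, hn, hn'⟩ := line3' hR h2
    obtain ⟨q, hq, hq'⟩ := prodcon n n hn hn
    exact ⟨q, hq, fun p hp => by rw [hq', map_mul, hn' p hp, zero_mul]⟩
  have hk4 : 4 ≤ k := by omega
  let f : (Fin 6 → K) → ℕ := fun q => (w.support.filter (fun p => eval p.rep (conP q) = 0)).card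
  have hmax : ∃ q, q ≠ 0 ∧ ∀ q', q' ≠ 0 → f q' ≤ f q := by
    have hne : (f '' {q | q ≠ 0}).Nonempty := ⟨_, fun _ => 1, fun h => one_ne_zero (congrFun h 0), rfl⟩
    have hbd : BddAbove (f '' {q | q ≠ 0}) := ⟨w.support.card, by
      rintro _ ⟨q, _, rfl⟩; exact Finset.card_filter_le _ _⟩
    obtain ⟨q, hq, hq'⟩ := Nat.sSup_mem hne hbd
    exact ⟨q, hq, fun q' h' => by rw [hq']; exact le_csSup hbd ⟨q', h', rfl⟩⟩
  obtain ⟨q, hq, hqm⟩ := hmax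
  have h5 : 5 ≤ f q := by
    obtain ⟨T, hT, hTc⟩ := Finset.exists_subset_card_eq (s := w.support) (n := 5) (by omega)
    obtain ⟨q5, h50, h51⟩ := con5 T hTc.le
    refine le_trans ?_ (hqm q5 h50)
    rw [← hTc]
    exact Finset.card_le_card fun p hp => Finset.mem_filter.2 ⟨hT hp, h51 p hp⟩
  have hR' : Rel (mulW w (conP q)) (k-2) := hR.mul (conP_hom q) (by omega)
  have hsum : f q + (mulW w (conP q)).support.card = w.support.card := by
    rw [← Finset.card_filter_add_card_filter_not (s := w.support) (fun p => eval p.rep (conP q) = 0)]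
    congr 2
    ext p; rw [mem_mulW, Finset.mem_filter]
  rcases (mulW w (conP q)).support.eq_empty_or_nonempty with he | ⟨p', hp'⟩
  · refine ⟨q, hq, fun p hp => ?_⟩
    by_contra hcon
    have := mem_mulW.2 ⟨hp, hcon⟩
    simp [he] at this
  have hk' := N1_card hR' hp'
  by_cases h2' : (mulW w (conP q)).support.card ≤ 2 * (k-2) + 1
  · obtain ⟨n, hn, hn'⟩ := line3' hR' h2'
    have hR2 : Rel (mulW w (linP n)) (k-1) := hR.mul (linP_hom n) (by omega)
    have hdis : Disjoint (mulW w (conP q)).support (mulW w (linP n)).support := by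
      rw [Finset.disjoint_left]
      intro p hp hp2
      exact (mem_mulW.1 hp2).2 (hn' p hp)
    have := Finset.card_le_card (Finset.union_subset (mulW_sub w (conP q)) (mulW_sub w (linP n)))
    rw [Finset.card_union_of_disjoint hdis] at this
    obtain ⟨n2, hn2, hn2'⟩ := line3' hR2 (by omega)
    obtain ⟨q2, hq2, hq2'⟩ := prodcon n n2 hn hn2
    refine ⟨q2, hq2, fun p hp => ?_⟩
    rw [hq2', map_mul]
    by_cases h0 : eval p.rep (linP n) = 0
    · rw [h0, zero_mul]
    · rw [hn2' p (mem_mulW.2 ⟨hp, h0⟩), mul_zero]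
  · exfalso
    obtain ⟨q2, hq2, hq2'⟩ := ih (k-2) (by omega) _ hR' (by omega)
    have h1 := hqm q2 hq2
    have h3 : (mulW w (conP q)).support.card ≤ f q2 :=
      Finset.card_le_card fun p hp => Finset.mem_filter.2 ⟨mulW_sub _ _ hp, hq2' p hp⟩
    omega

end GG

end

noncomputable section
open scoped LinearAlgebra.Projectivization
open MvPolynomial
namespace GG
variable {K : Type} [Field K]

def cc (i j : Fin 3) : PR K 2 →ₐ[K] Polynomial K := ch (Pi.single j 1) (Pi.single i 1)

lemma cc_i {i j : Fin 3} (h : i ≠ j) : cc i j (X i : PR K 2) = Polynomial.X := by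
  simp [cc, ch_X, h]
lemma cc_j {i j : Fin 3} (h : i ≠ j) : cc i j (X j : PR K 2) = 1 := by
  simp [cc, ch_X, h.symm]
lemma cc_k {i j k : Fin 3} (h : k ≠ i) (h' : k ≠ j) : cc i j (X k : PR K 2) = 0 := by
  simp [cc, ch_X, h, h']
lemma cc_C {i j : Fin 3} (a : K) : cc i j (C a : PR K 2) = Polynomial.C a := by
  simp [cc, ch]

/-- coefficient functional -/
def cf (i j : Fin 3) (a : ℕ) : PR K 2 →ₗ[K] K :=
  bin (Pi.single j 1) (Pi.single i 1) (Polynomial.lcoeff K a)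

lemma cf_apply (i j : Fin 3) (a : ℕ) (f : PR K 2) : cf i j a f = (cc i j f).coeff a := rfl

lemma cf_mul_zero {i j : Fin 3} {a : ℕ} {E : PR K 2} (h : cc i j E = 0) (f : PR K 2) :
    cf i j a (E * f) = 0 := by
  rw [cf_apply, map_mul, h, zero_mul, Polynomial.coeff_zero]

lemma prod_hom {ι σ : Type} (s : Finset ι) (g : ι → MvPolynomial σ K)
    (h : ∀ i ∈ s, (g i).IsHomogeneous 1) : (∏ i ∈ s, g i).IsHomogeneous s.card := by
  have := IsHomogeneous.prod s g (fun _ => 1) h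
  simpa using this

open Classical in
lemma len {i j : Fin 3} (hij : i ≠ j) {a d e δ : ℕ} {w : Pm K 2 →₀ K} {ψ : PR K 2 →ₗ[K] K}
    (hw : ∀ f : PR K 2, f.IsHomogeneous d → cf i j a f + ψ f = EV w f) (ha : 1 ≤ a)
    {E : PR K 2} (hE : E.IsHomogeneous e) (hδ : δ ≤ a)
    (h0 : ∀ l < δ, (cc i j E).coeff l = 0) (h1 : (cc i j E).coeff δ ≠ 0)
    (hψ : ∀ f, ψ (E * f) = 0)
    (hp : ∀ p ∈ w.support, eval p.rep E ≠ 0 → ∀ l, l ≠ i → l ≠ j → p.rep l = 0) :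
    d + 1 ≤ (w.support.filter (fun p => eval p.rep E ≠ 0 ∧ p.rep i ≠ 0)).card + e + (a - δ) := by
  by_contra hcon
  set T := w.support.filter (fun p => eval p.rep E ≠ 0 ∧ p.rep i ≠ 0) with hT
  obtain ⟨n, hn⟩ : ∃ n, n + (T.card + e + (a - δ)) = d := ⟨d - (T.card + e + (a - δ)), by omega⟩
  let lam : Pm K 2 → PR K 2 := fun p => C (p.rep j) * X i - C (p.rep i) * X j
  have hlam : ∀ p, (lam p).IsHomogeneous 1 := fun p => by
    apply IsHomogeneous.sub
    · simpa using (isHomogeneous_C _ (p.rep j)).mul (isHomogeneous_X K i)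
    · simpa using (isHomogeneous_C _ (p.rep i)).mul (isHomogeneous_X K j)
  let F : PR K 2 := X i ^ (a - δ) * (∏ p ∈ T, lam p) * X j ^ n
  have hF : (E * F).IsHomogeneous d := by
    have := hE.mul (((isHomogeneous_X_pow (R := K) i (a - δ)).mul (prod_hom T lam fun p _ => hlam p)).mul
      (isHomogeneous_X_pow (R := K) j n))
    convert this using 1; omega
  have hz : EV w (E * F) = 0 := by
    rw [EV_apply]
    refine Finset.sum_eq_zero fun p hpw => ?_
    by_cases hEp : eval p.rep E = 0
    · rw [map_mul, hEp]; ring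
    by_cases hpi : p.rep i = 0
    · by_cases had : a = δ
      · exfalso
        apply hEp
        have hrep : p.rep = (p.rep j) • (Pi.single j 1 : Fin 3 → K) := by
          ext l
          by_cases hl : l = j
          · subst hl; simp
          · by_cases hli : l = i
            · subst hli; simp [hpi, hl]
            · simp [hp p hpw hEp l hli hl, hl]
        have h2 := h0 0 (by omega)
        rw [Polynomial.coeff_zero_eq_eval_zero, cc, eval_ch, zero_smul, add_zero] at h2
        rw [hrep, eval_smul_hom hE, h2, mul_zero]
      · have : a - δ ≠ 0 := by omega
        simp [F, hpi, this]
    · have : eval p.rep (∏ p ∈ T, lam p) = 0 := by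
        rw [map_prod]
        apply Finset.prod_eq_zero (i := p)
        · rw [hT, Finset.mem_filter]; exact ⟨hpw, hEp, hpi⟩
        · simp [lam]; ring
      simp only [F, map_mul, this]; ring
  rw [← hw _ hF, hψ, add_zero, cf_apply] at hz
  have hcF : cc i j F = Polynomial.X ^ (a - δ) * ∏ p ∈ T,
      (Polynomial.C (p.rep j) * Polynomial.X - Polynomial.C (p.rep i)) := by
    simp only [F, map_mul, map_pow, map_prod, cc_i hij, cc_j hij, one_pow, mul_one, lam, map_sub, cc_C]
  obtain ⟨q, hq⟩ := Polynomial.X_pow_dvd_iff.2 h0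
  rw [hq, show δ = δ + 0 from rfl, Polynomial.coeff_X_pow_mul'] at h1
  rw [map_mul, hcF, hq] at hz
  rw [show Polynomial.X ^ δ * q * (Polynomial.X ^ (a - δ) * ∏ p ∈ T,
      (Polynomial.C (p.rep j) * Polynomial.X - Polynomial.C (p.rep i))) =
      (q * ∏ p ∈ T, (Polynomial.C (p.rep j) * Polynomial.X - Polynomial.C (p.rep i))) *
      Polynomial.X ^ (δ + (a - δ)) by rw [pow_add]; ring] at hz
  rw [Polynomial.coeff_mul_X_pow', if_pos (by omega), show a - (δ + (a - δ)) = 0 by omega,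
    Polynomial.mul_coeff_zero, Polynomial.coeff_zero_prod] at hz
  rcases mul_eq_zero.1 hz with h | h
  · apply h1; simpa using h
  · obtain ⟨p, hp1, hp2⟩ := Finset.prod_eq_zero_iff.1 h
    rw [hT, Finset.mem_filter] at hp1
    apply hp1.2.2
    simpa using hp2

end GG

end

noncomputable section
open scoped LinearAlgebra.Projectivization
open MvPolynomial
namespace GG
variable {K : Type} [Field K]

def ell : PR K 2 := X 0 - X 1 - X 2

lemma ell_hom : (ell : PR K 2).IsHomogeneous 1 :=
  ((isHomogeneous_X K _).sub (isHomogeneous_X K _)).sub (isHomogeneous_X K _)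

def KZ (w : Pm K 2 →₀ K) (F : PR K 2) : Prop :=
  ∀ p ∈ w.support, p.rep 1 ≠ 0 → p.rep 2 ≠ 0 → eval p.rep F = 0

lemma KZ.smul {w : Pm K 2 →₀ K} {F : PR K 2} (h : KZ w F) (G : PR K 2) : KZ w (G * F) :=
  fun p h1 h2 h3 => by rw [map_mul, h p h1 h2 h3, mul_zero]

open Classical in
lemma core3 {d s t a2 c0 : ℕ} {w wS wG wX : Pm K 2 →₀ K} (hw : w = wS - wG - wX)
    {Q : Finset (Pm K 2)} (hQs : wG.support = Q) (hQt : Q.card = t)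
    (hQ : ∀ q ∈ Q, q.rep 1 ≠ 0 ∧ q.rep 2 ≠ 0 ∧ eval q.rep ell = 0)
    (hX : ∀ q ∈ wX.support, q.rep 1 = 0 ∧ q.rep 2 = 0)
    (hd : 2 * s + 2 ≤ d) (hs : s = 4 + a2 + t) (ha2 : 1 ≤ a2) (hc0 : c0 ≤ 2) (hc1 : 1 ≤ c0)
    (hR : Rel (mulW w (X 1 * X 2)) (d - 2))
    {N1 N2 : ℕ} (hN1 : N1 = (wS.support.filter (fun p => p.rep 2 = 0 ∧ p.rep 1 ≠ 0)).card)
    (hN2 : N2 = (wS.support.filter (fun p => p.rep 1 = 0 ∧ p.rep 2 ≠ 0)).card)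
    (b10 : KZ w 1 → d ≤ N1 + c0) (b1l : KZ w ell → d ≤ N1 + 3)
    (b1n : ∀ n : Fin 3 → K, n 0 ≠ 0 ∨ n 1 ≠ 0 → KZ w (linP n * ell) → d ≤ N1 + 4)
    (b20 : KZ w 1 → d ≤ N2 + a2) (b2l : KZ w ell → d ≤ N2 + a2 + 1)
    (b2n : ∀ n : Fin 3 → K, n 0 ≠ 0 ∨ n 2 ≠ 0 → KZ w (linP n * ell) → d ≤ N2 + a2 + 2)
    (bD : ∀ q : Fin 6 → K, q ≠ 0 → KZ w (conP q * ell) →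
      (∃ n : Fin 3 → K, n ≠ 0 ∧ KZ w (linP n * ell)) ∨ d ≤ N1 + 5 ∨ d ≤ N2 + a2 + 3) :
    2 * d + t ≤ wS.support.card + c0 + a2 := by
  by_contra hcon
  obtain ⟨N3, hN3⟩ : ∃ N, N = (wS.support.filter
    (fun p => p.rep 1 ≠ 0 ∧ p.rep 2 ≠ 0 ∧ eval p.rep ell ≠ 0)).card := ⟨_, rfl⟩
  obtain ⟨N4, hN4⟩ : ∃ N, N = (wS.support.filter
    (fun p => p.rep 1 ≠ 0 ∧ p.rep 2 ≠ 0 ∧ eval p.rep ell = 0)).card := ⟨_, rfl⟩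
  have hsum : N1 + N2 + N3 + N4 ≤ wS.support.card := by
    rw [hN1, hN2, hN3, hN4, ← Finset.card_union_of_disjoint, ← Finset.card_union_of_disjoint,
      ← Finset.card_union_of_disjoint]
    · apply Finset.card_le_card
      intro p hp
      simp only [Finset.mem_union, Finset.mem_filter] at hp
      tauto
    all_goals
      rw [Finset.disjoint_left]
      intro p hp hp2
      simp only [Finset.mem_union, Finset.mem_filter] at hp hp2
      tauto
  have hmem : ∀ p ∈ w.support, p ∉ Q → ¬ (p.rep 1 = 0 ∧ p.rep 2 = 0) → p ∈ wS.support := by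
    intro p hp h1 h2
    rw [Finsupp.mem_support_iff] at hp ⊢
    intro h3
    apply hp
    rw [hw, Finsupp.sub_apply, Finsupp.sub_apply, h3,
      Finsupp.notMem_support_iff.1 (fun h => h1 (hQs ▸ h)),
      Finsupp.notMem_support_iff.1 (fun h => h2 (hX p h))]
    simp
  have hmul : ∀ p, p ∈ (mulW w (X 1 * X 2)).support ↔ p ∈ w.support ∧ p.rep 1 ≠ 0 ∧ p.rep 2 ≠ 0 := by
    intro p; rw [mem_mulW]; simp
  by_cases hA : KZ w ell
  · have e1 := b1l hA
    have e2 := b2l hA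
    by_cases hB : (mulW w (X 1 * X 2)).support.Nonempty
    · obtain ⟨p, hp⟩ := hB
      have e3 := N1_card hR hp
      have : (mulW w (X 1 * X 2)).support.card ≤ N4 + t := by
        rw [hN4, ← hQt]
        refine le_trans (Finset.card_le_card ?_) (Finset.card_union_le _ _)
        intro p hp
        rw [hmul] at hp
        rw [Finset.mem_union, Finset.mem_filter]
        by_cases hpQ : p ∈ Q
        · exact Or.inr hpQ
        · exact Or.inl ⟨hmem p hp.1 hpQ (fun h => hp.2.1 h.1), hp.2.1, hp.2.2,
            hA p hp.1 hp.2.1 hp.2.2⟩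
      omega
    · have h1 : KZ w 1 := by
        intro p h1 h2 h3
        exact absurd ⟨p, (hmul p).2 ⟨h1, h2, h3⟩⟩ hB
      have e3 := b10 h1
      have e4 := b20 h1
      have : t ≤ N4 := by
        rw [hN4, ← hQt]
        apply Finset.card_le_card
        intro p hp
        have hpq := hQ p hp
        rw [Finset.mem_filter]
        refine ⟨?_, hpq⟩
        have hpw : w p = 0 := by
          by_contra h
          exact absurd ⟨p, (hmul p).2 ⟨Finsupp.mem_support_iff.2 h, hpq.1, hpq.2.1⟩⟩ hB
        rw [Finsupp.mem_support_iff]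
        intro h
        rw [hw, Finsupp.sub_apply, Finsupp.sub_apply, h,
          Finsupp.notMem_support_iff.1 (fun h => hpq.1 (hX p h).1)] at hpw
        rw [← hQs, Finsupp.mem_support_iff] at hp
        apply hp
        simpa using hpw
      omega
  · have hRA : Rel (mulW (mulW w (X 1 * X 2)) ell) (d - 3) := hR.mul ell_hom (by omega)
    have hmulA : ∀ p, p ∈ (mulW (mulW w (X 1 * X 2)) ell).support ↔
        p ∈ w.support ∧ p.rep 1 ≠ 0 ∧ p.rep 2 ≠ 0 ∧ eval p.rep ell ≠ 0 := by
      intro p; rw [mem_mulW, hmul, and_assoc, and_assoc]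
    obtain ⟨p0, hp0⟩ : (mulW (mulW w (X 1 * X 2)) ell).support.Nonempty := by
      by_contra h
      apply hA
      intro p h1 h2 h3
      by_contra h4
      exact h ⟨p, (hmulA p).2 ⟨h1, h2, h3, h4⟩⟩
    have hAc := N1_card hRA hp0
    have hA3 : (mulW (mulW w (X 1 * X 2)) ell).support.card ≤ N3 := by
      rw [hN3]
      apply Finset.card_le_card
      intro p hp
      rw [hmulA] at hp
      rw [Finset.mem_filter]
      exact ⟨hmem p hp.1 (fun h => hp.2.2.2 (hQ p h).2.2) (fun h => hp.2.1 h.1), hp.2⟩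
    have hline : ¬ ∃ n : Fin 3 → K, n ≠ 0 ∧ KZ w (linP n * ell) := by
      rintro ⟨n, hn, hK⟩
      have hp := (hmulA p0).1 hp0
      have hv := hK p0 hp.1 hp.2.1 hp.2.2.1
      rw [map_mul, mul_eq_zero, or_iff_left hp.2.2.2, eval_linP] at hv
      have e1 := b1n n (by
        by_contra hc
        push Not at hc
        rw [hc.1, hc.2] at hv
        simp [hp.2.2.1] at hv
        apply hn; ext i; fin_cases i
        · exact hc.1
        · exact hc.2
        · exact hv) hK
      have e2 := b2n n (by
        by_contra hc
        push Not at hc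
        rw [hc.1, hc.2] at hv
        simp [hp.2.1] at hv
        apply hn; ext i; fin_cases i
        · exact hc.1
        · exact hv
        · exact hc.2) hK
      omega
    have tr : ∀ F : PR K 2, (∀ p ∈ (mulW (mulW w (X 1 * X 2)) ell).support, eval p.rep F = 0) →
        KZ w (F * ell) := by
      intro F hF p h1 h2 h3
      rw [map_mul]
      by_cases h4 : eval p.rep (ell : PR K 2) = 0
      · rw [h4, mul_zero]
      · rw [hF p ((hmulA p).2 ⟨h1, h2, h3, h4⟩), zero_mul]
    by_cases h5 : (mulW (mulW w (X 1 * X 2)) ell).support.card ≤ 2 * (d - 3) + 1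
    · obtain ⟨n, hn, hn'⟩ := line3' hRA h5
      exact hline ⟨n, hn, tr _ hn'⟩
    · obtain ⟨q, hq, hq'⟩ := GG.N2 (d-3) _ hRA (by omega)
      rcases bD q hq (tr _ hq') with h | h | h
      · exact hline h
      · omega
      · omega

end GG

end

noncomputable section
open scoped LinearAlgebra.Projectivization
open MvPolynomial
namespace GG
variable {K : Type} [Field K]

def Ord (P : Polynomial K) (δ : ℕ) : Prop := (∀ l < δ, P.coeff l = 0) ∧ P.coeff δ ≠ 0

lemma Ord.iff {P : Polynomial K} {δ : ℕ} : Ord P δ ↔ ∃ q : Polynomial K, P = Polynomial.X ^ δ * q ∧ q.coeff 0 ≠ 0 := by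
  constructor
  · rintro ⟨h0, h1⟩
    obtain ⟨q, hq⟩ := Polynomial.X_pow_dvd_iff.2 h0
    refine ⟨q, hq, ?_⟩
    rw [hq, Polynomial.coeff_X_pow_mul', if_pos le_rfl, Nat.sub_self] at h1
    exact h1
  · rintro ⟨q, hq, h1⟩
    refine ⟨Polynomial.X_pow_dvd_iff.1 ⟨q, hq⟩, ?_⟩
    rw [hq, Polynomial.coeff_X_pow_mul', if_pos le_rfl, Nat.sub_self]
    exact h1

lemma Ord.mul {P R : Polynomial K} {δ ρ : ℕ} (h : Ord P δ) (h' : Ord R ρ) : Ord (P * R) (δ + ρ) := by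
  rw [Ord.iff] at *
  obtain ⟨q, h1, h2⟩ := h
  obtain ⟨q', h1', h2'⟩ := h'
  exact ⟨q * q', by rw [h1, h1', pow_add]; ring, by
    rw [Polynomial.mul_coeff_zero]; exact mul_ne_zero h2 h2'⟩

lemma Ord_zero {P : Polynomial K} (h : P.coeff 0 ≠ 0) : Ord P 0 := ⟨by simp, h⟩
lemma Ord_X : Ord (Polynomial.X : Polynomial K) 1 := by
  rw [Ord.iff]; exact ⟨1, by simp, by simp⟩
lemma Ord_one : Ord (1 : Polynomial K) 0 := Ord_zero (by simp)

lemma Ord_quad (a b c : K) (h : a ≠ 0 ∨ b ≠ 0 ∨ c ≠ 0) : ∃ δ ≤ 2,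
    Ord (Polynomial.C a * (Polynomial.X * Polynomial.X) + Polynomial.C b * Polynomial.X + Polynomial.C c) δ := by
  by_cases hc : c = 0
  · by_cases hb : b = 0
    · have ha : a ≠ 0 := by tauto
      refine ⟨2, le_rfl, Ord.iff.2 ⟨Polynomial.C a, ?_, by simpa⟩⟩
      rw [hb, hc, Polynomial.C_0]; ring
    · refine ⟨1, by omega, Ord.iff.2 ⟨Polynomial.C a * Polynomial.X + Polynomial.C b, ?_, by simpa⟩⟩
      rw [hc]; simp; ring
  · exact ⟨0, by omega, Ord_zero (by simpa)⟩

lemma Ord_lin (b c : K) (h : b ≠ 0 ∨ c ≠ 0) : ∃ δ ≤ 1,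
    Ord (Polynomial.C b * Polynomial.X + Polynomial.C c) δ := by
  by_cases hc : c = 0
  · have hb : b ≠ 0 := by tauto
    refine ⟨1, le_rfl, Ord.iff.2 ⟨Polynomial.C b, ?_, by simpa⟩⟩
    rw [hc, Polynomial.C_0]; ring
  · exact ⟨0, by omega, Ord_zero (by simpa)⟩

lemma hmemS {w wS wG wX : Pm K 2 →₀ K} (hw : w = wS - wG - wX)
    (hQ : ∀ q ∈ wG.support, q.rep 1 ≠ 0 ∧ q.rep 2 ≠ 0 ∧ eval q.rep ell = 0)
    (hX : ∀ q ∈ wX.support, q.rep 1 = 0 ∧ q.rep 2 = 0) {p : Pm K 2} (hp : p ∈ w.support)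
    (h1 : p.rep 1 = 0 ∨ p.rep 2 = 0) (h2 : p.rep 1 ≠ 0 ∨ p.rep 2 ≠ 0) : p ∈ wS.support := by
  rw [Finsupp.mem_support_iff] at hp ⊢
  intro h3
  apply hp
  rw [hw, Finsupp.sub_apply, Finsupp.sub_apply, h3,
    Finsupp.notMem_support_iff.1 (fun h => by have := hQ p h; tauto),
    Finsupp.notMem_support_iff.1 (fun h => by have := hX p h; tauto)]
  simp

open Classical in
lemma bnd {w wS wG wX : Pm K 2 →₀ K} (hw : w = wS - wG - wX)
    (hQ : ∀ q ∈ wG.support, q.rep 1 ≠ 0 ∧ q.rep 2 ≠ 0 ∧ eval q.rep ell = 0)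
    (hX : ∀ q ∈ wX.support, q.rep 1 = 0 ∧ q.rep 2 = 0)
    {i j : Fin 3} (hij : i ≠ j) (v k : Fin 3) (hvk : (v = 1 ∧ k = 2) ∨ (v = 2 ∧ k = 1))
    (hl : ∀ l, l ≠ i → l ≠ j → l = k) {d a : ℕ} {ψ : PR K 2 →ₗ[K] K}
    (hwe : ∀ f : PR K 2, f.IsHomogeneous d → cf i j a f + ψ f = EV w f) (ha : 1 ≤ a)
    (hψ : ∀ f, ψ (X v * f) = 0) {e : ℕ} {F : PR K 2} (hF : F.IsHomogeneous e) (hK : KZ w F)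
    {δ : ℕ} (hδ : δ ≤ a) (ho : Ord (cc i j (X v * F)) δ) :
    d + 1 ≤ (wS.support.filter (fun p => p.rep k = 0 ∧ p.rep v ≠ 0)).card + (1 + e) + (a - δ) := by
  have hz : ∀ p ∈ w.support, eval p.rep (X v * F) ≠ 0 → p.rep k = 0 ∧ p.rep v ≠ 0 := by
    intro p hp h
    rw [map_mul, eval_X] at h
    refine ⟨?_, left_ne_zero_of_mul h⟩
    by_contra hk
    apply right_ne_zero_of_mul h
    have h2 := left_ne_zero_of_mul h
    rcases hvk with ⟨rfl, rfl⟩ | ⟨rfl, rfl⟩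
    · exact hK p hp h2 hk
    · exact hK p hp hk h2
  refine (len hij hwe ha ((isHomogeneous_X K v).mul hF) hδ ho.1 ho.2
    (fun f => by rw [mul_assoc, hψ]) (fun p hp h l h1 h2 => by rw [hl l h1 h2]; exact (hz p hp h).1)).trans ?_
  gcongr
  intro p hp
  rw [Finset.mem_filter] at hp ⊢
  have h2 := hz p hp.1 hp.2.1
  refine ⟨?_, h2⟩
  rcases hvk with ⟨rfl, rfl⟩ | ⟨rfl, rfl⟩
  · exact hmemS hw hQ hX hp.1 (Or.inr h2.1) (Or.inl h2.2)
  · exact hmemS hw hQ hX hp.1 (Or.inl h2.1) (Or.inr h2.2)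

lemma cc_zero_of {i j : Fin 3} {a : ℕ} {v : Fin 3} (h1 : v ≠ i) (h2 : v ≠ j) (f : PR K 2) :
    cf i j a (X v * f) = 0 := cf_mul_zero (cc_k h1 h2) f

section forms
lemma c01_ell : cc 0 1 (ell : PR K 2) = Polynomial.X - 1 := by
  simp [ell, cc_i, cc_j, cc_k (i := 0) (j := 1) (k := 2)]
lemma c10_ell : cc 1 0 (ell : PR K 2) = 1 - Polynomial.X := by
  simp [ell, cc_i, cc_j, cc_k (i := 1) (j := 0) (k := 2)]
lemma c02_ell : cc 0 2 (ell : PR K 2) = Polynomial.X - 1 := by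
  simp [ell, cc_i, cc_j, cc_k (i := 0) (j := 2) (k := 1)]
lemma c01_lin (n : Fin 3 → K) : cc 0 1 (linP n : PR K 2) =
    Polynomial.C (n 0) * Polynomial.X + Polynomial.C (n 1) := by
  simp [linP, cc_i, cc_j, cc_C, cc_k (i := 0) (j := 1) (k := 2)]
lemma c10_lin (n : Fin 3 → K) : cc 1 0 (linP n : PR K 2) =
    Polynomial.C (n 1) * Polynomial.X + Polynomial.C (n 0) := by
  simp [linP, cc_i, cc_j, cc_C, cc_k (i := 1) (j := 0) (k := 2)]; ring
lemma c02_lin (n : Fin 3 → K) : cc 0 2 (linP n : PR K 2) =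
    Polynomial.C (n 0) * Polynomial.X + Polynomial.C (n 2) := by
  simp [linP, cc_i, cc_j, cc_C, cc_k (i := 0) (j := 2) (k := 1)]
lemma c01_con (q : Fin 6 → K) : cc 0 1 (conP q : PR K 2) =
    Polynomial.C (q 0) * (Polynomial.X * Polynomial.X) + Polynomial.C (q 3) * Polynomial.X +
    Polynomial.C (q 1) := by
  simp [conP, cc_i, cc_j, cc_C, cc_k (i := 0) (j := 1) (k := 2)]; ring
lemma c10_con (q : Fin 6 → K) : cc 1 0 (conP q : PR K 2) =
    Polynomial.C (q 1) * (Polynomial.X * Polynomial.X) + Polynomial.C (q 3) * Polynomial.X +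
    Polynomial.C (q 0) := by
  simp [conP, cc_i, cc_j, cc_C, cc_k (i := 1) (j := 0) (k := 2)]; ring
lemma c02_con (q : Fin 6 → K) : cc 0 2 (conP q : PR K 2) =
    Polynomial.C (q 0) * (Polynomial.X * Polynomial.X) + Polynomial.C (q 4) * Polynomial.X +
    Polynomial.C (q 2) := by
  simp [conP, cc_i, cc_j, cc_C, cc_k (i := 0) (j := 2) (k := 1)]; ring
lemma ord_e1 : Ord (Polynomial.X - 1 : Polynomial K) 0 := Ord_zero (by simp)
lemma ord_e2 : Ord (1 - Polynomial.X : Polynomial K) 0 := Ord_zero (by simp)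
end forms

end GG

end

noncomputable section
open scoped LinearAlgebra.Projectivization
open MvPolynomial
namespace GG
variable {K : Type} [Field K]

lemma ell_mulhom {e : ℕ} {F : PR K 2} (hF : F.IsHomogeneous e) : (F * ell).IsHomogeneous (e + 1) :=
  hF.mul ell_hom

lemma hRel {d : ℕ} (hd : 2 ≤ d) {w : Pm K 2 →₀ K} {ψ : PR K 2 →ₗ[K] K}
    (hwe : ∀ f : PR K 2, f.IsHomogeneous d → ψ f = EV w f)
    (h : ∀ f, ψ (X 1 * X 2 * f) = 0) : Rel (mulW w (X 1 * X 2)) (d - 2) := by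
  intro f hf
  rw [EV_mulW, ← hwe _ _, h]
  have := ((isHomogeneous_X K (1 : Fin 3)).mul (isHomogeneous_X K (2 : Fin 3))).mul hf
  convert this using 1; omega

lemma KZ_div {w : Pm K 2 →₀ K} {q : Fin 6 → K} {n : Fin 3 → K} (v : Fin 3) (hv : v = 1 ∨ v = 2)
    (h : ∀ x : Fin 3 → K, eval x (conP q) = x v * eval x (linP n))
    (hK : KZ w (conP q * ell)) : KZ w (linP n * ell) := by
  intro p hp h1 h2
  have := hK p hp h1 h2
  rw [map_mul, h, mul_assoc, ← map_mul] at this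
  refine (mul_eq_zero.1 this).resolve_left ?_
  rcases hv with rfl | rfl <;> assumption

lemma low3e {d s t a2 n : ℕ} {wG : Pm K 2 →₀ K} (hQt : wG.support.card = t)
    (hQ : ∀ q ∈ wG.support, q.rep 1 ≠ 0 ∧ q.rep 2 ≠ 0 ∧ eval q.rep ell = 0)
    (hd : 2 * s + 2 ≤ d) (hs : s = 4 + a2 + t) (ha2 : 1 ≤ a2)
    (h : RkLE (cf 0 1 2 + cf 0 2 a2 + EV wG) d n) : 2 * d + t ≤ n + 2 + a2 := by
  classical
  obtain ⟨wS, hn, hS⟩ := h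
  obtain ⟨w, hw⟩ : ∃ w, w = wS - wG - 0 := ⟨_, rfl⟩
  have hX : ∀ q ∈ (0 : Pm K 2 →₀ K).support, q.rep 1 = 0 ∧ q.rep 2 = 0 := by simp
  have hwe : ∀ f : PR K 2, f.IsHomogeneous d → cf 0 1 2 f + cf 0 2 a2 f = EV w f := by
    intro f hf
    have := hS f hf
    simp only [LinearMap.add_apply] at this
    rw [hw, sub_zero, EV_sub, LinearMap.sub_apply, ← this]; ring
  have hwe' : ∀ f : PR K 2, f.IsHomogeneous d → cf 0 2 a2 f + cf 0 1 2 f = EV w f := by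
    intro f hf; rw [← hwe f hf]; ring
  have B1 := fun {e : ℕ} {F : PR K 2} (hF : F.IsHomogeneous e) (hK : KZ w F) {δ : ℕ} (hδ : δ ≤ 2)
      (ho : Ord (cc 0 1 (X 1 * F)) δ) =>
    bnd hw hQ hX (i := 0) (j := 1) (by decide) 1 2 (by simp) (by decide) hwe (by omega)
      (fun f => cc_zero_of (by decide) (by decide) f) hF hK hδ ho
  have B2 := fun {e : ℕ} {F : PR K 2} (hF : F.IsHomogeneous e) (hK : KZ w F) {δ : ℕ} (hδ : δ ≤ a2)
      (ho : Ord (cc 0 2 (X 2 * F)) δ) =>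
    bnd hw hQ hX (i := 0) (j := 2) (by decide) 2 1 (by simp) (by decide) hwe' (by omega)
      (fun f => cc_zero_of (by decide) (by decide) f) hF hK hδ ho
  have e1 : cc 0 1 (X 1 : PR K 2) = 1 := cc_j (by decide)
  have e2 : cc 0 2 (X 2 : PR K 2) = 1 := cc_j (by decide)
  have key := core3 (c0 := 2) hw rfl hQt hQ hX hd hs ha2 le_rfl (by omega)
    (hRel (ψ := cf 0 1 2 + cf 0 2 a2) (by omega) hwe fun f => by
      rw [LinearMap.add_apply, cf_mul_zero, cf_mul_zero, add_zero]
      · rw [map_mul, cc_k (i := 0) (j := 2) (k := 1) (by decide) (by decide), zero_mul]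
      · rw [map_mul, cc_k (i := 0) (j := 1) (k := 2) (by decide) (by decide), mul_zero]) rfl rfl
    (fun hK => by
      have := B1 (isHomogeneous_one _ _) hK (δ := 0) (by omega) (by rw [mul_one, e1]; exact Ord_one)
      omega)
    (fun hK => by
      have := B1 ell_hom hK (δ := 0) (by omega) (by rw [map_mul, e1, one_mul, c01_ell]; exact ord_e1)
      omega)
    (fun n hn hK => by
      obtain ⟨δ, h1, h2⟩ := Ord_lin (n 0) (n 1) hn
      have := B1 (ell_mulhom (linP_hom n)) hK (δ := δ) (by omega)
        (by rw [map_mul, map_mul, e1, one_mul, c01_ell, c01_lin]; exact h2.mul ord_e1)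
      omega)
    (fun hK => by
      have := B2 (isHomogeneous_one _ _) hK (δ := 0) (by omega) (by rw [mul_one, e2]; exact Ord_one)
      omega)
    (fun hK => by
      have := B2 ell_hom hK (δ := 0) (by omega) (by rw [map_mul, e2, one_mul, c02_ell]; exact ord_e1)
      omega)
    (fun n hn hK => by
      obtain ⟨δ, h1, h2⟩ := Ord_lin (n 0) (n 2) hn
      have := B2 (ell_mulhom (linP_hom n)) hK (δ := δ) (by omega)
        (by rw [map_mul, map_mul, e2, one_mul, c02_ell, c02_lin]; exact h2.mul ord_e1)
      omega)
    (fun q hq hK => by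
      by_cases h : q 0 ≠ 0 ∨ q 3 ≠ 0 ∨ q 1 ≠ 0
      · obtain ⟨δ, h1, h2⟩ := Ord_quad (q 0) (q 3) (q 1) h
        have := B1 (ell_mulhom (conP_hom q)) hK (δ := δ) (by omega)
          (by rw [map_mul, map_mul, e1, one_mul, c01_ell, c01_con]; exact h2.mul ord_e1)
        omega
      · push Not at h
        left
        refine ⟨![q 4, q 5, q 2], fun h0 => hq ?_, KZ_div 2 (by simp) (fun x => ?_) hK⟩
        · have a0 := congrFun h0 0
          have a1 := congrFun h0 1
          have a3 := congrFun h0 2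
          simp at a0 a1 a3
          ext i; fin_cases i <;> simp [h, a0, a1, a3]
        · rw [eval_conP, eval_linP, h.1, h.2.1, h.2.2]; simp; ring)
  omega

lemma ex_ne : (Pi.single 0 1 : Fin 3 → K) ≠ 0 := by
  intro h; have := congrFun h 0; simp at this

lemma low3o {d s t a2 n : ℕ} {wG : Pm K 2 →₀ K} (hQt : wG.support.card = t)
    (hQ : ∀ q ∈ wG.support, q.rep 1 ≠ 0 ∧ q.rep 2 ≠ 0 ∧ eval q.rep ell = 0)
    (hd : 2 * s + 2 ≤ d) (hs : s = 4 + a2 + t) (ha2 : 1 ≤ a2)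
    (h : RkLE (cf 1 0 2 + cf 0 2 a2 + ev (Pi.single 0 1) + EV wG) d n) : 2 * d + t ≤ n + 1 + a2 := by
  classical
  obtain ⟨wS, hn, hS⟩ := h
  obtain ⟨κ, hκ⟩ := Projectivization.exists_smul_eq_mk_rep K (Pi.single 0 1 : Fin 3 → K) ex_ne
  obtain ⟨wX, hwX⟩ : ∃ w : Pm K 2 →₀ K, w = Finsupp.single (Projectivization.mk K (Pi.single 0 1 : Fin 3 → K) ex_ne) (((κ⁻¹ : Kˣ) : K) ^ d) := by
    refine ⟨Finsupp.single _ (((κ⁻¹ : Kˣ) : K) ^ d), rfl⟩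
  have hX : ∀ q ∈ wX.support, q.rep 1 = 0 ∧ q.rep 2 = 0 := by
    intro q hq
    rw [hwX] at hq
    have := Finsupp.support_single_subset hq
    rw [Finset.mem_singleton] at this
    rw [this, ← hκ]; simp [Units.smul_def]
  have hXe : ∀ f : PR K 2, f.IsHomogeneous d → ev (Pi.single 0 1) f = EV wX f := by
    intro f hf
    rw [hwX, EV_single, ← hκ, Units.smul_def, eval_smul_hom hf, ← mul_assoc, ← mul_pow, ev_apply]
    simp
  obtain ⟨w, hw⟩ : ∃ w, w = wS - wG - wX := ⟨_, rfl⟩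
  have hwe : ∀ f : PR K 2, f.IsHomogeneous d → cf 1 0 2 f + cf 0 2 a2 f = EV w f := by
    intro f hf
    have := hS f hf
    simp only [LinearMap.add_apply] at this
    rw [hw, EV_sub, EV_sub, LinearMap.sub_apply, LinearMap.sub_apply, ← this, hXe f hf]; ring
  have hwe' : ∀ f : PR K 2, f.IsHomogeneous d → cf 0 2 a2 f + cf 1 0 2 f = EV w f := by
    intro f hf; rw [← hwe f hf]; ring
  have B1 := fun {e : ℕ} {F : PR K 2} (hF : F.IsHomogeneous e) (hK : KZ w F) {δ : ℕ} (hδ : δ ≤ 2)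
      (ho : Ord (cc 1 0 (X 1 * F)) δ) =>
    bnd hw hQ hX (i := 1) (j := 0) (by decide) 1 2 (by simp) (by decide) hwe (by omega)
      (fun f => cc_zero_of (by decide) (by decide) f) hF hK hδ ho
  have B2 := fun {e : ℕ} {F : PR K 2} (hF : F.IsHomogeneous e) (hK : KZ w F) {δ : ℕ} (hδ : δ ≤ a2)
      (ho : Ord (cc 0 2 (X 2 * F)) δ) =>
    bnd hw hQ hX (i := 0) (j := 2) (by decide) 2 1 (by simp) (by decide) hwe' (by omega)
      (fun f => cc_zero_of (by decide) (by decide) f) hF hK hδ ho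
  have e1 : cc 1 0 (X 1 : PR K 2) = Polynomial.X := cc_i (by decide)
  have e2 : cc 0 2 (X 2 : PR K 2) = 1 := cc_j (by decide)
  have key := core3 (c0 := 1) hw rfl hQt hQ hX hd hs ha2 (by omega) (by omega)
    (hRel (ψ := cf 1 0 2 + cf 0 2 a2) (by omega) hwe fun f => by
      rw [LinearMap.add_apply, cf_mul_zero, cf_mul_zero, add_zero]
      · rw [map_mul, cc_k (i := 0) (j := 2) (k := 1) (by decide) (by decide), zero_mul]
      · rw [map_mul, cc_k (i := 1) (j := 0) (k := 2) (by decide) (by decide), mul_zero]) rfl rfl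
    (fun hK => by
      have := B1 (isHomogeneous_one _ _) hK (δ := 1) (by omega) (by rw [mul_one, e1]; exact Ord_X)
      omega)
    (fun hK => by
      have := B1 ell_hom hK (δ := 1) (by omega) (by rw [map_mul, e1, c10_ell]; exact Ord_X.mul ord_e2)
      omega)
    (fun n hn hK => by
      obtain ⟨δ, h1, h2⟩ := Ord_lin (n 1) (n 0) hn.symm
      have := B1 (ell_mulhom (linP_hom n)) hK (δ := 1 + δ) (by omega)
        (by rw [map_mul, map_mul, e1, c10_ell, c10_lin]; exact Ord_X.mul (h2.mul ord_e2))
      omega)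
    (fun hK => by
      have := B2 (isHomogeneous_one _ _) hK (δ := 0) (by omega) (by rw [mul_one, e2]; exact Ord_one)
      omega)
    (fun hK => by
      have := B2 ell_hom hK (δ := 0) (by omega) (by rw [map_mul, e2, one_mul, c02_ell]; exact ord_e1)
      omega)
    (fun n hn hK => by
      obtain ⟨δ, h1, h2⟩ := Ord_lin (n 0) (n 2) hn
      have := B2 (ell_mulhom (linP_hom n)) hK (δ := δ) (by omega)
        (by rw [map_mul, map_mul, e2, one_mul, c02_ell, c02_lin]; exact h2.mul ord_e1)
      omega)
    (fun q hq hK => by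
      by_cases h : q 0 = 0 ∧ q 3 = 0
      · by_cases h' : q 4 ≠ 0 ∨ q 2 ≠ 0
        · obtain ⟨δ, h1, h2⟩ := Ord_lin (q 4) (q 2) h'
          have := B2 (ell_mulhom (conP_hom q)) hK (δ := δ) (by omega)
            (by
              rw [map_mul, map_mul, e2, one_mul, c02_ell, c02_con, h.1, Polynomial.C_0, zero_mul, zero_add]
              exact h2.mul ord_e1)
          omega
        · push Not at h'
          left
          refine ⟨![0, q 1, q 5], fun h0 => hq ?_, KZ_div 1 (by simp) (fun x => ?_) hK⟩
          · have a1 := congrFun h0 1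
            have a3 := congrFun h0 2
            simp at a1 a3
            ext i; fin_cases i <;> simp [h, h', a1, a3]
          · rw [eval_conP, eval_linP, h.1, h.2, h'.1, h'.2]; simp; ring
      · obtain ⟨ρ, h1, h2⟩ : ∃ ρ ≤ 1, Ord (cc 1 0 (conP q)) ρ := by
          rw [c10_con]
          by_cases h0 : q 0 = 0
          · refine ⟨1, le_rfl, Ord.iff.2 ⟨Polynomial.C (q 1) * Polynomial.X + Polynomial.C (q 3), ?_, ?_⟩⟩
            · rw [h0, Polynomial.C_0]; ring
            · simpa using fun h3 => h ⟨h0, h3⟩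
          · exact ⟨0, by omega, Ord_zero (by simpa)⟩
        have := B1 (ell_mulhom (conP_hom q)) hK (δ := 1 + ρ) (by omega)
          (by rw [map_mul, map_mul, e1, c10_ell]; exact Ord_X.mul (h2.mul ord_e2))
        omega)
  omega

end GG

end

noncomputable section
open scoped LinearAlgebra.Projectivization
open MvPolynomial
namespace GG
variable {K : Type} [Field K]

lemma low2 {d s t a n : ℕ} {wG : Pm K 2 →₀ K} (hQt : wG.support.card = t)
    (hQ : ∀ q ∈ wG.support, q.rep 1 ≠ 0 ∧ q.rep 2 ≠ 0 ∧ eval q.rep ell = 0)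
    (hd : 2 * s + 2 ≤ d) (hs : s = 1 + a + t) (ha : 1 ≤ a)
    (h : RkLE (cf 0 1 a + EV wG) d n) : d + 1 + t ≤ n + a := by
  classical
  obtain ⟨wS, hn, hS⟩ := h
  by_contra hcon
  obtain ⟨w, hw⟩ : ∃ w, w = wS - wG := ⟨_, rfl⟩
  have hwe : ∀ f : PR K 2, f.IsHomogeneous d → cf 0 1 a f + (0 : PR K 2 →ₗ[K] K) f = EV w f := by
    intro f hf
    have := hS f hf
    simp only [LinearMap.add_apply] at this
    rw [hw, EV_sub, LinearMap.sub_apply, ← this, LinearMap.zero_apply]; ring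
  have hmem : ∀ p ∈ w.support, p ∉ wG.support → p ∈ wS.support := by
    intro p hp hp2
    rw [Finsupp.mem_support_iff] at hp ⊢
    rw [Finsupp.notMem_support_iff] at hp2
    rw [hw, Finsupp.sub_apply, hp2, sub_zero] at hp
    exact hp
  have hR : ∀ {e : ℕ} {F : PR K 2}, F.IsHomogeneous e → 1 + e ≤ d → Rel (mulW w (X 2 * F)) (d - (1 + e)) := by
    intro e F hF hed f hf
    rw [EV_mulW, ← hwe, LinearMap.zero_apply, add_zero, cf_mul_zero]
    · rw [map_mul, cc_k (i := 0) (j := 1) (k := 2) (by decide) (by decide), zero_mul]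
    · have := ((isHomogeneous_X K (2 : Fin 3)).mul hF).mul hf
      convert this using 1; omega
  -- length estimate
  have hL : ∀ {e δ : ℕ} {E : PR K 2}, E.IsHomogeneous e → δ ≤ a → Ord (cc 0 1 E) δ →
      (∀ p ∈ w.support, p.rep 2 ≠ 0 → eval p.rep E = 0) →
      d + 1 ≤ (wS.support.filter (fun p => p.rep 2 = 0)).card + e + (a - δ) := by
    intro e δ E hE hδ ho hz
    refine (len (i := 0) (j := 1) (by decide) hwe ha hE hδ ho.1 ho.2 (fun f => rfl) ?_).trans ?_
    · intro p hp hp2 l h1 h2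
      have : l = 2 := by revert l; decide
      rw [this]
      by_contra h3
      exact hp2 (hz p hp h3)
    · gcongr
      intro p hp
      rw [Finset.mem_filter] at hp ⊢
      have h2 : p.rep 2 = 0 := by
        by_contra h3
        exact hp.2.1 (hz p hp.1 h3)
      exact ⟨hmem p hp.1 fun h => (hQ p h).2.1 h2, h2⟩
  have hsum := Finset.card_filter_add_card_filter_not (s := wS.support) (fun p => p.rep 2 = 0)
  have hA := hR ell_hom (by omega)
  have hAsub : (mulW w (X 2 * ell)).support ⊆ wS.support.filter (fun p => ¬ p.rep 2 = 0) := by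
    intro p hp
    rw [mem_mulW, map_mul, eval_X] at hp
    rw [Finset.mem_filter]
    exact ⟨hmem p hp.1 fun h => by simp [(hQ p h).2.2] at hp, left_ne_zero_of_mul hp.2⟩
  have hAc := Finset.card_le_card hAsub
  rcases (mulW w (X 2 * ell)).support.eq_empty_or_nonempty with he | ⟨p, hp⟩
  · have hl : ∀ p ∈ w.support, p.rep 2 ≠ 0 → eval p.rep ell = 0 := by
      intro p hp h2
      by_contra h3
      have : p ∈ (mulW w (X 2 * ell)).support := by
        rw [mem_mulW, map_mul, eval_X]; exact ⟨hp, mul_ne_zero h2 h3⟩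
      rw [he] at this
      simp at this
    have hB := hR (isHomogeneous_one _ _) (by omega)
    rcases (mulW w (X 2 * 1)).support.eq_empty_or_nonempty with he' | ⟨p, hp⟩
    · have hl' : ∀ p ∈ w.support, p.rep 2 = 0 := by
        intro p hp
        by_contra h2
        have : p ∈ (mulW w (X 2 * 1)).support := by
          rw [mem_mulW, map_mul, eval_X]; exact ⟨hp, mul_ne_zero h2 (by simp)⟩
        rw [he'] at this
        simp at this
      have := hL (isHomogeneous_one _ _) (Nat.zero_le a) (by rw [map_one]; exact Ord_one)
        (fun p hp h => absurd (hl' p hp) h)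
      have hQS : wG.support ⊆ wS.support.filter (fun p => ¬ p.rep 2 = 0) := by
        intro q hq
        rw [Finset.mem_filter]
        refine ⟨?_, (hQ q hq).2.1⟩
        have h1 : w q = 0 := by
          by_contra h1
          exact (hQ q hq).2.1 (hl' q (Finsupp.mem_support_iff.2 h1))
        rw [hw, Finsupp.sub_apply, sub_eq_zero] at h1
        rw [Finsupp.mem_support_iff] at hq ⊢
        rwa [h1]
      have := Finset.card_le_card hQS
      omega
    · have h1 := N1_card hB hp
      have h2 : (mulW w (X 2 * 1)).support ⊆ wG.support ∪ wS.support.filter (fun p => ¬ p.rep 2 = 0) := by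
        intro p hp
        rw [mem_mulW, map_mul, eval_X] at hp
        rw [Finset.mem_union, Finset.mem_filter]
        by_cases h : p ∈ wG.support
        · exact Or.inl h
        · exact Or.inr ⟨hmem p hp.1 h, left_ne_zero_of_mul hp.2⟩
      have h3 := (Finset.card_le_card h2).trans (Finset.card_union_le _ _)
      have := hL ell_hom (Nat.zero_le a) (by rw [c01_ell]; exact ord_e1) hl
      omega
  · have h1 := N1_card hA hp
    obtain ⟨ν, hν, hν'⟩ := line3' hA (by omega)
    have hν2 : ν 0 ≠ 0 ∨ ν 1 ≠ 0 := by
      by_contra hc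
      push Not at hc
      have h2 := hν' p hp
      rw [eval_linP, hc.1, hc.2, zero_mul, zero_mul, zero_add, zero_add] at h2
      rw [mem_mulW, map_mul, eval_X] at hp
      have h3 := (mul_eq_zero.1 h2).resolve_right (left_ne_zero_of_mul hp.2)
      apply hν
      ext i; fin_cases i <;> simp [hc, h3]
    obtain ⟨δ, h4, h5⟩ := Ord_lin _ _ hν2
    have := hL (ell_mulhom (linP_hom ν)) (h4.trans ha)
      (by rw [map_mul, c01_ell, c01_lin]; exact h5.mul ord_e1) (fun p hp h2 => by
        rw [map_mul]
        by_cases h3 : eval p.rep ell = 0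
        · rw [h3, mul_zero]
        · rw [hν' p (by rw [mem_mulW, map_mul, eval_X]; exact ⟨hp, mul_ne_zero h2 h3⟩), zero_mul])
    omega

end GG

end

noncomputable section
open scoped LinearAlgebra.Projectivization
namespace GG
open Polynomial
variable {K : Type} [Field K]

lemma ch_coeff_top {m d : ℕ} [CharZero K] (u v : Fin (m+1) → K) {f : PR K m} (hf : f.IsHomogeneous d) :
    (ch u v f).coeff d = MvPolynomial.eval v f := by
  have key : reflect d (ch u v f) = ch v u f := by
    apply Polynomial.eq_of_infinite_eval_eq
    apply Set.Infinite.mono (s := {0}ᶜ)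
    · intro x hx
      have hx : x ≠ 0 := hx
      have h1 := refl_eval (inv_ne_zero hx) (natDegree_ch u v hf)
      rw [inv_inv, eval_ch] at h1
      have h2 : u + x⁻¹ • v = x⁻¹ • (v + x • u) := by
        rw [smul_add, smul_smul, inv_mul_cancel₀ hx, one_smul, add_comm (x⁻¹ • v) u]
      rw [h2, eval_smul_hom hf, mul_comm] at h1
      have := mul_left_cancel₀ (pow_ne_zero d (inv_ne_zero hx)) h1
      rw [Set.mem_ofPred_eq, this, eval_ch]
    · exact (Set.finite_singleton (0 : K)).infinite_compl
  have h := congrArg (fun p => coeff p 0) key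
  simp only [coeff_reflect] at h
  rw [revAt_le (Nat.zero_le d), Nat.sub_zero] at h
  rw [h, coeff_zero_eq_eval_zero, eval_ch]; simp

lemma ch_coeff_zero {m : ℕ} (u v : Fin (m+1) → K) (f : PR K m) :
    (ch u v f).coeff 0 = MvPolynomial.eval u f := by
  rw [coeff_zero_eq_eval_zero, eval_ch]; simp

lemma roots_B [CharZero K] [IsAlgClosed K] {k : ℕ} (hk : 1 ≤ k) {c : K} (hc : c ≠ 0) :
    ∃ B : Finset K, B.card = k ∧ ∏ b ∈ B, (X - C b) = X ^ k - C c := by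
  classical
  have hs : (X ^ k - C c).Separable :=
    separable_X_pow_sub_C c (by exact_mod_cast (by omega : k ≠ 0)) hc
  have hm : (X ^ k - C c).Monic := monic_X_pow_sub_C c (by omega)
  have h1 := (IsAlgClosed.splits (X ^ k - C c)).eq_prod_roots
  rw [hm.leadingCoeff, C_1, one_mul] at h1
  have h2 : ∏ b ∈ (X ^ k - C c).roots.toFinset, (X - C b) = X ^ k - C c := by
    conv_rhs => rw [h1]
    rw [Finset.prod, Multiset.toFinset_val, (nodup_roots hs).dedup]
  refine ⟨_, ?_, h2⟩
  have := congrArg natDegree h2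
  rw [natDegree_prod_of_monic _ _ fun b _ => monic_X_sub_C b, natDegree_X_pow_sub_C] at this
  simpa using this

lemma rk_gen [CharZero K] [IsAlgClosed K] {m d k : ℕ} (u v : Fin (m+1) → K) (hd : 1 ≤ d) (hk : 1 ≤ k) {c : K}
    (hc : c ≠ 0) {Λ : K[X] →ₗ[K] K} (h : Kill Λ (X ^ k - C c) d) : RkLE (bin u v Λ) d k := by
  obtain ⟨B, h1, h2⟩ := roots_B hk hc
  rw [← h1]
  exact rank_lemma u v hd B (by rwa [h2])

lemma rk_solo [CharZero K] [IsAlgClosed K] (i j : Fin 3) {a d : ℕ} (h1 : 2 * a ≤ d) (ha : 1 ≤ a) :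
    RkLE (cf i j a : PR K 2 →ₗ[K] K) d (d + 1 - a) := by
  refine rk_gen _ _ (by omega) (by omega) one_ne_zero fun f hf => ?_
  rw [natDegree_X_pow_sub_C] at hf
  rw [lcoeff_apply, sub_mul, coeff_sub, coeff_X_pow_mul', if_neg (by omega), C_1, one_mul,
    coeff_eq_zero_of_natDegree_lt (by omega), sub_zero]

lemma rk_ev [CharZero K] [IsAlgClosed K] (i j : Fin 3) {a d : ℕ} (h1 : 2 * a < d) {c : K} (hc : c ≠ 0) :
    RkLE (cf i j a + c • ev (Pi.single i 1) : PR K 2 →ₗ[K] K) d (d - a) := by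
  have : RkLE (bin (Pi.single j 1 : Fin 3 → K) (Pi.single i 1) (lcoeff K a + c • lcoeff K d)) d (d - a) := by
    refine rk_gen (m := 2) _ _ (by omega) (by omega) hc fun f hf => ?_
    rw [natDegree_X_pow_sub_C] at hf
    have e1 : d - (d - a) = a := by omega
    simp only [LinearMap.add_apply, LinearMap.smul_apply, lcoeff_apply, sub_mul, coeff_sub, coeff_C_mul, smul_eq_mul]
    rw [coeff_X_pow_mul', coeff_X_pow_mul', if_neg (by omega), if_pos (by omega),
      coeff_eq_zero_of_natDegree_lt (n := d) (by omega), e1]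
    ring
  refine this.congr fun f hf => ?_
  rw [bin_apply]
  simp only [LinearMap.add_apply, LinearMap.smul_apply, lcoeff_apply]
  rw [ch_coeff_top _ _ hf, ev_apply]; rfl

lemma br_cf [CharZero K] [IsAlgClosed K] (i j : Fin 3) {a d : ℕ} (hd : 1 ≤ d) :
    BrLE (cf i j a : PR K 2 →ₗ[K] K) d (a + 1) := by
  refine border_monic _ _ hd (monic_X_pow (a + 1)) (natDegree_X_pow _) fun f hf => ?_
  rw [lcoeff_apply, coeff_X_pow_mul', if_neg (by omega)]

lemma br_o [CharZero K] [IsAlgClosed K] {d : ℕ} (hd : 1 ≤ d) :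
    BrLE (cf 1 0 2 + ev (Pi.single 0 1) : PR K 2 →ₗ[K] K) d 3 := by
  have : BrLE (bin (Pi.single 0 1 : Fin 3 → K) (Pi.single 1 1) (lcoeff K 2 + lcoeff K 0)) d 3 := by
    refine border_monic (m := 2) _ _ hd (monic_X_pow 3) (natDegree_X_pow _) fun f hf => ?_
    simp only [LinearMap.add_apply, lcoeff_apply]
    rw [coeff_X_pow_mul', if_neg (by omega), coeff_X_pow_mul', if_neg (by omega), add_zero]
  refine this.congr fun f hf => ?_
  rw [bin_apply]
  simp only [LinearMap.add_apply, lcoeff_apply]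
  rw [ch_coeff_zero, ev_apply]; rfl

section totals
variable [CharZero K] [IsAlgClosed K] {d a2 t : ℕ} {wG : Pm K 2 →₀ K}

lemma rkG (hQt : wG.support.card = t) : RkLE (EV wG) d t := ⟨wG, hQt.le, fun _ _ => rfl⟩

lemma up3e (hd : 2 * a2 + 5 ≤ d) (hQt : wG.support.card = t) :
    RkLE (cf 0 1 2 + cf 0 2 a2 + EV wG) d (d - 2 + (d - a2) + t) := by
  refine (((rk_ev 0 1 (a := 2) (by omega) one_ne_zero).add
    (rk_ev 0 2 (a := a2) (by omega) (c := -1) (by simp))).add (rkG hQt)).congr fun f _ => ?_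
  simp only [LinearMap.add_apply, LinearMap.smul_apply, smul_eq_mul]; ring

lemma up3o (hd : 2 * a2 + 5 ≤ d) (hQt : wG.support.card = t) :
    RkLE (cf 1 0 2 + cf 0 2 a2 + ev (Pi.single 0 1) + EV wG) d (d - 1 + (d - a2) + t) := by
  refine ((((rk_solo 1 0 (a := 2) (d := d) (by omega) (by omega)).mono (by omega)).add
    (rk_ev 0 2 (a := a2) (by omega) (c := 1) (by simp))).add (rkG hQt)).congr fun f _ => ?_
  simp only [LinearMap.add_apply, LinearMap.smul_apply, smul_eq_mul]; ring

lemma br3e (hd : 1 ≤ d) (hQt : wG.support.card = t) :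
    BrLE (cf 0 1 2 + cf 0 2 a2 + EV wG) d (3 + (a2 + 1) + t) :=
  ((br_cf 0 1 hd).add (br_cf 0 2 hd)).add (rkG hQt).brLE

lemma br3o (hd : 1 ≤ d) (hQt : wG.support.card = t) :
    BrLE (cf 1 0 2 + cf 0 2 a2 + ev (Pi.single 0 1) + EV wG) d (3 + (a2 + 1) + t) := by
  refine (((br_o hd).add (br_cf 0 2 (a := a2) hd)).add (rkG hQt).brLE).congr fun f _ => ?_
  simp only [LinearMap.add_apply]; ring
end totals

end GG

end

noncomputable section
open scoped LinearAlgebra.Projectivization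
open MvPolynomial
namespace GG
variable {K : Type} [Field K]

/-- Certificate for lower bounds. -/
def Cert {m : ℕ} (φ : PR K m →ₗ[K] K) (J : PR K m) (d k n : ℕ) : Prop :=
  ∃ (ι : Type) (_ : Fintype ι) (_ : DecidableEq ι) (G H : ι → PR K m),
    (∀ i, (G i).IsHomogeneous k) ∧ (∀ i, (H i).IsHomogeneous (d - k)) ∧
    (∀ i, J ∣ G i) ∧ (∀ i, J ∣ H i) ∧ Fintype.card ι = n ∧
    (Matrix.of fun i j => φ (G i * H j)).det ≠ 0

lemma Cert.add {m : ℕ} {φ ψ : PR K m →ₗ[K] K} {J J1 J2 : PR K m} {d k n1 n2 : ℕ}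
    (h1 : Cert φ J1 d k n1) (h2 : Cert ψ J2 d k n2) (h12 : ∀ f, φ (J2 * f) = 0)
    (h21 : ∀ f, ψ (J1 * f) = 0) (e1 : J ∣ J1) (e2 : J ∣ J2) : Cert (φ + ψ) J d k (n1 + n2) := by
  obtain ⟨ι, _, _, G, H, a1, a2, a3, a4, a5, a6⟩ := h1
  obtain ⟨κ, _, _, G', H', b1, b2, b3, b4, b5, b6⟩ := h2
  have k12 : ∀ g, J2 ∣ g → φ g = 0 := by rintro _ ⟨f, rfl⟩; exact h12 f
  have k21 : ∀ g, J1 ∣ g → ψ g = 0 := by rintro _ ⟨f, rfl⟩; exact h21 f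
  refine ⟨ι ⊕ κ, inferInstance, inferInstance, Sum.elim G G', Sum.elim H H', ?_, ?_, ?_, ?_, ?_, ?_⟩
  · rintro (i | i); exacts [a1 i, b1 i]
  · rintro (i | i); exacts [a2 i, b2 i]
  · rintro (i | i); exacts [e1.trans (a3 i), e2.trans (b3 i)]
  · rintro (i | i); exacts [e1.trans (a4 i), e2.trans (b4 i)]
  · rw [Fintype.card_sum, a5, b5]
  · have : (Matrix.of fun i j => (φ + ψ) (Sum.elim G G' i * Sum.elim H H' j)) =
        Matrix.fromBlocks (Matrix.of fun i j => φ (G i * H j)) 0 0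
          (Matrix.of fun i j => ψ (G' i * H' j)) := by
      ext (i | i) (j | j)
      · simp [k21 _ ((a3 i).mul_right (H j))]
      · simp [k21 _ ((a3 i).mul_right (H' j)), k12 _ ((b4 j).mul_left (G i))]
      · simp [k12 _ ((b3 i).mul_right (H j)), k21 _ ((a4 j).mul_left (G' i))]
      · simp [k12 _ ((b3 i).mul_right (H' j))]
    rw [this, Matrix.det_fromBlocks_zero₂₁]
    exact mul_ne_zero a6 b6

lemma cert_bin {i j : Fin 3} (hij : i ≠ j) {a d k e : ℕ} {φ : PR K 2 →ₗ[K] K}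
    {Λ : Polynomial K →ₗ[K] K} (hφ : ∀ f, φ f = Λ (cc i j f))
    (hΛ : ∀ p, Λ (Polynomial.X ^ a * p) = p.coeff 0) {J : PR K 2} (hJ : J.IsHomogeneous e)
    (hJ0 : (cc i j J).coeff 0 ≠ 0) (h1 : e + a ≤ k) (h2 : e + a + k ≤ d) : Cert φ J d k (a + 1) := by
  refine ⟨Fin (a+1), inferInstance, inferInstance,
    fun l => J * (X i ^ (l : ℕ) * X j ^ (k - e - l)),
    fun l => J * (X i ^ (a - l) * X j ^ (d - k - e - (a - l))), ?_, ?_, ?_, ?_, ?_, ?_⟩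
  · intro l
    have := hJ.mul ((isHomogeneous_X_pow (R := K) i (l : ℕ)).mul
      (isHomogeneous_X_pow (R := K) j (k - e - l)))
    convert this using 1; omega
  · intro l
    have := hJ.mul ((isHomogeneous_X_pow (R := K) i (a - l : ℕ)).mul
      (isHomogeneous_X_pow (R := K) j (d - k - e - (a - l))))
    convert this using 1; omega
  · intro l; exact dvd_mul_right _ _
  · intro l; exact dvd_mul_right _ _
  · simp
  · have hM : ∀ l l' : Fin (a+1), l' ≤ l → φ (J * (X i ^ (l : ℕ) * X j ^ (k - e - l)) *
        (J * (X i ^ (a - l' : ℕ) * X j ^ (d - k - e - (a - l'))))) =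
        (Polynomial.X ^ (l - l' : ℕ) * (cc i j J * cc i j J)).coeff 0 := by
      intro l l' hll
      rw [hφ, ← hΛ]
      congr 1
      simp only [map_mul, map_pow, cc_i hij, cc_j hij, one_pow, mul_one]
      have : a + (l - l' : ℕ) = l + (a - l') := by
        have := Fin.le_def.1 hll; omega
      have h3 : (Polynomial.X ^ a * Polynomial.X ^ (l - l' : ℕ) : Polynomial K) =
          Polynomial.X ^ (l : ℕ) * Polynomial.X ^ (a - l' : ℕ) := by
        rw [← pow_add, this, pow_add]
      linear_combination - (cc i j J * cc i j J) * h3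
    rw [Matrix.det_of_isUpperTriangular]
    · apply Finset.prod_ne_zero_iff.2
      intro l _
      rw [Matrix.of_apply, hM l l le_rfl, Nat.sub_self, pow_zero, one_mul, Polynomial.mul_coeff_zero]
      exact mul_ne_zero hJ0 hJ0
    · intro l l' hll
      have hll : l' < l := hll
      rw [Matrix.of_apply, hM l l' hll.le, Polynomial.mul_coeff_zero, Polynomial.coeff_X_pow,
        if_neg (by have := Fin.lt_def.1 hll; omega), zero_mul]

def Good (wG : Pm K 2 →₀ K) : Prop :=
  ∀ q ∈ wG.support, q.rep 0 ≠ 0 ∧ q.rep 1 ≠ 0 ∧ q.rep 2 ≠ 0 ∧ eval q.rep ell = 0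

lemma cert_pts {wG : Pm K 2 →₀ K} (hQ : Good wG) {d k e t : ℕ} (hQt : wG.support.card = t)
    {J : PR K 2} (hJ : J.IsHomogeneous e) (hJ0 : ∀ q ∈ wG.support, eval q.rep J ≠ 0)
    (h1 : e + t ≤ k + 1) (h2 : e + t + k ≤ d + 1) : Cert (EV wG) J d k t := by
  classical
  let lam : Pm K 2 → PR K 2 := fun p => C (p.rep 0) * X 1 - C (p.rep 1) * X 0
  have hlam : ∀ p, (lam p).IsHomogeneous 1 := fun p => by
    apply IsHomogeneous.sub
    · simpa using (isHomogeneous_C _ (p.rep 0)).mul (isHomogeneous_X K (1 : Fin 3))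
    · simpa using (isHomogeneous_C _ (p.rep 1)).mul (isHomogeneous_X K (0 : Fin 3))
  have hlam0 : ∀ p, eval p.rep (lam p) = 0 := fun p => by simp [lam]; ring
  have hlam1 : ∀ p ∈ wG.support, ∀ q ∈ wG.support, p ≠ q → eval p.rep (lam q) ≠ 0 := by
    intro p hp q hq hpq h
    apply hpq
    obtain ⟨p0, -, -, pl⟩ := hQ p hp
    obtain ⟨q0, -, -, ql⟩ := hQ q hq
    simp [lam] at h
    simp [ell] at pl ql
    apply rep_mem_span
    rw [Submodule.mem_span_singleton]
    refine ⟨p.rep 0 / q.rep 0, ?_⟩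
    have e1 : p.rep 1 = p.rep 0 / q.rep 0 * q.rep 1 := by
      field_simp; linear_combination h
    have e2 : p.rep 2 = p.rep 0 / q.rep 0 * q.rep 2 := by
      have : q.rep 2 = q.rep 0 - q.rep 1 := by linear_combination -ql
      rw [this, mul_sub, ← e1, div_mul_cancel₀ _ q0]; linear_combination -pl
    ext i; fin_cases i
    · simp [q0]
    · simpa using e1.symm
    · simpa using e2.symm
  let F : Pm K 2 → ℕ → PR K 2 := fun q n => J * ((∏ p ∈ wG.support.erase q, lam p) * X 0 ^ n)
  have hF : ∀ q ∈ wG.support, ∀ n, e + t ≤ n + 1 → (F q (n - e - (t - 1))).IsHomogeneous n := by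
    intro q hq n hn
    have := hJ.mul ((prod_hom (wG.support.erase q) lam fun p _ => hlam p).mul
      (isHomogeneous_X_pow (R := K) (0 : Fin 3) (n - e - (t - 1))))
    rw [Finset.card_erase_of_mem hq, hQt] at this
    have h0 : 1 ≤ t := by rw [← hQt]; exact Finset.card_pos.2 ⟨q, hq⟩
    convert this using 1; omega
  have hF0 : ∀ q, ∀ n, ∀ p ∈ wG.support, p ≠ q → eval p.rep (F q n) = 0 := by
    intro q n p hp hpq
    simp only [F, map_mul, map_prod]
    rw [Finset.prod_eq_zero (Finset.mem_erase.2 ⟨hpq, hp⟩) (hlam0 p)]; ring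
  have hF1 : ∀ q ∈ wG.support, ∀ n, eval q.rep (F q n) ≠ 0 := by
    intro q hq n
    simp only [F, map_mul, map_prod]
    refine mul_ne_zero (hJ0 q hq) (mul_ne_zero (Finset.prod_ne_zero_iff.2 fun p hp => ?_) ?_)
    · rw [Finset.mem_erase] at hp
      exact hlam1 q hq p hp.2 hp.1.symm
    · rw [map_pow, eval_X]; exact pow_ne_zero _ (hQ q hq).1
  refine ⟨wG.support, inferInstance, inferInstance, fun q => F q (k - e - (t - 1)),
    fun q => F q (d - k - e - (t - 1)), fun q => hF q q.2 k h1, fun q => hF q q.2 (d - k) ?_,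
    fun q => dvd_mul_right _ _, fun q => dvd_mul_right _ _, by simpa using hQt, ?_⟩
  · omega
  · have : (Matrix.of fun i j : wG.support => EV wG (F i (k - e - (t - 1)) * F j (d - k - e - (t - 1)))) =
        Matrix.diagonal fun q : wG.support => wG q * (eval q.1.rep (F q (k - e - (t - 1))) *
          eval q.1.rep (F q (d - k - e - (t - 1)))) := by
      ext i j
      rw [Matrix.of_apply, EV_apply, Finset.sum_eq_single_of_mem i.1 i.2]
      · by_cases hij : i = j
        · subst hij; rw [Matrix.diagonal_apply_eq, map_mul]
        · rw [Matrix.diagonal_apply_ne _ hij, map_mul, hF0 j _ i.1 i.2 (fun h => hij (Subtype.ext h))]; ring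
      · intro p hp hpi
        rw [map_mul, hF0 i _ p hp hpi]; ring
    rw [this, Matrix.det_diagonal]
    refine Finset.prod_ne_zero_iff.2 fun q _ => mul_ne_zero (Finsupp.mem_support_iff.1 q.2)
      (mul_ne_zero (hF1 q q.2 _) (hF1 q q.2 _))

lemma exists_good [CharZero K] (t : ℕ) : ∃ wG : Pm K 2 →₀ K, wG.support.card = t ∧ Good wG := by
  classical
  have hne : ∀ n : ℕ, (![1, (n : K) + 2, -1 - n] : Fin 3 → K) ≠ 0 := by
    intro n h; have := congrFun h 0; simp at this
  let f : ℕ → Pm K 2 := fun n => Projectivization.mk K _ (hne n)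
  have hf : Function.Injective f := by
    intro n n' h
    obtain ⟨c, hc⟩ := (Projectivization.mk_eq_mk_iff' K _ _ (hne n) (hne n')).1 h
    have h0 := congrFun hc 0
    have h1 := congrFun hc 1
    simp at h0 h1
    rw [h0, one_mul] at h1
    have : (n' : K) = n := by linear_combination h1
    exact_mod_cast this.symm
  let Q := (Finset.range t).image f
  refine ⟨Finsupp.onFinset Q (fun q => if q ∈ Q then 1 else 0) (by intro a ha; by_contra h; simp [h] at ha), ?_, ?_⟩
  · have : (Finsupp.onFinset Q (fun q => if q ∈ Q then (1 : K) else 0) (by intro a ha; by_contra h; simp [h] at ha)).support = Q := by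
      ext q; simp
    rw [this, Finset.card_image_of_injective _ hf, Finset.card_range]
  · intro q hq
    have hq : q ∈ Q := by
      by_contra h; simp [h] at hq
    obtain ⟨n, -, rfl⟩ := Finset.mem_image.1 hq
    obtain ⟨κ, hκ⟩ := Projectivization.exists_smul_eq_mk_rep K _ (hne n)
    simp only [f]
    rw [← hκ]
    have h1 : (n : K) + 2 ≠ 0 := by exact_mod_cast (by omega : n + 2 ≠ 0)
    have h2 : -1 - (n : K) ≠ 0 := by
      have : (n : K) + 1 ≠ 0 := by exact_mod_cast (by omega : n + 1 ≠ 0)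
      intro h; apply this; linear_combination -h
    refine ⟨?_, ?_, ?_, ?_⟩
    · simp [Units.smul_def]
    · simpa [Units.smul_def, mul_add] using mul_ne_zero κ.ne_zero h1
    · simp [Units.smul_def, h2]
    · simp [Units.smul_def, ell]; ring

end GG

end

noncomputable section
open scoped LinearAlgebra.Projectivization
open MvPolynomial
namespace GG
variable {K : Type} [Field K]

def pj (K : Type) [Field K] (m : ℕ) : PR K m →ₐ[K] PR K 2 :=
  aeval (fun i : Fin (m+1) => if h : i.1 < 3 then X ⟨i.1, h⟩ else 0)

lemma pj_hom {m d : ℕ} {f : PR K m} (hf : f.IsHomogeneous d) : (pj K m f).IsHomogeneous d := by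
  have := hf.aeval (S := K) (fun i : Fin (m+1) => if h : i.1 < 3 then (X ⟨i.1, h⟩ : PR K 2) else 0) (n := 1)
    (fun i => by
      split_ifs
      · exact isHomogeneous_X _ _
      · exact isHomogeneous_zero _ _ _)
  rwa [one_mul] at this

lemma pj_rename {m : ℕ} (hm : 3 ≤ m + 1) (f : PR K 2) : pj K m (rename (Fin.castLE hm) f) = f := by
  have : (pj K m).comp (rename (Fin.castLE hm)) = AlgHom.id K (PR K 2) := by
    ext i; simp [pj]
  exact AlgHom.congr_fun this f

lemma eval_pj {m : ℕ} (v : Fin 3 → K) (f : PR K m) :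
    eval v (pj K m f) = eval (fun i : Fin (m+1) => if h : i.1 < 3 then v ⟨i.1, h⟩ else 0) f := by
  have : (aeval v : PR K 2 →ₐ[K] K).comp (pj K m) =
      aeval (fun i : Fin (m+1) => if h : i.1 < 3 then v ⟨i.1, h⟩ else 0) := by
    ext i
    simp only [pj, AlgHom.comp_apply, aeval_X]
    split_ifs <;> simp
  have := AlgHom.congr_fun this f
  simpa [aeval_eq_eval] using this

def lf (m : ℕ) (φ : PR K 2 →ₗ[K] K) : PR K m →ₗ[K] K := φ ∘ₗ (pj K m).toLinearMap

lemma lf_apply {m : ℕ} (φ : PR K 2 →ₗ[K] K) (f : PR K m) : lf m φ f = φ (pj K m f) := rfl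

lemma lf_rk {m d n : ℕ} (hd : 1 ≤ d) {φ : PR K 2 →ₗ[K] K} (h : RkLE φ d n) : RkLE (lf m φ) d n := by
  obtain ⟨w, h1, h2⟩ := h
  refine ((RkLE_sum w.support w (fun p => fun i : Fin (m+1) => if h : i.1 < 3 then p.rep ⟨i.1, h⟩ else 0)
    hd).mono h1).congr fun f hf => ?_
  rw [lf_apply, h2 _ (pj_hom hf), EV_apply, LinearMap.sum_apply]
  refine Finset.sum_congr rfl fun p _ => ?_
  rw [LinearMap.smul_apply, ev_apply, smul_eq_mul, eval_pj]

lemma lf_rk' {m d n : ℕ} (hm : 3 ≤ m + 1) (hd : 1 ≤ d) {φ : PR K 2 →ₗ[K] K} (h : RkLE (lf m φ) d n) :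
    RkLE φ d n := by
  obtain ⟨w, h1, h2⟩ := h
  refine ((RkLE_sum (m := 2) w.support w (fun p => p.rep ∘ Fin.castLE hm) hd).mono h1).congr fun f hf => ?_
  have := h2 _ (hf.rename_isHomogeneous (f := Fin.castLE hm))
  rw [lf_apply, pj_rename] at this
  rw [this, EV_apply, LinearMap.sum_apply]
  refine Finset.sum_congr rfl fun p _ => ?_
  rw [LinearMap.smul_apply, ev_apply, smul_eq_mul, eval_rename]

lemma lf_br {m d n : ℕ} (hd : 1 ≤ d) {φ : PR K 2 →ₗ[K] K} (h : BrLE φ d n) : BrLE (lf m φ) d n := by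
  obtain ⟨γ, h1, ⟨E, h2⟩, h3⟩ := h
  exact ⟨fun ε => lf m (γ ε), fun f hf => h1 _ (pj_hom hf), ⟨E, fun ε hε => lf_rk hd (h2 ε hε)⟩,
    fun f hf => h3 _ (pj_hom hf)⟩

lemma br_smul {m d n : ℕ} {φ : PR K m →ₗ[K] K} (h : BrLE φ d n) (c : K) : BrLE (c • φ) d n := by
  obtain ⟨γ, h1, ⟨E, h2⟩, h3⟩ := h
  refine ⟨fun ε => c • γ ε, fun f hf => ?_, ⟨E, fun ε hε => (h2 ε hε).smul c⟩,
    fun f hf => by rw [LinearMap.smul_apply, LinearMap.smul_apply, h3 f hf]⟩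
  obtain ⟨P, hP⟩ := h1 f hf
  exact ⟨Polynomial.C c * P, fun ε => by simp [hP]⟩

lemma realize [CharZero K] {m d s r k : ℕ} (hm : 2 ≤ m) (hk : k ≤ d) (hd : 1 ≤ d) (hs : 0 < s)
    {φ : PR K 2 →ₗ[K] K} {J : PR K 2} (hb : BrLE φ d s) (hr : RkLE φ d r)
    (hl : ∀ n, RkLE φ d n → r ≤ n) (hc : Cert φ J d k s) : (sigmaSet K m d s r).Nonempty := by
  have hm3 : 3 ≤ m + 1 := by omega
  obtain ⟨ι, _, _, G, H, a1, a2, -, -, a5, a6⟩ := hc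
  let G' : ι → PR K m := fun i => rename (Fin.castLE hm3) (G i)
  let H' : ι → PR K m := fun i => rename (Fin.castLE hm3) (H i)
  have hGH : ∀ i j, lf m φ (G' i * H' j) = φ (G i * H j) := by
    intro i j; rw [lf_apply, map_mul, pj_rename, pj_rename]
  have hG' : ∀ i, (G' i).IsHomogeneous k := fun i => (a1 i).rename_isHomogeneous
  have hH' : ∀ i, (H' i).IsHomogeneous (d - k) := fun i => (a2 i).rename_isHomogeneous
  have hne : res d (lf m φ) ≠ 0 := by
    intro h0
    apply a6
    have : Nonempty ι := Fintype.card_pos_iff.1 (by omega)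
    have : (Matrix.of fun i j => φ (G i * H j)) = 0 := by
      ext i j
      rw [Matrix.of_apply, ← hGH]
      have hh : (G' i * H' j).IsHomogeneous d := by
        have := (hG' i).mul (hH' j)
        convert this using 1; omega
      exact LinearMap.congr_fun h0 ⟨_, hh⟩
    rw [this, Matrix.det_zero]
  obtain ⟨c, hc⟩ := Projectivization.exists_smul_eq_mk_rep K _ hne
  have hφ : res d ((c : K) • lf m φ) = (Projectivization.mk K _ hne).rep := by
    rw [← hc, Units.smul_def]; rfl
  refine ⟨Projectivization.mk K _ hne, ?_, ?_⟩
  · have := brank_eq hk hφ (ι := ι) (by omega) (by rw [a5]; exact br_smul (lf_br hd hb) _) G' H' hG' hH' ?_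
    · rw [this, a5]
    · have e : (Matrix.of fun i j => ((c : K) • lf m φ) (G' i * H' j)) =
          (c : K) • (Matrix.of fun i j => φ (G i * H j)) := by
        ext i j; simp [hGH]
      rw [e, Matrix.det_smul]
      exact mul_ne_zero (pow_ne_zero _ c.ne_zero) a6
  · refine srank_eq hφ ((lf_rk hd hr).smul _) fun n hn => hl n (lf_rk' hm3 hd ?_)
    refine (hn.smul ((c⁻¹ : Kˣ) : K)).congr fun f _ => ?_
    simp

section assemble
variable [CharZero K] [IsAlgClosed K]

lemma Good.q {wG : Pm K 2 →₀ K} (h : Good wG) :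
    ∀ q ∈ wG.support, q.rep 1 ≠ 0 ∧ q.rep 2 ≠ 0 ∧ eval q.rep ell = 0 := fun q hq => (h q hq).2

lemma Good.kill {wG : Pm K 2 →₀ K} (h : Good wG) (f : PR K 2) : EV wG (ell * f) = 0 := by
  rw [EV_apply]
  refine Finset.sum_eq_zero fun q hq => ?_
  rw [map_mul, (h q hq).2.2.2]; ring

lemma lc (a : ℕ) (p : Polynomial K) : Polynomial.lcoeff K a (Polynomial.X ^ a * p) = p.coeff 0 := by
  rw [Polynomial.lcoeff_apply, Polynomial.coeff_X_pow_mul', if_pos le_rfl, Nat.sub_self]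

lemma case1 {m s d : ℕ} (hm : 2 ≤ m) (hs : 5 ≤ s) (hd : 2 * s + 2 ≤ d) :
    (sigmaSet K m d s s).Nonempty := by
  obtain ⟨wG, h1, h2⟩ := exists_good (K := K) s
  have hc : Cert (EV wG) 1 d s s := cert_pts h2 h1 (isHomogeneous_one _ _) (by simp) (by omega) (by omega)
  refine realize hm (k := s) (by omega) (by omega) (by omega) (rkG h1).brLE (rkG h1) (fun n hn => ?_) hc
  obtain ⟨ι, _, _, G, H, a1, a2, -, -, a5, a6⟩ := hc
  by_contra hlt
  exact a6 (det_of_rk (k := s) (by omega) hn (by omega) G H a1 a2)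

lemma case2 {m s d t a : ℕ} (hm : 2 ≤ m) (hd : 2 * s + 2 ≤ d) (hs : s = 1 + a + t)
    (ha : 1 ≤ a) : (sigmaSet K m d s (d + 1 - a + t)).Nonempty := by
  obtain ⟨wG, h1, h2⟩ := exists_good (K := K) t
  have c1 : Cert (cf 0 1 a : PR K 2 →ₗ[K] K) ell d s (a + 1) :=
    cert_bin (i := 0) (j := 1) (by decide) (cf_apply 0 1 a) (lc a) ell_hom
      (by rw [c01_ell]; simp) (by omega) (by omega)
  have c2 : Cert (EV wG) (X 2) d s t :=
    cert_pts h2 h1 (isHomogeneous_X _ _) (fun q hq => by rw [eval_X]; exact (h2 q hq).2.2.1)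
      (by omega) (by omega)
  have c3 := c1.add (J := 1) c2 (fun f => cc_zero_of (by decide) (by decide) f) h2.kill
    (one_dvd _) (one_dvd _)
  have e : a + 1 + t = s := by omega
  rw [e] at c3
  refine realize hm (k := s) (by omega) (by omega) (by omega) ?_
    ((rk_solo 0 1 (by omega) ha).add (rkG h1)) (fun n hn => ?_) c3
  · rw [← e]; exact (br_cf 0 1 (by omega)).add (rkG h1).brLE
  · have := low2 h1 h2.q hd hs ha hn
    omega

lemma cf_yz (a : ℕ) (f : PR K 2) : cf 0 2 a (X 1 * X 2 * f) = 0 := by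
  rw [mul_assoc]; exact cc_zero_of (by decide) (by decide) _
lemma cf_yz' (a : ℕ) (f : PR K 2) : cf 0 1 a (X 1 * X 2 * f) = 0 := by
  rw [mul_comm (X 1), mul_assoc]; exact cc_zero_of (by decide) (by decide) _
lemma cf_yz'' (a : ℕ) (f : PR K 2) : cf 1 0 a (X 1 * X 2 * f) = 0 := by
  rw [mul_comm (X 1), mul_assoc]; exact cc_zero_of (by decide) (by decide) _

lemma cert_yz {d s t : ℕ} {wG : Pm K 2 →₀ K} (h1 : wG.support.card = t) (h2 : Good wG)
    (h : t + 2 ≤ s) (hd : 2 * s + 2 ≤ d) : Cert (EV wG) (X 1 * X 2) d s t :=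
  cert_pts h2 h1 ((isHomogeneous_X _ _).mul (isHomogeneous_X _ _))
    (fun q hq => by
      rw [map_mul, eval_X, eval_X]; exact mul_ne_zero (h2 q hq).2.1 (h2 q hq).2.2.1)
      (by omega) (by omega)

lemma cert_L2 {d s a2 : ℕ} (h : a2 + 4 ≤ s) (hd : 2 * s + 2 ≤ d) :
    Cert (cf 0 2 a2 : PR K 2 →ₗ[K] K) (ell * X 2) d s (a2 + 1) :=
  cert_bin (i := 0) (j := 2) (by decide) (cf_apply 0 2 a2) (lc a2)
    (ell_hom.mul (isHomogeneous_X _ _))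
    (by rw [map_mul, c02_ell, cc_j (by decide)]; simp) (by omega) (by omega)

lemma case3e {m s d t a2 : ℕ} (hm : 2 ≤ m) (hd : 2 * s + 2 ≤ d) (hs : s = 4 + a2 + t)
    (ha : 1 ≤ a2) : (sigmaSet K m d s (d - 2 + (d - a2) + t)).Nonempty := by
  obtain ⟨wG, h1, h2⟩ := exists_good (K := K) t
  have c1 : Cert (cf 0 1 2 : PR K 2 →ₗ[K] K) (ell * X 1) d s (2 + 1) :=
    cert_bin (i := 0) (j := 1) (by decide) (cf_apply 0 1 2) (lc 2) (ell_hom.mul (isHomogeneous_X _ _))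
      (by rw [map_mul, c01_ell, cc_j (by decide)]; simp) (by omega) (by omega)
  have c2 : Cert (cf 0 1 2 + cf 0 2 a2 : PR K 2 →ₗ[K] K) ell d s (2 + 1 + (a2 + 1)) := by
    refine c1.add (cert_L2 (by omega) hd) (fun f => ?_) (fun f => ?_) (dvd_mul_right _ _) (dvd_mul_right _ _)
    · rw [mul_comm ell, mul_assoc]; exact cc_zero_of (by decide) (by decide) _
    · rw [mul_comm ell, mul_assoc]; exact cc_zero_of (by decide) (by decide) _
  have c3 := c2.add (J := 1) (cert_yz h1 h2 (by omega) hd)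
    (fun f => by rw [LinearMap.add_apply, cf_yz, cf_yz', add_zero]) h2.kill (one_dvd _) (one_dvd _)
  have e : 3 + (a2 + 1) + t = s := by omega
  rw [e] at c3
  refine realize hm (k := s) (by omega) (by omega) (by omega) ?_
    (up3e (by omega) h1) (fun n hn => ?_) c3
  · rw [← e]; exact br3e (by omega) h1
  · have := low3e h1 h2.q hd hs ha hn
    omega

lemma case3o {m s d t a2 : ℕ} (hm : 2 ≤ m) (hd : 2 * s + 2 ≤ d) (hs : s = 4 + a2 + t)
    (ha : 1 ≤ a2) : (sigmaSet K m d s (d - 1 + (d - a2) + t)).Nonempty := by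
  obtain ⟨wG, h1, h2⟩ := exists_good (K := K) t
  have c1 : Cert (cf 1 0 2 + ev (Pi.single 0 1) : PR K 2 →ₗ[K] K) (ell * X 0 ^ (a2 + 1)) d s (2 + 1) := by
    refine cert_bin (i := 1) (j := 0) (by decide) (Λ := Polynomial.lcoeff K 2 + Polynomial.lcoeff K 0)
      (fun f => ?_) (fun p => ?_) (ell_hom.mul (isHomogeneous_X_pow _ _)) ?_ ?_ ?_
    · rw [LinearMap.add_apply, LinearMap.add_apply, cf_apply, Polynomial.lcoeff_apply,
        Polynomial.lcoeff_apply, ev_apply, cc, ch_coeff_zero]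
    · rw [LinearMap.add_apply, lc, Polynomial.lcoeff_apply, Polynomial.mul_coeff_zero,
        Polynomial.coeff_X_pow, if_neg (by omega), zero_mul, add_zero]
    · rw [map_mul, map_pow, c10_ell, cc_j (by decide)]; simp
    · omega
    · omega
  have c2 : Cert (cf 1 0 2 + ev (Pi.single 0 1) + cf 0 2 a2 : PR K 2 →ₗ[K] K) ell d s (2 + 1 + (a2 + 1)) := by
    refine c1.add (cert_L2 (by omega) hd) (fun f => ?_) (fun f => ?_) (dvd_mul_right _ _) (dvd_mul_right _ _)
    · rw [mul_comm ell, mul_assoc, LinearMap.add_apply, cc_zero_of (by decide) (by decide), ev_apply]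
      simp
    · rw [mul_comm ell, mul_assoc, cf_apply, map_mul, map_pow, cc_i (by decide),
        Polynomial.coeff_X_pow_mul', if_neg (by omega)]
  have c3 := c2.add (J := 1) (cert_yz h1 h2 (by omega) hd)
    (fun f => by
      rw [LinearMap.add_apply, LinearMap.add_apply, cf_yz, cf_yz'', ev_apply]; simp)
    h2.kill (one_dvd _) (one_dvd _)
  have e : 3 + (a2 + 1) + t = s := by omega
  rw [e] at c3
  have e4 : (cf 1 0 2 + ev (Pi.single 0 1) + cf 0 2 a2 + EV wG : PR K 2 →ₗ[K] K) =
    cf 1 0 2 + cf 0 2 a2 + ev (Pi.single 0 1) + EV wG := by abel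
  rw [e4] at c3
  refine realize hm (k := s) (by omega) (by omega) (by omega) ?_
    (up3o (by omega) h1) (fun n hn => ?_) c3
  · rw [← e]; exact br3o (by omega) h1
  · have := low3o h1 h2.q hd hs ha hn
    omega

end assemble

theorem main (K : Type) [Field K] [IsAlgClosed K] [CharZero K]
    (m s d r : ℕ) (hm : 2 ≤ m) (hs : 5 ≤ s) (hd : 2 * s + 2 ≤ d)
    (hrs : s ≤ r) (hr : r + 7 ≤ 2 * d + s) :
    (sigmaSet K m d s r).Nonempty ↔
      (r = s ∨
        (d + 2 ≤ r + s ∧ r + 2 ≤ d + s ∧ (r + s) % 2 = d % 2) ∨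
        (2 * d + 2 ≤ r + s ∧ r + 7 ≤ 2 * d + s)) := by
  constructor
  · rintro ⟨P, hb, hsr⟩
    by_cases h1 : r = s
    · exact Or.inl h1
    by_cases h2 : 2 * d + 2 ≤ r + s
    · exact Or.inr (Or.inr ⟨h2, hr⟩)
    obtain ⟨e, b, h3, h4, h5⟩ := partB hs hd hb hsr (by omega) (by omega)
    right; left; omega
  · rintro (h | ⟨h1, h2, h3⟩ | ⟨h1, h2⟩)
    · subst h; exact case1 hm hs hd
    · -- a = s - 1 - t, r = d + 2 - s + 2 t
      obtain ⟨t, ht⟩ : ∃ t, r + s = d + 2 + 2 * t := ⟨(r + s - d - 2) / 2, by omega⟩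
      have := case2 (K := K) (m := m) (s := s) (d := d) (t := t) (a := s - 1 - t) hm hd (by omega) (by omega)
      convert this using 2; omega
    · by_cases hp : (r + s) % 2 = 0
      · obtain ⟨t, ht⟩ : ∃ t, r + s = 2 * d + 2 + 2 * t := ⟨(r + s - 2 * d - 2) / 2, by omega⟩
        have := case3e (K := K) (m := m) (s := s) (d := d) (t := t) (a2 := s - 4 - t) hm hd (by omega) (by omega)
        convert this using 2; omega
      · obtain ⟨t, ht⟩ : ∃ t, r + s = 2 * d + 3 + 2 * t := ⟨(r + s - 2 * d - 3) / 2, by omega⟩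
        have := case3o (K := K) (m := m) (s := s) (d := d) (t := t) (a2 := s - 4 - t) hm hd (by omega) (by omega)
        convert this using 2; omega

end GG

end

/-- Theorem 1 (main theorem): gaps in the pairs (border rank, symmetric rank).
For `m ≥ 2`, `s ≥ 5`, `d ≥ 2s+2` and `s ≤ r ≤ 2d+s-7`, the stratum
`σ_{s,r}(X_{m,d})` is nonempty iff `r = s`, or `d+2-s ≤ r ≤ d+s-2` with
`r + s ≡ d (mod 2)`, or `2d+2-s ≤ r ≤ 2d+s-7`. -/
theorem stmt0 (K : Type) [Field K] [IsAlgClosed K] [CharZero K]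
    (m s d r : ℕ) (hm : 2 ≤ m) (hs : 5 ≤ s) (hd : 2 * s + 2 ≤ d)
    (hrs : s ≤ r) (hr : r + 7 ≤ 2 * d + s) :
    (sigmaSet K m d s r).Nonempty ↔
      (r = s ∨
        (d + 2 ≤ r + s ∧ r + 2 ≤ d + s ∧ (r + s) % 2 = d % 2) ∨
        (2 * d + 2 ≤ r + s ∧ r + 7 ≤ 2 * d + s)) := by
  exact GG.main K m s d r hm hs hd hrs hr
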